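/- Suppose ω(2δ) < 2ω(δ) for all sufficiently small δ > 0. Then there exists a real-valued, 2π-periodic function φ of class C^{1,ω}(𝕋) that is nowhere linear (not linear on any interval) and satisfies: (i) ‖e^{iλφ}‖_{A_1(𝕋)} ≤ c · (|λ|/log|λ|) · χ^{-1}((log|λ|)²/|λ|) for all real λ with |λ| ≥ 2; and (ii) for every p with 1 < p < 2, ‖e^{iλφ}‖_{A_p(𝕋)} ≤ c_p · (∫₁^{|λ|} (χ^{-1}(1/τ))^p dτ)^{1/p} for all real λ with |λ| ≥ 2. The positive constants c, c_p are independent of λ. -/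

import Mathlib

open MeasureTheory Real Set
open scoped ENNReal

/-- The k-th Fourier coefficient of a (2π-periodic) function on the circle,
identified with a function on [0, 2π]. -/
noncomputable def fourierCoef (f : ℝ → ℂ) (k : ℤ) : ℂ :=
  (1 / (2 * (Real.pi : ℂ))) *
    ∫ t in (0:ℝ)..(2 * Real.pi), f t * Complex.exp (-Complex.I * (k : ℂ) * (t : ℂ))

/-- The A_p(𝕋) norm: ℓ^p norm of the sequence of Fourier coefficients
(valued in ℝ≥0∞ so that divergence gives ∞). -/
noncomputable def ApNorm (p : ℝ) (f : ℝ → ℂ) : ℝ≥0∞ :=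
  (∑' k : ℤ, ((‖fourierCoef f k‖₊ : ℝ≥0∞) ^ p)) ^ (1 / p)

open MeasureTheory Real Set
open scoped ENNReal

namespace CB

/-- left endpoints of the level `N` intervals -/
noncomputable def T (l : ℕ → ℝ) : ℕ → ℤ → ℝ
  | 0, k => k * l 0
  | N + 1, k => T l N (k / 2) + ((k % 2 : ℤ) : ℝ) * (l N - l (N + 1))

/-- scale sequences -/
structure Scale (l : ℕ → ℝ) : Prop where
  pos : ∀ n, 0 < l n
  half : ∀ n, 2 * l (n + 1) < l n
  le_one : l 0 ≤ 1

section
variable {l : ℕ → ℝ}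

lemma Scale.anti_step (h : Scale l) (n : ℕ) : l (n + 1) ≤ l n := by
  have := h.half n; have := h.pos (n + 1); linarith

lemma Scale.geom (h : Scale l) (n i : ℕ) : l (n + i) ≤ l n / 2 ^ i := by
  induction i with
  | zero => simp
  | succ i ih =>
    have := h.half (n + i)
    rw [← add_assoc, pow_succ, ← div_div]
    linarith

lemma Scale.anti (h : Scale l) {m n : ℕ} (hmn : m ≤ n) : l n ≤ l m :=
  antitone_nat_of_succ_le h.anti_step hmn

lemma Scale.le_one' (h : Scale l) (n : ℕ) : l n ≤ 1 := (h.anti (Nat.zero_le n)).trans h.le_one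

lemma Scale.exists_lt (h : Scale l) {e : ℝ} (he : 0 < e) : ∃ n, ∀ m, n ≤ m → l m < e := by
  obtain ⟨n, hn⟩ := exists_pow_lt_of_lt_one he (by norm_num : (1 / 2 : ℝ) < 1)
  refine ⟨n, fun m hm => (h.anti hm).trans_lt ?_⟩
  have := h.geom 0 n
  rw [zero_add] at this
  refine (this.trans ?_).trans_lt hn
  rw [div_pow, one_pow]
  gcongr
  exact h.le_one

lemma T_even (N : ℕ) (k : ℤ) : T l (N + 1) (2 * k) = T l N k := by
  simp [T]

lemma T_odd (N : ℕ) (k : ℤ) : T l (N + 1) (2 * k + 1) = T l N k + (l N - l (N + 1)) := by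
  have h1 : (2 * k + 1) / 2 = k := by omega
  have h2 : (2 * k + 1) % 2 = 1 := by omega
  simp [T, h1, h2]

lemma T_step (h : Scale l) (N : ℕ) (k : ℤ) : T l N k + l N ≤ T l N (k + 1) := by
  induction N generalizing k with
  | zero => simp only [T]; push_cast; linarith
  | succ N ih =>
    rcases Int.even_or_odd' k with ⟨j, rfl | rfl⟩
    · rw [T_even, T_odd]; have := h.half N; linarith
    · rw [T_odd, show 2 * j + 1 + 1 = 2 * (j + 1) by ring, T_even]
      have := ih j; linarith

lemma T_strictMono (h : Scale l) (N : ℕ) : StrictMono (T l N) :=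
  strictMono_int_of_lt_succ fun k => by have := T_step h N k; have := h.pos N; linarith

lemma T_zero (N : ℕ) : T l N 0 = 0 := by
  induction N with
  | zero => simp [T]
  | succ N ih => simp [T, ih]

lemma T_refine (N d : ℕ) (k : ℤ) : T l (N + d) (2 ^ d * k) = T l N k := by
  induction d with
  | zero => simp
  | succ d ih => rw [← add_assoc, pow_succ', mul_assoc, T_even, ih]

lemma T_refine' (N d : ℕ) (k : ℤ) :
    T l (N + d) (2 ^ d * (k + 1) - 1) + l (N + d) = T l N k + l N := by
  induction d with
  | zero => simp
  | succ d ih =>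
    rw [← add_assoc, show (2:ℤ) ^ (d + 1) * (k + 1) - 1 = 2 * (2 ^ d * (k + 1) - 1) + 1 by ring,
      T_odd]
    linarith

/-- the staircase -/
noncomputable def psi (l : ℕ → ℝ) (t : ℝ) : ℝ :=
  sSup {x : ℝ | ∃ (N : ℕ) (k : ℤ), T l N k ≤ t ∧ x = k / 2 ^ N}

lemma dyadic_le (h : Scale l) {M N : ℕ} {j k : ℤ} (hT : T l M j ≤ T l N k + l N) :
    (j : ℝ) / 2 ^ M ≤ (k + 1) / 2 ^ N := by
  have key : 2 ^ N * j ≤ 2 ^ M * (k + 1) := by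
    by_contra hc
    push Not at hc
    have h1 : T l (N + M) (2 ^ M * (k + 1)) < T l (N + M) (2 ^ N * j) := T_strictMono h _ hc
    rw [T_refine, add_comm N M, T_refine] at h1
    have := T_step h N k
    linarith
  have : (2:ℝ) ^ N * j ≤ 2 ^ M * (k + 1) := by exact_mod_cast key
  rw [div_le_div_iff₀ (by positivity) (by positivity)]
  linarith

lemma exists_T_gt (h : Scale l) (N : ℕ) (t : ℝ) : ∃ k : ℤ, t < T l N k := by
  obtain ⟨n, hn⟩ := exists_int_gt (t / l 0)
  refine ⟨2 ^ N * n, ?_⟩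
  have := T_refine (l := l) 0 N n
  rw [zero_add] at this
  rw [this]
  simp only [T]
  rwa [div_lt_iff₀ (h.pos 0)] at hn

lemma exists_T_le (h : Scale l) (N : ℕ) (t : ℝ) : ∃ k : ℤ, T l N k ≤ t := by
  obtain ⟨n, hn⟩ := exists_int_lt (t / l 0)
  refine ⟨2 ^ N * n, ?_⟩
  have := T_refine (l := l) 0 N n
  rw [zero_add] at this
  rw [this]
  simp only [T]
  rw [lt_div_iff₀ (h.pos 0)] at hn
  exact hn.le

lemma psi_le (h : Scale l) {t : ℝ} {N : ℕ} {k : ℤ} (ht : t ≤ T l N k + l N) :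
    psi l t ≤ (k + 1) / 2 ^ N := by
  apply csSup_le
  · obtain ⟨k, hk⟩ := exists_T_le h 0 t
    exact ⟨_, 0, k, hk, rfl⟩
  · rintro x ⟨M, j, hj, rfl⟩
    exact dyadic_le h (hj.trans ht)

lemma psi_le0 (h : Scale l) {t : ℝ} {N : ℕ} {k : ℤ} (ht : t ≤ T l N k) :
    psi l t ≤ k / 2 ^ N := by
  apply csSup_le
  · obtain ⟨k, hk⟩ := exists_T_le h 0 t
    exact ⟨_, 0, k, hk, rfl⟩
  · rintro x ⟨M, j, hj, rfl⟩
    have hT := hj.trans ht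
    have key : 2 ^ N * j ≤ 2 ^ M * k := by
      by_contra hc
      push Not at hc
      have h1 : T l (N + M) (2 ^ M * k) < T l (N + M) (2 ^ N * j) := T_strictMono h _ hc
      rw [T_refine, add_comm N M, T_refine] at h1
      linarith
    have : (2:ℝ) ^ N * j ≤ 2 ^ M * k := by exact_mod_cast key
    rw [div_le_div_iff₀ (by positivity) (by positivity)]
    linarith

lemma psi_bdd (h : Scale l) (t : ℝ) :
    BddAbove {x : ℝ | ∃ (N : ℕ) (k : ℤ), T l N k ≤ t ∧ x = k / 2 ^ N} := by
  obtain ⟨k, hk⟩ := exists_T_gt h 0 t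
  refine ⟨(k + 1) / 2 ^ 0, ?_⟩
  rintro x ⟨M, j, hj, rfl⟩
  exact dyadic_le h (by have := h.pos 0; linarith)

lemma le_psi (h : Scale l) {t : ℝ} {N : ℕ} {k : ℤ} (ht : T l N k ≤ t) :
    (k : ℝ) / 2 ^ N ≤ psi l t :=
  le_csSup (psi_bdd h t) ⟨N, k, ht, rfl⟩

lemma le_psi' (h : Scale l) {t : ℝ} {N : ℕ} {k : ℤ} (ht : T l N k + l N ≤ t) :
    ((k : ℝ) + 1) / 2 ^ N ≤ psi l t := by
  apply le_of_forall_pos_le_add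
  intro e he
  obtain ⟨d, hd⟩ := exists_pow_lt_of_lt_one he (by norm_num : (1 / 2 : ℝ) < 1)
  have h1 : T l (N + d) (2 ^ d * (k + 1) - 1) ≤ t := by
    have := T_refine' (l := l) N d k; have := h.pos (N + d); linarith
  have h2 := le_psi h h1
  push_cast at h2
  have h3 : ((2:ℝ) ^ d * (k + 1) - 1) / 2 ^ (N + d) = (k + 1) / 2 ^ N - 1 / 2 ^ (N + d) := by
    rw [pow_add]; field_simp
  rw [h3] at h2
  have h4 : (1:ℝ) / 2 ^ (N + d) ≤ (1 / 2) ^ d := by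
    rw [div_pow, one_pow]
    gcongr
    · norm_num
    · omega
  linarith

lemma psi_mono (h : Scale l) : Monotone (psi l) := by
  intro s t hst
  apply csSup_le_csSup (psi_bdd h t)
  · obtain ⟨k, hk⟩ := exists_T_le h 0 s
    exact ⟨_, 0, k, hk, rfl⟩
  · rintro x ⟨M, j, hj, rfl⟩
    exact ⟨M, j, hj.trans hst, rfl⟩

lemma psi_zero (h : Scale l) : psi l 0 = 0 := by
  apply le_antisymm
  · have := psi_le h (t := 0) (N := 0) (k := -1) (by simp [T])
    simpa using this
  · have := le_psi h (t := 0) (N := 0) (k := 0) (by simp [T])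
    simpa using this

lemma psi_top (h : Scale l) (q : ℕ) : psi l (l q) = 1 / 2 ^ q := by
  apply le_antisymm
  · have := psi_le h (t := l q) (N := q) (k := 0) (by simp [T_zero])
    simpa using this
  · have := le_psi' h (t := l q) (N := q) (k := 0) (by simp [T_zero])
    simpa using this

lemma psi_near (h : Scale l) {s t : ℝ} {n : ℕ} (hst : t ≤ s + l n) :
    psi l t ≤ psi l s + 2 / 2 ^ n := by
  obtain ⟨k, hk1, hk2⟩ : ∃ k : ℤ, T l n k ≤ s ∧ ∀ z : ℤ, T l n z ≤ s → z ≤ k := by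
    obtain ⟨b, hb⟩ := exists_T_gt h n s
    exact Int.exists_greatest_of_bdd ⟨b, fun z hz => by
      by_contra hc
      push Not at hc
      have := T_strictMono h n hc
      linarith⟩ (exists_T_le h n s)
  have h1 : s < T l n (k + 1) := by
    by_contra hc
    push Not at hc
    have := hk2 _ hc
    omega
  have h2 := psi_le h (t := t) (N := n) (k := k + 1) (by linarith)
  have h3 := le_psi h hk1
  push_cast at h2
  have : ((k:ℝ) + 1 + 1) / 2 ^ n = k / 2 ^ n + 2 / 2 ^ n := by ring
  linarith

/-- every interval contains a subinterval where the function is constant -/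
def LC (g : ℝ → ℝ) : Prop := ∀ u v : ℝ, u < v → ∃ a b c : ℝ, u ≤ a ∧ a < b ∧ b ≤ v ∧
  ∀ t ∈ Ioo a b, g t = c

lemma LC.add {g f : ℝ → ℝ} (hg : LC g) (hf : LC f) : LC (fun t => g t + f t) := by
  intro u v huv
  obtain ⟨a, b, c, h1, h2, h3, h4⟩ := hg u v huv
  obtain ⟨a', b', c', h1', h2', h3', h4'⟩ := hf a b h2
  exact ⟨a', b', c + c', h1.trans h1', h2', h3'.trans h3, fun t ht => by
    simp only
    rw [h4 t ⟨h1'.trans_lt ht.1, ht.2.trans_le h3'⟩, h4' t ht]⟩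

lemma psi_LC (h : Scale l) : LC (psi l) := by
  intro u v huv
  by_cases heq : psi l u = psi l v
  · exact ⟨u, v, psi l u, le_rfl, huv, le_rfl, fun t ht =>
      le_antisymm (heq ▸ psi_mono h ht.2.le) (psi_mono h ht.1.le)⟩
  · have hlt : psi l u < psi l v := lt_of_le_of_ne (psi_mono h huv.le) heq
    obtain ⟨n, hn⟩ := exists_pow_lt_of_lt_one (half_pos (sub_pos.2 hlt))
      (by norm_num : (1 / 2 : ℝ) < 1)
    set k : ℤ := ⌊psi l u * 2 ^ n⌋ + 1 with hk
    have hp : (0:ℝ) < 2 ^ n := by positivity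
    have hk1 : psi l u * 2 ^ n < k := by rw [hk]; push_cast; exact Int.lt_floor_add_one _
    have hk2 : (k : ℝ) ≤ psi l u * 2 ^ n + 1 := by
      rw [hk]; push_cast; linarith [Int.floor_le (psi l u * 2 ^ n)]
    rw [div_pow, one_pow, div_lt_iff₀ hp] at hn
    have hc : ∀ t ∈ Ioo (T l n k + l (n + 1)) (T l n k + l n - l (n + 1)),
        psi l t = ((2 * k + 1 : ℤ) : ℝ) / 2 ^ (n + 1) := by
      intro t ht
      apply le_antisymm
      · exact psi_le0 h (by rw [T_odd]; linarith [ht.2])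
      · have := le_psi' h (t := t) (N := n + 1) (k := 2 * k) (by rw [T_even]; linarith [ht.1])
        push_cast at this ⊢; exact this
    have hlow : psi l u < ((2 * k + 1 : ℤ) : ℝ) / 2 ^ (n + 1) := by
      rw [lt_div_iff₀ (by positivity), pow_succ]
      push_cast
      nlinarith
    have hupp : ((2 * k + 1 : ℤ) : ℝ) / 2 ^ (n + 1) < psi l v := by
      rw [div_lt_iff₀ (by positivity), pow_succ]
      push_cast
      nlinarith
    have hin : ∀ t ∈ Ioo (T l n k + l (n + 1)) (T l n k + l n - l (n + 1)), t ∈ Icc u v := by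
      intro t ht
      constructor
      · by_contra hcon
        push Not at hcon
        have := psi_mono h hcon.le
        rw [hc t ht] at this
        linarith
      · by_contra hcon
        push Not at hcon
        have := psi_mono h hcon.le
        rw [hc t ht] at this
        linarith
    have hh := h.half n
    set a := T l n k + l (n + 1)
    set b := T l n k + l n - l (n + 1)
    have hab : a < b := by simp only [a, b]; linarith
    refine ⟨(2 * a + b) / 3, (a + 2 * b) / 3, _, ?_, by linarith, ?_, fun t ht =>
      hc t ⟨by linarith [ht.1], by linarith [ht.2]⟩⟩
    · exact (hin _ ⟨by linarith, by linarith⟩).1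
    · exact (hin _ ⟨by linarith, by linarith⟩).2

end
end CB

open MeasureTheory Real Set
open scoped ENNReal

namespace CB

lemma norm_expI (x : ℝ) : ‖Complex.exp (Complex.I * (x : ℂ))‖ = 1 := by
  rw [mul_comm]; exact Complex.norm_exp_ofReal_mul_I x

lemma abel_bound (w : ℕ → ℝ) (E : ℕ → ℂ) (hw : Monotone w) (hE : ∀ i, ‖E i‖ = 1) (n : ℕ) :
    ‖∑ i ∈ Finset.range n, (w i : ℂ) * (E (i + 1) - E i)‖ ≤ |w n| + |w 0| + (w n - w 0) := by
  have key : ‖(∑ i ∈ Finset.range n, (w i : ℂ) * (E (i + 1) - E i)) - (w n * E n - w 0 * E 0)‖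
      ≤ w n - w 0 := by
    induction n with
    | zero => simp
    | succ n ih =>
      rw [Finset.sum_range_succ]
      have : (∑ i ∈ Finset.range n, (w i : ℂ) * (E (i + 1) - E i)) + w n * (E (n + 1) - E n)
          - (w (n + 1) * E (n + 1) - w 0 * E 0) =
          ((∑ i ∈ Finset.range n, (w i : ℂ) * (E (i + 1) - E i)) - (w n * E n - w 0 * E 0))
          + (((w n - w (n + 1) : ℝ)) : ℂ) * E (n + 1) := by push_cast; ring
      rw [this]
      refine (norm_add_le _ _).trans ?_
      rw [norm_mul, hE, mul_one, Complex.norm_real, Real.norm_eq_abs, abs_sub_comm,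
        abs_of_nonneg (sub_nonneg.2 (hw n.le_succ))]
      linarith
  have h2 : ‖(w n * E n - w 0 * E 0 : ℂ)‖ ≤ |w n| + |w 0| := by
    refine (norm_sub_le _ _).trans ?_
    simp [hE]
  have := norm_le_norm_sub_add (∑ i ∈ Finset.range n, (w i : ℂ) * (E (i + 1) - E i))
    (w n * E n - w 0 * E 0)
  linarith

lemma vdc {a b M : ℝ} (hab : a ≤ b) {P θ w : ℝ → ℝ} (hP : ∀ t, HasDerivAt P (θ t) t)
    (hθ : Continuous θ) (hw : MonotoneOn w (Icc a b)) (hM : ∀ t ∈ Icc a b, |w t| ≤ M) :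
    ‖∫ t in a..b, (w t : ℂ) * ((θ t : ℂ) * Complex.exp (Complex.I * (P t : ℂ)))‖ ≤ 4 * M := by
  have hPc : Continuous P := continuous_iff_continuousAt.2 fun t => (hP t).continuousAt
  obtain ⟨Q, hQ⟩ := isCompact_Icc.exists_bound_of_continuousOn (s := Icc a b) hθ.continuousOn
  have hQ0 : 0 ≤ Q := (norm_nonneg _).trans (hQ a ⟨le_rfl, hab⟩)
  have hM0 : 0 ≤ M := (abs_nonneg _).trans (hM a ⟨le_rfl, hab⟩)
  set e : ℝ → ℂ := fun t => (θ t : ℂ) * Complex.exp (Complex.I * (P t : ℂ)) with he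
  have hec : Continuous e := by fun_prop
  have heI : ∀ x y, ∫ t in x..y, e t = -Complex.I * (Complex.exp (Complex.I * (P y : ℂ)) -
      Complex.exp (Complex.I * (P x : ℂ))) := by
    intro x y
    have hd : ∀ t ∈ uIcc x y, HasDerivAt (fun t => -Complex.I * Complex.exp (Complex.I * (P t : ℂ)))
        (e t) t := by
      intro t _
      have h1 := (((hP t).ofReal_comp.const_mul Complex.I).cexp).const_mul (-Complex.I)
      refine h1.congr_deriv ?_
      simp only [he]
      linear_combination (-(θ t : ℂ) * Complex.exp (Complex.I * (P t : ℂ))) * Complex.I_mul_I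
    rw [intervalIntegral.integral_eq_sub_of_hasDerivAt hd (hec.intervalIntegrable _ _)]
    ring
  have hmain : ∀ n : ℕ, 0 < n →
      ‖∫ t in a..b, (w t : ℂ) * e t‖ ≤ 4 * M + (2 * M * Q * (b - a)) / n := by
    intro n hn
    have hn' : (0:ℝ) < n := by exact_mod_cast hn
    set τ : ℕ → ℝ := fun i => a + min i n * ((b - a) / n) with hτ
    have hτmono : Monotone τ := by
      intro i j hij
      simp only [hτ]
      have : (min i n : ℕ) ≤ min j n := by omega
      have h2 : ((min i n : ℕ) : ℝ) ≤ ((min j n : ℕ) : ℝ) := by exact_mod_cast this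
      have h3 : 0 ≤ (b - a) / n := div_nonneg (by linarith) hn'.le
      have := mul_le_mul_of_nonneg_right h2 h3
      linarith
    have hτ0 : τ 0 = a := by simp [hτ]
    have hτn : τ n = b := by simp only [hτ, min_self]; field_simp; ring
    have hτmem : ∀ i, τ i ∈ Icc a b := by
      intro i
      refine ⟨hτ0 ▸ hτmono (Nat.zero_le i), ?_⟩
      have : τ i = τ (min i n) := by simp [hτ]
      rw [this, ← hτn]
      exact hτmono (min_le_right _ _)
    have hwτ : Monotone (fun i => w (τ i)) := fun i j hij => hw (hτmem i) (hτmem j) (hτmono hij)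
    have hwint : ∀ i, IntervalIntegrable (fun t => (w t : ℂ) * e t) volume (τ i) (τ (i + 1)) := by
      intro i
      have h1 : IntervalIntegrable w volume (τ i) (τ (i + 1)) := by
        apply MonotoneOn.intervalIntegrable
        apply hw.mono
        rw [uIcc_of_le (hτmono i.le_succ)]
        exact Icc_subset_Icc (hτmem i).1 (hτmem (i + 1)).2
      have h2 : IntervalIntegrable (fun t => (w t : ℂ)) volume (τ i) (τ (i + 1)) :=
        ⟨h1.1.ofReal, h1.2.ofReal⟩
      exact h2.mul_continuousOn hec.continuousOn
    have hsum := intervalIntegral.sum_integral_adjacent_intervals (n := n) (a := τ)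
      (μ := volume) (f := fun t => (w t : ℂ) * e t) (fun k _ => hwint k)
    rw [hτ0, hτn] at hsum
    rw [← hsum]
    have hpiece : ∀ i ∈ Finset.range n, ‖(∫ t in τ i..τ (i + 1), (w t : ℂ) * e t) -
        -Complex.I * ((w (τ i) : ℂ) * (Complex.exp (Complex.I * (P (τ (i+1)) : ℂ)) -
          Complex.exp (Complex.I * (P (τ i) : ℂ))))‖ ≤
          (w (τ (i + 1)) - w (τ i)) * (Q * ((b - a) / n)) := by
      intro i hi
      have hi' : i < n := Finset.mem_range.1 hi
      have e1 : -Complex.I * ((w (τ i) : ℂ) * (Complex.exp (Complex.I * (P (τ (i+1)) : ℂ)) -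
          Complex.exp (Complex.I * (P (τ i) : ℂ)))) = ∫ t in τ i..τ (i + 1), (w (τ i) : ℂ) * e t := by
        rw [intervalIntegral.integral_const_mul, heI]; ring
      rw [e1, ← intervalIntegral.integral_sub (hwint i)
        ((hec.const_mul _).intervalIntegrable _ _)]
      have hlen : τ (i + 1) - τ i = (b - a) / n := by
        simp only [hτ]
        rw [min_eq_left hi'.le, min_eq_left (Nat.succ_le_of_lt hi')]
        push_cast; ring
      refine (intervalIntegral.norm_integral_le_of_norm_le_const
        (C := (w (τ (i + 1)) - w (τ i)) * Q) ?_).trans ?_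
      · intro t ht
        rw [uIoc_of_le (hτmono i.le_succ)] at ht
        have htm : t ∈ Icc a b := ⟨(hτmem i).1.trans ht.1.le, ht.2.trans (hτmem (i+1)).2⟩
        rw [← sub_mul, norm_mul, ← Complex.ofReal_sub, Complex.norm_real, Real.norm_eq_abs]
        have h1 : w (τ i) ≤ w t := hw (hτmem i) htm ht.1.le
        have h2 : w t ≤ w (τ (i+1)) := hw htm (hτmem (i+1)) ht.2
        rw [abs_of_nonneg (by linarith)]
        have h3 : ‖e t‖ ≤ Q := by
          simp only [he]
          rw [norm_mul, norm_expI, mul_one, Complex.norm_real]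
          exact hQ t htm
        gcongr
        linarith
      · rw [hlen, abs_of_nonneg (div_nonneg (by linarith) hn'.le), mul_assoc]
    have hab2 := abel_bound (fun i => w (τ i)) (fun i => Complex.exp (Complex.I * (P (τ i) : ℂ)))
      hwτ (fun i => norm_expI _) n
    have hd := norm_sum_le_of_le _ hpiece
    rw [Finset.sum_sub_distrib, ← Finset.mul_sum, ← Finset.sum_mul,
      Finset.sum_range_sub (fun i => w (τ i))] at hd
    have htri := norm_le_norm_sub_add (∑ i ∈ Finset.range n, ∫ t in τ i..τ (i + 1), (w t : ℂ) * e t)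
      (-Complex.I * ∑ i ∈ Finset.range n, ((w (τ i) : ℂ) *
        (Complex.exp (Complex.I * (P (τ (i+1)) : ℂ)) - Complex.exp (Complex.I * (P (τ i) : ℂ)))))
    rw [norm_mul (-Complex.I), norm_neg, Complex.norm_I, one_mul] at htri
    have hb1 := hM _ (hτmem n)
    have hb0 := hM _ (hτmem 0)
    have hdiff : w (τ n) - w (τ 0) ≤ 2 * M := by
      have := le_abs_self (w (τ n)); have := neg_abs_le (w (τ 0)); linarith
    have h5 : (w (τ n) - w (τ 0)) * (Q * ((b - a) / n)) ≤ 2 * M * (Q * ((b - a) / n)) := by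
      apply mul_le_mul_of_nonneg_right hdiff
      exact mul_nonneg hQ0 (div_nonneg (by linarith) hn'.le)
    have h6 : 2 * M * (Q * ((b - a) / n)) = (2 * M * Q * (b - a)) / n := by ring
    linarith
  apply le_of_forall_pos_le_add
  intro ε hε
  obtain ⟨n, hn⟩ := exists_nat_gt (max 1 ((2 * M * Q * (b - a)) / ε))
  have hn1 : (1:ℝ) < n := (le_max_left _ _).trans_lt hn
  have hn2 := (le_max_right _ _).trans_lt hn
  have := hmain n (by exact_mod_cast (zero_lt_one.trans hn1))
  refine this.trans ?_
  have h3 : (2 * M * Q * (b - a)) / n ≤ ε := by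
    rw [div_le_iff₀ (by linarith)]
    rw [div_lt_iff₀ hε] at hn2
    linarith
  linarith

lemma vdc_anti {a b M : ℝ} (hab : a ≤ b) {P θ w : ℝ → ℝ} (hP : ∀ t, HasDerivAt P (θ t) t)
    (hθ : Continuous θ) (hw : AntitoneOn w (Icc a b)) (hM : ∀ t ∈ Icc a b, |w t| ≤ M) :
    ‖∫ t in a..b, (w t : ℂ) * ((θ t : ℂ) * Complex.exp (Complex.I * (P t : ℂ)))‖ ≤ 4 * M := by
  have := vdc hab hP hθ hw.neg (M := M) (fun t ht => by rw [abs_neg]; exact hM t ht)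
  push_cast at this
  simp only [neg_mul, intervalIntegral.integral_neg, norm_neg] at this
  exact this

/-- first derivative test, derivative monotone and bounded away from zero -/
lemma first_deriv {a b μ : ℝ} (hab : a ≤ b) {P θ : ℝ → ℝ} (hP : ∀ t, HasDerivAt P (θ t) t)
    (hθ : Continuous θ) (hm : MonotoneOn θ (Icc a b)) (hμ : 0 < μ)
    (hs : (∀ t ∈ Icc a b, μ ≤ θ t) ∨ (∀ t ∈ Icc a b, θ t ≤ -μ)) :
    ‖∫ t in a..b, Complex.exp (Complex.I * (P t : ℂ))‖ ≤ 4 / μ := by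
  have h0 : ∀ t ∈ Icc a b, θ t ≠ 0 ∧ |(θ t)⁻¹| ≤ 1 / μ := by
    intro t ht
    have h1 : μ ≤ |θ t| := by
      rcases hs with hs | hs
      · exact (hs t ht).trans (le_abs_self _)
      · have := hs t ht; exact le_abs.2 (Or.inr (by linarith))
    have h2 : θ t ≠ 0 := abs_pos.1 (hμ.trans_le h1)
    refine ⟨h2, ?_⟩
    rw [abs_inv, ← one_div]
    exact one_div_le_one_div_of_le hμ h1
  have hanti : AntitoneOn (fun t => (θ t)⁻¹) (Icc a b) := by
    intro s hs' t ht hst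
    have h1 := hm hs' ht hst
    simp only
    rcases hs with hs | hs
    · exact inv_anti₀ (hμ.trans_le (hs s hs')) h1
    · have := hs t ht
      exact (inv_le_inv_of_neg (by linarith) (by linarith)).2 h1
  have := vdc_anti hab hP hθ hanti (M := 1 / μ) (fun t ht => (h0 t ht).2)
  have e : ∫ t in a..b, Complex.exp (Complex.I * (P t : ℂ)) =
      ∫ t in a..b, (((θ t)⁻¹ : ℝ) : ℂ) * ((θ t : ℂ) * Complex.exp (Complex.I * (P t : ℂ))) := by
    apply intervalIntegral.integral_congr
    intro t ht
    rw [uIcc_of_le hab] at ht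
    have : (θ t : ℂ) ≠ 0 := by exact_mod_cast (h0 t ht).1
    simp only
    push_cast
    field_simp
  rw [e]
  refine this.trans (le_of_eq (by ring))

end CB

open MeasureTheory Real Set
open scoped ENNReal

namespace CB
section
variable {l : ℕ → ℝ}

lemma psi_continuous (h : Scale l) : Continuous (psi l) := by
  rw [Metric.continuous_iff]
  intro s ε hε
  obtain ⟨n, hn⟩ := exists_pow_lt_of_lt_one (half_pos hε) (by norm_num : (1 / 2 : ℝ) < 1)
  refine ⟨l n, h.pos n, fun t ht => ?_⟩
  rw [Real.dist_eq] at ht ⊢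
  rw [abs_lt] at ht ⊢
  have h1 := psi_near h (s := s) (t := t) (n := n) (by linarith)
  have h2 := psi_near h (s := t) (t := s) (n := n) (by linarith)
  have h3 : (2:ℝ) / 2 ^ n = 2 * (1 / 2) ^ n := by rw [div_pow, one_pow]; ring
  constructor <;> linarith

/-- kernel -/
noncomputable def w (g j : ℝ) : ℝ := g / (1 + g * |j|)

lemma w_nonneg {g : ℝ} (hg : 0 ≤ g) (j : ℝ) : 0 ≤ w g j := by unfold w; positivity

lemma le_w {g j x : ℝ} (hg : 0 ≤ g) (h1 : x ≤ g) (h2 : x * |j| ≤ 4) : x ≤ 5 * w g j := by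
  unfold w
  rw [← mul_div_assoc, le_div_iff₀ (by positivity)]
  nlinarith

lemma w_mono {g g' : ℝ} (hg : 0 ≤ g) (h : g ≤ g') (j : ℝ) : w g j ≤ w g' j := by
  unfold w
  have := abs_nonneg j
  rw [div_le_div_iff₀ (by positivity) (by have : 0 ≤ g' := hg.trans h; positivity)]
  nlinarith

/-- primitive of the staircase -/
noncomputable def Ps (l : ℕ → ℝ) (s : ℝ) : ℝ := ∫ t in (0:ℝ)..s, psi l t

lemma Ps_deriv (h : Scale l) (s : ℝ) : HasDerivAt (Ps l) (psi l s) s :=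
  intervalIntegral.integral_hasDerivAt_right ((psi_continuous h).intervalIntegrable _ _)
    ((psi_continuous h).stronglyMeasurableAtFilter _ _) (psi_continuous h).continuousAt

/-- basic oscillatory integral -/
noncomputable def K (l : ℕ → ℝ) (q : ℕ) (lam ξ : ℝ) : ℂ :=
  ∫ s in (0:ℝ)..l q, Complex.exp (Complex.I * ((lam * Ps l s - ξ * s : ℝ) : ℂ))

noncomputable def gap (l : ℕ → ℝ) (N : ℕ) (j : ℤ) : ℝ := T l N j - (T l N (j - 1) + l N)

lemma gap_nonneg (h : Scale l) (N : ℕ) (j : ℤ) : 0 ≤ gap l N j := by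
  have := T_step h N (j - 1)
  rw [sub_add_cancel] at this
  unfold gap; linarith

def clamp (e x : ℝ) : ℝ := max 0 (min x e)

lemma clamp_mono (e : ℝ) : Monotone (clamp e) := fun x y hxy => by
  unfold clamp; exact max_le_max le_rfl (min_le_min hxy le_rfl)

lemma clamp_lip (e : ℝ) {x y : ℝ} (hxy : x ≤ y) : clamp e y - clamp e x ≤ y - x := by
  unfold clamp
  rcases max_cases 0 (min x e) with h1 | h1 <;> rcases max_cases 0 (min y e) with h2 | h2 <;>
  rcases min_cases x e with h3 | h3 <;> rcases min_cases y e with h4 | h4 <;> linarith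

lemma clamp_lt {e x y : ℝ} (h : clamp e x < clamp e y) : x ≤ clamp e x ∧ x < e ∧ clamp e y ≤ y ∧ 0 < y := by
  unfold clamp at *
  rcases max_cases 0 (min x e) with h1 | h1 <;> rcases max_cases 0 (min y e) with h2 | h2 <;>
  rcases min_cases x e with h3 | h3 <;> rcases min_cases y e with h4 | h4 <;>
  refine ⟨?_, ?_, ?_, ?_⟩ <;> linarith

lemma phase_deriv (h : Scale l) (lam ξ t : ℝ) :
    HasDerivAt (fun s => lam * Ps l s - ξ * s) (lam * psi l t - ξ) t := by
  have := ((Ps_deriv h t).const_mul lam).fun_sub ((hasDerivAt_id' t).const_mul ξ)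
  rwa [mul_one] at this

lemma gap_piece (h : Scale l) {q N : ℕ} (hqN : q ≤ N) {lam : ℝ} (ξ : ℝ) (j : ℤ) :
    ‖∫ s in clamp (l q) (T l N (j - 1) + l N)..clamp (l q) (T l N j),
      Complex.exp (Complex.I * ((lam * Ps l s - ξ * s : ℝ) : ℂ))‖ ≤
    5 * (if j ∈ Finset.Ioo (0:ℤ) (2 ^ (N - q)) then w (gap l N j) (ξ - lam * (j / 2 ^ N)) else 0) := by
  set x := T l N (j - 1) + l N
  set y := T l N j with hy
  have hxy : x ≤ y := by have := gap_nonneg h N j; unfold gap at this; linarith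
  have hcm := clamp_mono (l q) hxy
  rcases hcm.eq_or_lt with heq | hlt
  · rw [heq, intervalIntegral.integral_same, norm_zero]
    split_ifs
    · exact mul_nonneg (by norm_num) (w_nonneg (gap_nonneg h N j) _)
    · simp
  · obtain ⟨h1, h2, h3, h4⟩ := clamp_lt hlt
    have hj0 : 0 < j := by
      rw [hy, ← T_zero (l := l) N] at h4
      exact (T_strictMono h N).lt_iff_lt.1 h4
    have hj1 : j < 2 ^ (N - q) := by
      have := T_refine' (l := l) q (N - q) 0
      rw [Nat.add_sub_cancel' hqN, T_zero] at this
      simp only [zero_add, mul_one] at this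
      rw [← this] at h2
      have h5 : T l N (j - 1) < T l N (2 ^ (N - q) - 1) := by simp only [x] at h2; linarith
      have := (T_strictMono h N).lt_iff_lt.1 h5
      omega
    rw [if_pos (Finset.mem_Ioo.2 ⟨hj0, hj1⟩)]
    have hpsi : ∀ t ∈ Icc (clamp (l q) x) (clamp (l q) y), psi l t = j / 2 ^ N := by
      intro t ht
      apply le_antisymm
      · exact psi_le0 h (ht.2.trans h3)
      · have := le_psi' h (t := t) (N := N) (k := j - 1) (h1.trans ht.1)
        push_cast at this
        simpa using this
    apply le_w (gap_nonneg h N j)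
    · refine (intervalIntegral.norm_integral_le_of_norm_le_const (C := 1) ?_).trans ?_
      · intro t _; exact (norm_expI _).le
      · rw [one_mul, abs_of_nonneg (by linarith)]
        have := clamp_lip (l q) hxy
        exact this
    · by_cases hz : ξ - lam * (j / 2 ^ N) = 0
      · rw [hz]; simp
      · have hpos := abs_pos.2 hz
        rw [← le_div_iff₀ hpos]
        apply first_deriv hcm (fun t => phase_deriv h lam ξ t)
          (by have := psi_continuous h; fun_prop) _ hpos
        · rcases le_total 0 (ξ - lam * (j / 2 ^ N)) with h5 | h5
          · right; intro t ht; rw [hpsi t ht, abs_of_nonneg h5]; linarith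
          · left; intro t ht; rw [hpsi t ht, abs_of_nonpos h5]; linarith
        · intro s hs t ht _
          simp only
          rw [hpsi s hs, hpsi t ht]

lemma K_central (h : Scale l) {q N : ℕ} (hqN : q ≤ N) {lam : ℝ} (hlam : 0 < lam) (ξ : ℝ) :
    ∃ k : ℤ, |ξ - lam * (k / 2 ^ N)| ≤ lam / 2 ^ N ∧
      |ξ - lam * ((k + 1 : ℤ) / 2 ^ N)| ≤ lam / 2 ^ N ∧
    ‖K l q lam ξ‖ ≤ 8 * (2 ^ N / lam) + 3 * l N +
      5 * (if k ∈ Finset.Ioo (0:ℤ) (2 ^ (N - q)) then w (gap l N k) (ξ - lam * (k / 2 ^ N)) else 0)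
      + 5 * (if k + 1 ∈ Finset.Ioo (0:ℤ) (2 ^ (N - q)) then
          w (gap l N (k + 1)) (ξ - lam * ((k + 1 : ℤ) / 2 ^ N)) else 0) := by
  have h2N : (0:ℝ) < 2 ^ N := by positivity
  set k : ℤ := ⌊ξ / lam * 2 ^ N⌋ with hk
  have hk1 : (k : ℝ) ≤ ξ / lam * 2 ^ N := Int.floor_le _
  have hk2 : ξ / lam * 2 ^ N < k + 1 := Int.lt_floor_add_one _
  set μ := lam / 2 ^ N with hμ
  have hμ0 : 0 < μ := by positivity
  have hk1' : k * μ ≤ ξ := by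
    have := mul_le_mul_of_nonneg_right hk1 hμ0.le
    rwa [show ξ / lam * 2 ^ N * μ = ξ by rw [hμ]; field_simp] at this
  have hk2' : ξ < (k + 1) * μ := by
    have := mul_lt_mul_of_pos_right hk2 hμ0
    rwa [show ξ / lam * 2 ^ N * μ = ξ by rw [hμ]; field_simp] at this
  have hmul : ∀ z : ℝ, lam * (z / 2 ^ N) = z * μ := fun z => by rw [hμ]; ring
  refine ⟨k, ?_, ?_, ?_⟩
  · rw [hmul, abs_le]; constructor <;> linarith
  · rw [hmul, abs_le]; push_cast; constructor <;> linarith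
  set e := l q
  have he0 : 0 < e := h.pos q
  set F : ℝ → ℂ := fun s => Complex.exp (Complex.I * ((lam * Ps l s - ξ * s : ℝ) : ℂ)) with hF
  have hPc : Continuous (Ps l) := continuous_iff_continuousAt.2 fun t => (Ps_deriv h t).continuousAt
  have hFc : Continuous F := by fun_prop
  have hFi : ∀ x y, IntervalIntegrable F volume x y := fun x y => hFc.intervalIntegrable x y
  set p0 := T l N (k - 1)
  set p1 := T l N (k - 1) + l N
  set p2 := T l N k
  set p3 := T l N k + l N
  set p4 := T l N (k + 1)
  set p5 := T l N (k + 1) + l N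
  have hlN := h.pos N
  have hs1 : ∀ x : ℝ, ‖∫ s in clamp e x..clamp e (x + l N), F s‖ ≤ l N := by
    intro x
    have hx : x ≤ x + l N := by linarith
    refine (intervalIntegral.norm_integral_le_of_norm_le_const (C := 1) ?_).trans ?_
    · intro t _; exact (norm_expI _).le
    · rw [one_mul, abs_of_nonneg (sub_nonneg.2 (clamp_mono e hx))]
      have := clamp_lip e hx
      linarith
  have g1 := gap_piece h hqN (lam := lam) ξ k
  have g2 := gap_piece h hqN (lam := lam) ξ (k + 1)
  rw [add_sub_cancel_right] at g2
  have hmono : Monotone (fun t => lam * psi l t - ξ) := fun s t hst => by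
    have := mul_le_mul_of_nonneg_left (psi_mono h hst) hlam.le
    simp only; linarith
  have hcont : Continuous (fun t => lam * psi l t - ξ) := by
    have := psi_continuous h; fun_prop
  have hleft : ‖∫ s in (0:ℝ)..clamp e p0, F s‖ ≤ 4 / μ := by
    have hc0 : 0 ≤ clamp e p0 := le_max_left _ _
    rcases hc0.eq_or_lt with heq | hlt
    · rw [← heq, intervalIntegral.integral_same, norm_zero]; positivity
    · apply first_deriv hc0 (fun t => phase_deriv h lam ξ t) hcont (hmono.monotoneOn _) hμ0
      right
      intro t ht
      have h1 : clamp e p0 ≤ p0 := by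
        unfold clamp at hlt ⊢
        rcases max_cases 0 (min p0 e) with h1 | h1 <;> rcases min_cases p0 e with h3 | h3 <;> linarith
      have h2 := psi_le0 h (ht.2.trans h1)
      have h3 := mul_le_mul_of_nonneg_left h2 hlam.le
      rw [hmul] at h3
      push_cast at h3
      linarith
  have hright : ‖∫ s in clamp e p5..e, F s‖ ≤ 4 / μ := by
    have hc0 : clamp e p5 ≤ e := max_le he0.le (min_le_right _ _)
    rcases hc0.eq_or_lt with heq | hlt
    · rw [heq, intervalIntegral.integral_same, norm_zero]; positivity
    · apply first_deriv hc0 (fun t => phase_deriv h lam ξ t) hcont (hmono.monotoneOn _) hμ0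
      left
      intro t ht
      have h1 : p5 ≤ clamp e p5 := by
        unfold clamp at hlt ⊢
        rcases max_cases 0 (min p5 e) with h1 | h1 <;> rcases min_cases p5 e with h3 | h3 <;> linarith
      have h2 := le_psi' h (h1.trans ht.1)
      have h3 := mul_le_mul_of_nonneg_left h2 hlam.le
      rw [hmul] at h3
      push_cast at h3
      linarith
  have hsplit : K l q lam ξ = (∫ s in (0:ℝ)..clamp e p0, F s) + (∫ s in clamp e p0..clamp e p1, F s)
      + (∫ s in clamp e p1..clamp e p2, F s) + (∫ s in clamp e p2..clamp e p3, F s)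
      + (∫ s in clamp e p3..clamp e p4, F s) + (∫ s in clamp e p4..clamp e p5, F s)
      + (∫ s in clamp e p5..e, F s) := by
    rw [intervalIntegral.integral_add_adjacent_intervals (hFi _ _) (hFi _ _),
      intervalIntegral.integral_add_adjacent_intervals (hFi _ _) (hFi _ _),
      intervalIntegral.integral_add_adjacent_intervals (hFi _ _) (hFi _ _),
      intervalIntegral.integral_add_adjacent_intervals (hFi _ _) (hFi _ _),
      intervalIntegral.integral_add_adjacent_intervals (hFi _ _) (hFi _ _),
      intervalIntegral.integral_add_adjacent_intervals (hFi _ _) (hFi _ _)]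
    rfl
  rw [hsplit]
  have n6 := norm_add_le ((∫ s in (0:ℝ)..clamp e p0, F s) + (∫ s in clamp e p0..clamp e p1, F s)
      + (∫ s in clamp e p1..clamp e p2, F s) + (∫ s in clamp e p2..clamp e p3, F s)
      + (∫ s in clamp e p3..clamp e p4, F s) + (∫ s in clamp e p4..clamp e p5, F s))
      (∫ s in clamp e p5..e, F s)
  have n5 := norm_add_le ((∫ s in (0:ℝ)..clamp e p0, F s) + (∫ s in clamp e p0..clamp e p1, F s)
      + (∫ s in clamp e p1..clamp e p2, F s) + (∫ s in clamp e p2..clamp e p3, F s)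
      + (∫ s in clamp e p3..clamp e p4, F s)) (∫ s in clamp e p4..clamp e p5, F s)
  have n4 := norm_add_le ((∫ s in (0:ℝ)..clamp e p0, F s) + (∫ s in clamp e p0..clamp e p1, F s)
      + (∫ s in clamp e p1..clamp e p2, F s) + (∫ s in clamp e p2..clamp e p3, F s))
      (∫ s in clamp e p3..clamp e p4, F s)
  have n3 := norm_add_le ((∫ s in (0:ℝ)..clamp e p0, F s) + (∫ s in clamp e p0..clamp e p1, F s)
      + (∫ s in clamp e p1..clamp e p2, F s)) (∫ s in clamp e p2..clamp e p3, F s)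
  have n2 := norm_add_le ((∫ s in (0:ℝ)..clamp e p0, F s) + (∫ s in clamp e p0..clamp e p1, F s))
      (∫ s in clamp e p1..clamp e p2, F s)
  have n1 := norm_add_le (∫ s in (0:ℝ)..clamp e p0, F s) (∫ s in clamp e p0..clamp e p1, F s)
  have s1 := hs1 p0
  have s2 := hs1 p2
  have s3 := hs1 p4
  have hμe : 4 / μ = 4 * (2 ^ N / lam) := by rw [hμ]; field_simp
  rw [hμe] at hleft hright
  linarith

end
end CB

open MeasureTheory Real Set
open scoped ENNReal

namespace CB
section

lemma sum_le_lintegral {f F : ℝ → ℝ≥0∞} (hfF : ∀ x u, x < u → u ≤ x + 1 → f x ≤ F u) (ξ : ℝ) :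
    ∑' k : ℤ, f (k - ξ) ≤ ∫⁻ u, F u := by
  have h1 : ∀ k : ℤ, f (k - ξ) ≤ ∫⁻ u in Ioc (-ξ + (k:ℝ)) (-ξ + k + 1), F u := by
    intro k
    calc f (k - ξ) = ∫⁻ u in Ioc (-ξ + (k:ℝ)) (-ξ + k + 1), f (k - ξ) := by
          rw [setLIntegral_const, Real.volume_Ioc]; simp
      _ ≤ _ := setLIntegral_mono' measurableSet_Ioc fun u hu => hfF _ _ (by linarith [hu.1])
          (by linarith [hu.2])
  calc _ ≤ ∑' k : ℤ, ∫⁻ u in Ioc (-ξ + (k:ℝ)) (-ξ + k + 1), F u := ENNReal.tsum_le_tsum h1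
    _ = ∫⁻ u in ⋃ k : ℤ, Ioc (-ξ + (k:ℝ)) (-ξ + k + 1), F u :=
        (lintegral_iUnion (fun _ => measurableSet_Ioc)
          (Set.pairwise_disjoint_Ioc_add_intCast (-ξ)) _).symm
    _ ≤ _ := setLIntegral_le_lintegral _ _

lemma count_sum (X ξ : ℝ) (hX : 0 ≤ X) :
    ∑' k : ℤ, (if |(k:ℝ) - ξ| ≤ X then (1:ℝ≥0∞) else 0) ≤ ENNReal.ofReal (2 * X + 2) := by
  refine (sum_le_lintegral (f := fun x => if |x| ≤ X then (1:ℝ≥0∞) else 0)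
    (F := (Icc (-(X + 1)) (X + 1)).indicator 1) ?_ ξ).trans ?_
  · intro x u h1 h2
    by_cases hx : |x| ≤ X
    · have : u ∈ Icc (-(X + 1)) (X + 1) := by
        rw [abs_le] at hx; constructor <;> linarith
      rw [indicator_of_mem this]; simp [hx]
    · simp [hx]
  · rw [lintegral_indicator_one measurableSet_Icc, Real.volume_Icc]
    apply ENNReal.ofReal_le_ofReal; linarith

lemma w_near {g : ℝ} (hg : 0 ≤ g) (hg1 : g ≤ 1) {x u : ℝ} (h1 : x < u) (h2 : u ≤ x + 1) :
    w g x ≤ 2 * w g u := by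
  unfold w
  have hu : |u| ≤ |x| + 1 := by
    have := abs_add_le x (u - x)
    rw [add_sub_cancel, abs_of_nonneg (by linarith : 0 ≤ u - x)] at this; linarith
  have := abs_nonneg x
  have := abs_nonneg u
  rw [← mul_div_assoc, div_le_div_iff₀ (by positivity) (by positivity)]
  have : g * |u| ≤ g * (|x| + 1) := mul_le_mul_of_nonneg_left hu hg
  nlinarith [mul_nonneg hg (abs_nonneg x)]

lemma w_pow_sum {s : ℝ} (hs : 1 < s) : ∃ C : ℝ, 0 < C ∧ ∀ g : ℝ, 0 < g → g ≤ 1 → ∀ ξ : ℝ,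
    ∑' k : ℤ, ENNReal.ofReal (w g (k - ξ)) ^ s ≤ ENNReal.ofReal (C * g ^ (s - 1)) := by
  set I := ∫⁻ x : ℝ, ENNReal.ofReal ((1 + ‖x‖) ^ (-s)) with hI
  have hIfin : I < ⊤ := finite_integral_one_add_norm (by simpa using hs)
  refine ⟨2 ^ s * I.toReal + 1, by positivity, fun g hg hg1 ξ => ?_⟩
  refine (sum_le_lintegral (f := fun x => ENNReal.ofReal (w g x) ^ s)
    (F := fun u => ENNReal.ofReal (2 ^ s * g ^ s) * ENNReal.ofReal ((1 + ‖g * u‖) ^ (-s)))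
    ?_ ξ).trans ?_
  · intro x u h1 h2
    have hw := w_near hg.le hg1 h1 h2
    rw [ENNReal.ofReal_rpow_of_nonneg (w_nonneg hg.le _) (by linarith), ← ENNReal.ofReal_mul (by positivity)]
    apply ENNReal.ofReal_le_ofReal
    calc w g x ^ s ≤ (2 * w g u) ^ s := Real.rpow_le_rpow (w_nonneg hg.le _) hw (by linarith)
      _ = _ := by
        rw [Real.mul_rpow (by norm_num) (w_nonneg hg.le _)]
        unfold w
        rw [Real.div_rpow hg.le (by positivity), norm_mul, Real.norm_eq_abs, Real.norm_eq_abs,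
          abs_of_pos hg, Real.rpow_neg (by positivity)]
        ring
  · rw [lintegral_const_mul _ (by fun_prop)]
    have h3 : ∫⁻ u : ℝ, ENNReal.ofReal ((1 + ‖g * u‖) ^ (-s)) = ENNReal.ofReal g⁻¹ * I := by
      have h4 : ∫⁻ y, ENNReal.ofReal ((1 + ‖y‖) ^ (-s)) ∂(Measure.map (fun x => g * x) volume)
          = ∫⁻ u : ℝ, ENNReal.ofReal ((1 + ‖g * u‖) ^ (-s)) :=
        lintegral_map (by fun_prop) (by fun_prop)
      rw [← h4, Real.map_volume_mul_left hg.ne', lintegral_smul_measure, abs_of_pos (by positivity)]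
      rfl
    rw [h3]
    nth_rewrite 1 [← ENNReal.ofReal_toReal hIfin.ne]
    rw [← ENNReal.ofReal_mul (by positivity),
      ← ENNReal.ofReal_mul (by positivity)]
    apply ENNReal.ofReal_le_ofReal
    rw [Real.rpow_sub hg, Real.rpow_one, add_mul]
    have : 0 ≤ 1 * (g ^ s / g) := by positivity
    have e : 2 ^ s * g ^ s * (g⁻¹ * I.toReal) = 2 ^ s * I.toReal * (g ^ s / g) := by
      rw [div_eq_mul_inv]; ring
    linarith

lemma w_int {g S : ℝ} (hg : 0 < g) (hS : 0 ≤ S) :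
    ∫ u in (-S)..S, w g u = 2 * log (1 + g * S) := by
  have hc : Continuous (w g) := by
    unfold w
    apply Continuous.div (by fun_prop) (by fun_prop)
    intro x; positivity
  have h1 : ∫ u in (0:ℝ)..S, w g u = log (1 + g * S) := by
    have : ∀ u ∈ uIcc 0 S, HasDerivAt (fun u => log (1 + g * u)) (g / (1 + g * u)) u := by
      intro u hu
      rw [uIcc_of_le hS] at hu
      have h0 := hu.1
      have := ((hasDerivAt_id' u).const_mul g).const_add 1
      rw [mul_one] at this
      exact this.log (by positivity)
    have h2 : ∫ u in (0:ℝ)..S, w g u = ∫ u in (0:ℝ)..S, g / (1 + g * u) := by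
      apply intervalIntegral.integral_congr
      intro u hu
      rw [uIcc_of_le hS] at hu
      simp only [w, abs_of_nonneg hu.1]
    rw [h2, intervalIntegral.integral_eq_sub_of_hasDerivAt this]
    · simp
    · apply ContinuousOn.intervalIntegrable
      apply ContinuousOn.div (by fun_prop) (by fun_prop)
      intro u hu
      rw [uIcc_of_le hS] at hu
      have h0 := hu.1
      positivity
  have h2 : ∫ u in (-S)..0, w g u = log (1 + g * S) := by
    have := intervalIntegral.integral_comp_neg (a := 0) (b := S) (w g)
    rw [neg_zero] at this
    rw [← this, ← h1]
    apply intervalIntegral.integral_congr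
    intro u _
    simp only [w, abs_neg]
  rw [← intervalIntegral.integral_add_adjacent_intervals (b := 0) (hc.intervalIntegrable _ _)
    (hc.intervalIntegrable _ _), h1, h2]
  ring

lemma w_sum_one {g R : ℝ} (hg : 0 < g) (hg1 : g ≤ 1) (hR : 0 ≤ R) (ξ : ℝ) :
    ∑' k : ℤ, (if |(k:ℝ) - ξ| ≤ R then ENNReal.ofReal (w g (k - ξ)) else 0) ≤
      ENNReal.ofReal (4 * log (1 + g * (R + 1))) := by
  refine (sum_le_lintegral (f := fun x => if |x| ≤ R then ENNReal.ofReal (w g x) else 0)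
    (F := (Ioc (-(R + 1)) (R + 1)).indicator fun u => ENNReal.ofReal (2 * w g u)) ?_ ξ).trans ?_
  · intro x u h1 h2
    by_cases hx : |x| ≤ R
    · have : u ∈ Ioc (-(R + 1)) (R + 1) := by
        rw [abs_le] at hx; constructor <;> linarith
      simp only [hx, indicator_of_mem this, if_true]
      exact ENNReal.ofReal_le_ofReal (w_near hg.le hg1 h1 h2)
    · simp [hx]
  · have hc : Continuous fun u => 2 * w g u := by
      unfold w
      apply Continuous.mul (by fun_prop)
      apply Continuous.div (by fun_prop) (by fun_prop)
      intro x; positivity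
    rw [lintegral_indicator measurableSet_Ioc, ← ofReal_integral_eq_lintegral_ofReal
      (hc.integrableOn_Ioc) (Filter.Eventually.of_forall fun u => by
        have := w_nonneg hg.le u
        simp only [Pi.zero_apply]; positivity),
      ← intervalIntegral.integral_of_le (by linarith), intervalIntegral.integral_const_mul,
      w_int hg (by linarith)]
    apply ENNReal.ofReal_le_ofReal; linarith

end
end CB

open MeasureTheory Real Set
open scoped ENNReal

namespace CB
section
variable {l : ℕ → ℝ}

lemma gap_even (N : ℕ) (k : ℤ) : gap l (N + 1) (2 * k) = gap l N k := by
  unfold gap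
  rw [T_even, show 2 * k - 1 = 2 * (k - 1) + 1 by ring, T_odd]; ring

lemma gap_odd (N : ℕ) (k : ℤ) : gap l (N + 1) (2 * k + 1) = l N - 2 * l (N + 1) := by
  unfold gap
  rw [T_odd, show 2 * k + 1 - 1 = 2 * k by ring, T_even]; ring

lemma sum_range_two_mul (f : ℕ → ℝ≥0∞) (n : ℕ) :
    ∑ j ∈ Finset.range (2 * n), f j = ∑ k ∈ Finset.range n, (f (2 * k) + f (2 * k + 1)) := by
  induction n with
  | zero => simp
  | succ n ih =>
    rw [show 2 * (n + 1) = 2 * n + 1 + 1 by ring, Finset.sum_range_succ, Finset.sum_range_succ,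
      Finset.sum_range_succ, ih, add_assoc]

lemma gap_sum (f : ℝ → ℝ≥0∞) (q d : ℕ) :
    ∑ j ∈ Finset.range (2 ^ d), (if j = 0 then 0 else f (gap l (q + d) (j : ℤ))) =
      ∑ i ∈ Finset.range d, 2 ^ i * f (l (q + i) - 2 * l (q + i + 1)) := by
  induction d with
  | zero => simp
  | succ d ih =>
    rw [pow_succ', sum_range_two_mul, Finset.sum_add_distrib, Finset.sum_range_succ, ← ih]
    congr 1
    · apply Finset.sum_congr rfl
      intro j _
      push_cast
      rw [← add_assoc, gap_even]
      by_cases hj : j = 0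
      · simp [hj]
      · simp [hj]
    · push_cast
      simp only [← add_assoc, gap_odd]
      simp

/-- tent built from the staircase -/
noncomputable def tent (l : ℕ → ℝ) (q : ℕ) (s : ℝ) : ℝ := max 0 (psi l (l q - |s - l q|))

/-- derivative block -/
noncomputable def bet (l : ℕ → ℝ) (q : ℕ) (s : ℝ) : ℝ := tent l q s - tent l q (s - 2 * l q)

/-- block -/
noncomputable def bl (l : ℕ → ℝ) (q : ℕ) (s : ℝ) : ℝ := ∫ t in (0:ℝ)..s, bet l q t

lemma psi_nonneg (h : Scale l) {t : ℝ} (ht : 0 ≤ t) : 0 ≤ psi l t := by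
  rw [← psi_zero h]; exact psi_mono h ht

lemma psi_nonpos (h : Scale l) {t : ℝ} (ht : t ≤ 0) : psi l t ≤ 0 := by
  rw [← psi_zero h]; exact psi_mono h ht

lemma tent_left (h : Scale l) (q : ℕ) {s : ℝ} (h0 : 0 ≤ s) (h1 : s ≤ l q) :
    tent l q s = psi l s := by
  unfold tent
  rw [abs_of_nonpos (by linarith), show l q - -(s - l q) = s by ring, max_eq_right (psi_nonneg h h0)]

lemma tent_right (h : Scale l) (q : ℕ) {u : ℝ} (h0 : 0 ≤ u) (h1 : u ≤ l q) :
    tent l q (2 * l q - u) = psi l u := by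
  unfold tent
  rw [abs_of_nonneg (by linarith), show l q - (2 * l q - u - l q) = u by ring,
    max_eq_right (psi_nonneg h h0)]

lemma tent_out (h : Scale l) (q : ℕ) {s : ℝ} (h0 : s ≤ 0 ∨ 2 * l q ≤ s) : tent l q s = 0 := by
  unfold tent
  apply max_eq_left
  apply psi_nonpos h
  have := h.pos q
  rcases h0 with h0 | h0
  · have := neg_le_abs (s - l q); linarith
  · have := le_abs_self (s - l q); linarith

lemma tent_bd (h : Scale l) (q : ℕ) (s : ℝ) : 0 ≤ tent l q s ∧ tent l q s ≤ 1 / 2 ^ q := by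
  unfold tent
  refine ⟨le_max_left _ _, max_le (by positivity) ?_⟩
  rw [← psi_top h q]
  apply psi_mono h
  have := abs_nonneg (s - l q); linarith

lemma bet_bd (h : Scale l) (q : ℕ) (s : ℝ) : |bet l q s| ≤ 1 / 2 ^ q := by
  unfold bet
  have := tent_bd h q s
  have := tent_bd h q (s - 2 * l q)
  rw [abs_le]; constructor <;> linarith

lemma bet_out (h : Scale l) (q : ℕ) {s : ℝ} (h0 : s ≤ 0 ∨ 4 * l q ≤ s) : bet l q s = 0 := by
  unfold bet
  have := h.pos q
  rw [tent_out h q (by rcases h0 with h0 | h0; left; exact h0; right; linarith),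
    tent_out h q (by rcases h0 with h0 | h0; left; linarith; right; linarith), sub_zero]

lemma bet_continuous (h : Scale l) (q : ℕ) : Continuous (bet l q) := by
  have := psi_continuous h
  unfold bet tent; fun_prop

lemma bet1 (h : Scale l) (q : ℕ) {u : ℝ} (h0 : 0 ≤ u) (h1 : u ≤ l q) : bet l q (0 + 1 * u) = 1 * psi l u := by
  unfold bet
  have := h.pos q
  rw [zero_add, one_mul, one_mul, tent_left h q h0 h1, tent_out h q (by left; linarith), sub_zero]

lemma bet2 (h : Scale l) (q : ℕ) {u : ℝ} (h0 : 0 ≤ u) (h1 : u ≤ l q) :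
    bet l q (2 * l q + (-1) * u) = 1 * psi l u := by
  unfold bet
  rw [show 2 * l q + (-1) * u = 2 * l q - u by ring, tent_right h q h0 h1,
    tent_out h q (by left; linarith), sub_zero, one_mul]

lemma bet3 (h : Scale l) (q : ℕ) {u : ℝ} (h0 : 0 ≤ u) (h1 : u ≤ l q) :
    bet l q (2 * l q + 1 * u) = (-1) * psi l u := by
  unfold bet
  rw [show 2 * l q + 1 * u - 2 * l q = u by ring, tent_left h q h0 h1,
    tent_out h q (by right; linarith)]; ring

lemma bet4 (h : Scale l) (q : ℕ) {u : ℝ} (h0 : 0 ≤ u) (h1 : u ≤ l q) :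
    bet l q (4 * l q + (-1) * u) = (-1) * psi l u := by
  unfold bet
  rw [show 4 * l q + (-1) * u - 2 * l q = 2 * l q - u by ring, tent_right h q h0 h1,
    tent_out h q (by right; linarith)]; ring

lemma bl_deriv (h : Scale l) (q : ℕ) (s : ℝ) : HasDerivAt (bl l q) (bet l q s) s :=
  intervalIntegral.integral_hasDerivAt_right ((bet_continuous h q).intervalIntegrable _ _)
    ((bet_continuous h q).stronglyMeasurableAtFilter _ _) (bet_continuous h q).continuousAt

lemma bl_piece (h : Scale l) (q : ℕ) {s0 τ σ : ℝ}
    (hb : ∀ u, 0 ≤ u → u ≤ l q → bet l q (s0 + τ * u) = σ * psi l u) {u : ℝ} (h0 : 0 ≤ u)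
    (h1 : u ≤ l q) : bl l q (s0 + τ * u) = bl l q s0 + τ * σ * Ps l u := by
  have hi : ∀ x y, IntervalIntegrable (bet l q) volume x y := fun x y =>
    (bet_continuous h q).intervalIntegrable x y
  have e1 : bl l q (s0 + τ * u) = bl l q s0 + ∫ t in s0..s0 + τ * u, bet l q t :=
    (intervalIntegral.integral_add_adjacent_intervals (hi _ _) (hi _ _)).symm
  have e2 := intervalIntegral.smul_integral_comp_add_mul (a := 0) (b := u) (bet l q) τ s0
  rw [mul_zero, add_zero] at e2
  rw [e1, ← e2]
  have e3 : ∫ x in (0:ℝ)..u, bet l q (s0 + τ * x) = ∫ x in (0:ℝ)..u, σ * psi l x := by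
    apply intervalIntegral.integral_congr
    intro x hx
    rw [uIcc_of_le h0] at hx
    exact hb x hx.1 (hx.2.trans h1)
  rw [e3, intervalIntegral.integral_const_mul, smul_eq_mul]
  unfold Ps; ring

lemma bl_zero (q : ℕ) : bl l q 0 = 0 := by unfold bl; simp

lemma bl_end (h : Scale l) (q : ℕ) : bl l q (4 * l q) = 0 := by
  have hl := (h.pos q).le
  have e1 := bl_piece h q (fun u h0 h1 => bet1 h q h0 h1) hl le_rfl
  have e2 := bl_piece h q (fun u h0 h1 => bet2 h q h0 h1) hl le_rfl
  have e3 := bl_piece h q (fun u h0 h1 => bet3 h q h0 h1) hl le_rfl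
  have e4 := bl_piece h q (fun u h0 h1 => bet4 h q h0 h1) hl le_rfl
  rw [bl_zero, show (0:ℝ) + 1 * l q = l q by ring] at e1
  rw [show 2 * l q + -1 * l q = l q by ring] at e2
  rw [show 2 * l q + 1 * l q = 3 * l q by ring] at e3
  rw [show 4 * l q + -1 * l q = 3 * l q by ring] at e4
  linarith

lemma bl_out (h : Scale l) (q : ℕ) {s : ℝ} (h0 : s ≤ 0 ∨ 4 * l q ≤ s) : bl l q s = 0 := by
  have hi : ∀ x y, IntervalIntegrable (bet l q) volume x y := fun x y =>
    (bet_continuous h q).intervalIntegrable x y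
  have hl := (h.pos q).le
  rcases h0 with h0 | h0
  · unfold bl
    rw [intervalIntegral.integral_congr (g := fun _ => (0:ℝ))]
    · simp
    · intro x hx
      rw [uIcc_of_ge h0] at hx
      exact bet_out h q (Or.inl hx.2)
  · have e1 : bl l q s = bl l q (4 * l q) + ∫ t in (4 * l q)..s, bet l q t :=
      (intervalIntegral.integral_add_adjacent_intervals (hi _ _) (hi _ _)).symm
    rw [e1, bl_end h, intervalIntegral.integral_congr (g := fun _ => (0:ℝ))]
    · simp
    · intro x hx
      rw [uIcc_of_le h0] at hx
      exact bet_out h q (Or.inr hx.1)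

lemma bl_bd (h : Scale l) (q : ℕ) (s : ℝ) : |bl l q s| ≤ 4 * l q / 2 ^ q := by
  have hl := (h.pos q).le
  by_cases h0 : s ≤ 0 ∨ 4 * l q ≤ s
  · rw [bl_out h q h0, abs_zero]; positivity
  · push Not at h0
    have := intervalIntegral.norm_integral_le_of_norm_le_const (a := 0) (b := s) (f := bet l q)
      (C := 1 / 2 ^ q) (fun x _ => bet_bd h q x)
    rw [sub_zero, abs_of_pos h0.1, Real.norm_eq_abs] at this
    refine this.trans ?_
    rw [div_mul_eq_mul_div, one_mul]
    gcongr
    exact h0.2.le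

/-- block oscillatory integral -/
noncomputable def H (l : ℕ → ℝ) (q : ℕ) (lam ξ : ℝ) : ℂ :=
  ∫ s in (0:ℝ)..4 * l q, (Complex.exp (Complex.I * ((lam * bl l q s : ℝ) : ℂ)) - 1) *
    Complex.exp (Complex.I * ((-(ξ * s) : ℝ) : ℂ))

lemma bl_continuous (h : Scale l) (q : ℕ) : Continuous (bl l q) :=
  continuous_iff_continuousAt.2 fun t => (bl_deriv h q t).continuousAt

lemma H_trivial (h : Scale l) (q : ℕ) {lam : ℝ} (hlam : 0 ≤ lam) (ξ : ℝ) :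
    ‖H l q lam ξ‖ ≤ 16 * (lam / 2 ^ q) * l q ^ 2 := by
  have hl := (h.pos q).le
  have := intervalIntegral.norm_integral_le_of_norm_le_const (a := 0) (b := 4 * l q)
    (f := fun s => (Complex.exp (Complex.I * ((lam * bl l q s : ℝ) : ℂ)) - 1) *
    Complex.exp (Complex.I * ((-(ξ * s) : ℝ) : ℂ))) (C := lam * (4 * l q / 2 ^ q)) (fun x _ => by
      rw [norm_mul, norm_expI, mul_one]
      refine (Real.norm_exp_I_mul_ofReal_sub_one_le).trans ?_
      rw [Real.norm_eq_abs, abs_mul, abs_of_nonneg hlam]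
      exact mul_le_mul_of_nonneg_left (bl_bd h q x) hlam)
  refine this.trans (le_of_eq ?_)
  rw [sub_zero, abs_of_nonneg (by positivity)]
  ring

lemma K_neg (lam ξ : ℝ) (q : ℕ) : ‖K l q (-lam) ξ‖ = ‖K l q lam (-ξ)‖ := by
  have : K l q (-lam) ξ = (starRingEnd ℂ) (K l q lam (-ξ)) := by
    unfold K
    rw [← intervalIntegral.intervalIntegral_conj]
    apply intervalIntegral.integral_congr
    intro s _
    simp only
    rw [← Complex.exp_conj, map_mul, Complex.conj_I, Complex.conj_ofReal]
    congr 1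
    push_cast; ring
  rw [this, RCLike.norm_conj]

lemma H_piece (h : Scale l) (q : ℕ) {s0 τ σ lam ξ : ℝ} (hτ : |τ| = 1)
    (hb : ∀ u, 0 ≤ u → u ≤ l q → bet l q (s0 + τ * u) = σ * psi l u) :
    ‖∫ s in s0..s0 + τ * l q, Complex.exp (Complex.I * ((lam * bl l q s - ξ * s : ℝ) : ℂ))‖ =
      ‖K l q (lam * (τ * σ)) (ξ * τ)‖ := by
  set F : ℝ → ℂ := fun s => Complex.exp (Complex.I * ((lam * bl l q s - ξ * s : ℝ) : ℂ)) with hF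
  have e2 := intervalIntegral.smul_integral_comp_add_mul (a := 0) (b := l q) F τ s0
  rw [mul_zero, add_zero] at e2
  rw [← e2, norm_smul, Real.norm_eq_abs, hτ, one_mul]
  have e3 : ∫ x in (0:ℝ)..l q, F (s0 + τ * x) =
      ∫ x in (0:ℝ)..l q, Complex.exp (Complex.I * ((lam * bl l q s0 - ξ * s0 : ℝ) : ℂ)) *
        Complex.exp (Complex.I * ((lam * (τ * σ) * Ps l x - ξ * τ * x : ℝ) : ℂ)) := by
    apply intervalIntegral.integral_congr
    intro x hx
    rw [uIcc_of_le (h.pos q).le] at hx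
    simp only [hF]
    rw [bl_piece h q hb hx.1 hx.2, ← Complex.exp_add]
    congr 1
    push_cast; ring
  rw [e3, intervalIntegral.integral_const_mul, norm_mul, norm_expI, one_mul]
  rfl

lemma split4 {F : ℝ → ℂ} (hF : Continuous F) (x : ℝ) :
    ‖∫ s in (0:ℝ)..4 * x, F s‖ ≤ ‖∫ s in (0:ℝ)..x, F s‖ + ‖∫ s in x..2 * x, F s‖ +
      ‖∫ s in (2 * x)..3 * x, F s‖ + ‖∫ s in (3 * x)..4 * x, F s‖ := by
  have hFi : ∀ x y, IntervalIntegrable F volume x y := fun x y => hF.intervalIntegrable x y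
  have : ∫ s in (0:ℝ)..4 * x, F s = (∫ s in (0:ℝ)..x, F s) + (∫ s in x..2 * x, F s) +
      (∫ s in (2 * x)..3 * x, F s) + (∫ s in (3 * x)..4 * x, F s) := by
    rw [intervalIntegral.integral_add_adjacent_intervals (hFi _ _) (hFi _ _),
      intervalIntegral.integral_add_adjacent_intervals (hFi _ _) (hFi _ _),
      intervalIntegral.integral_add_adjacent_intervals (hFi _ _) (hFi _ _)]
  rw [this]
  exact norm_add₄_le

lemma H_central (h : Scale l) (q : ℕ) (lam ξ : ℝ) :
    ‖H l q lam ξ‖ ≤ 2 * ‖K l q lam ξ‖ + 2 * ‖K l q lam (-ξ)‖ + 20 * w (l q) ξ := by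
  have hl := h.pos q
  have hbc := bl_continuous h q
  set F : ℝ → ℂ := fun s => Complex.exp (Complex.I * ((lam * bl l q s - ξ * s : ℝ) : ℂ)) with hF
  set G : ℝ → ℂ := fun s => Complex.exp (Complex.I * ((-(ξ * s) : ℝ) : ℂ)) with hG
  have hFc : Continuous F := by fun_prop
  have hGc : Continuous G := by fun_prop
  have e : H l q lam ξ = (∫ s in (0:ℝ)..4 * l q, F s) - ∫ s in (0:ℝ)..4 * l q, G s := by
    rw [← intervalIntegral.integral_sub (hFc.intervalIntegrable _ _) (hGc.intervalIntegrable _ _)]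
    apply intervalIntegral.integral_congr
    intro s _
    simp only [hF, hG]
    rw [sub_mul, one_mul, ← Complex.exp_add]
    congr 2
    push_cast; ring
  have p1 := H_piece h q (lam := lam) (ξ := ξ) (by norm_num) (fun u h0 h1 => bet1 h q h0 h1)
  have p2 := H_piece h q (lam := lam) (ξ := ξ) (by norm_num) (fun u h0 h1 => bet2 h q h0 h1)
  have p3 := H_piece h q (lam := lam) (ξ := ξ) (by norm_num) (fun u h0 h1 => bet3 h q h0 h1)
  have p4 := H_piece h q (lam := lam) (ξ := ξ) (by norm_num) (fun u h0 h1 => bet4 h q h0 h1)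
  rw [show (0:ℝ) + 1 * l q = l q by ring, show lam * (1 * 1) = lam by ring, mul_one] at p1
  rw [show 2 * l q + -1 * l q = l q by ring, intervalIntegral.integral_symm, norm_neg,
    show lam * (-1 * 1) = -lam by ring, show ξ * -1 = - ξ by ring, K_neg, neg_neg] at p2
  rw [show 2 * l q + 1 * l q = 3 * l q by ring,
    show lam * (1 * -1) = -lam by ring, show ξ * 1 = ξ by ring, K_neg] at p3
  rw [show 4 * l q + -1 * l q = 3 * l q by ring, intervalIntegral.integral_symm, norm_neg,
    show lam * (-1 * -1) = lam by ring, show ξ * -1 = - ξ by ring] at p4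
  have s4 := split4 hFc (l q)
  have hg : ‖∫ s in (0:ℝ)..4 * l q, G s‖ ≤ 5 * w (4 * l q) ξ := by
    apply le_w (by positivity)
    · refine (intervalIntegral.norm_integral_le_of_norm_le_const (C := 1) ?_).trans ?_
      · intro t _; exact (norm_expI _).le
      · rw [one_mul, sub_zero, abs_of_nonneg (by linarith)]
    · by_cases hz : ξ = 0
      · rw [hz]; simp
      · have hpos := abs_pos.2 hz
        rw [← le_div_iff₀ hpos]
        apply first_deriv (by positivity) (θ := fun _ => -ξ) (fun t => by
          have := ((hasDerivAt_id' t).const_mul ξ).fun_neg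
          rwa [mul_one] at this) (by fun_prop) _ hpos
        · rcases le_total 0 ξ with h5 | h5
          · right; intro t ht; rw [abs_of_nonneg h5]
          · left; intro t ht; rw [abs_of_nonpos h5]
        · intro s hs t ht _
          exact le_rfl
  have hw4 : w (4 * l q) ξ ≤ 4 * w (l q) ξ := by
    unfold w
    rw [← mul_div_assoc]
    have := abs_nonneg ξ
    gcongr
    linarith
  rw [e]
  have := norm_sub_le (∫ s in (0:ℝ)..4 * l q, F s) (∫ s in (0:ℝ)..4 * l q, G s)
  linarith

lemma frac_mono {x y lam ξ : ℝ} (hx : |lam * x| < |ξ|) (hy : |lam * y| < |ξ|) (hxy : x ≤ y) :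
    (0 < ξ → y / (lam * y - ξ) ≤ x / (lam * x - ξ)) ∧ (ξ < 0 → x / (lam * x - ξ) ≤ y / (lam * y - ξ)) := by
  constructor
  · intro h
    rw [abs_of_pos h, abs_lt] at hx hy
    rw [← neg_le_neg_iff, ← div_neg, ← div_neg, div_le_div_iff₀ (by linarith) (by linarith)]
    nlinarith
  · intro h
    rw [abs_of_neg h, abs_lt] at hx hy
    rw [div_le_div_iff₀ (by linarith) (by linarith)]
    nlinarith

lemma tail_piece (h : Scale l) (q : ℕ) {lam ξ a b : ℝ} (hlam : 0 < lam) (hξ : 2 * (lam / 2 ^ q) ≤ |ξ|)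
    (hab : a ≤ b) (hm : MonotoneOn (bet l q) (Icc a b) ∨ AntitoneOn (bet l q) (Icc a b)) :
    ‖∫ s in a..b, (bet l q s : ℂ) * Complex.exp (Complex.I * ((lam * bl l q s - ξ * s : ℝ) : ℂ))‖ ≤
      4 * (2 / 2 ^ q / |ξ|) := by
  have h2 : (0:ℝ) < lam / 2 ^ q := by positivity
  have hξ0 : 0 < |ξ| := by linarith
  have hlb : ∀ t, |lam * bet l q t| ≤ |ξ| / 2 := by
    intro t
    rw [abs_mul, abs_of_pos hlam]
    have := mul_le_mul_of_nonneg_left (bet_bd h q t) hlam.le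
    rw [mul_one_div] at this
    linarith
  have hlb' : ∀ t, |lam * bet l q t| < |ξ| := fun t => (hlb t).trans_lt (by linarith)
  have hth : ∀ t, |ξ| / 2 ≤ |lam * bet l q t - ξ| := by
    intro t
    have := abs_sub_abs_le_abs_sub ξ (lam * bet l q t)
    rw [abs_sub_comm] at this
    have := hlb t
    linarith
  have hth0 : ∀ t, lam * bet l q t - ξ ≠ 0 := fun t => by
    rw [← abs_pos]; have := hth t; linarith
  have hP : ∀ t, HasDerivAt (fun s => lam * bl l q s - ξ * s) (lam * bet l q t - ξ) t := by
    intro t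
    have := ((bl_deriv h q t).const_mul lam).fun_sub ((hasDerivAt_id' t).const_mul ξ)
    rwa [mul_one] at this
  have hc : Continuous fun t => lam * bet l q t - ξ := by
    have := bet_continuous h q; fun_prop
  set W : ℝ → ℝ := fun t => bet l q t / (lam * bet l q t - ξ) with hW
  have hWM : ∀ t ∈ Icc a b, |W t| ≤ 2 / 2 ^ q / |ξ| := by
    intro t _
    rw [hW]
    simp only
    rw [abs_div, div_div, div_le_div_iff₀ (by have := hth t; linarith) (by positivity)]
    have h3 := bet_bd h q t
    have h4 := hth t
    have h5 : |bet l q t| * 2 ^ q ≤ 1 := by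
      rwa [← le_div_iff₀ (by positivity)]
    calc |bet l q t| * (2 ^ q * |ξ|) = (|bet l q t| * 2 ^ q) * |ξ| := by ring
      _ ≤ 1 * |ξ| := by gcongr
      _ ≤ _ := by linarith
  have hcongr : ∫ s in a..b, (bet l q s : ℂ) * Complex.exp (Complex.I * ((lam * bl l q s - ξ * s : ℝ) : ℂ))
      = ∫ s in a..b, (W s : ℂ) * (((lam * bet l q s - ξ : ℝ) : ℂ) *
        Complex.exp (Complex.I * ((lam * bl l q s - ξ * s : ℝ) : ℂ))) := by
    apply intervalIntegral.integral_congr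
    intro s _
    simp only
    rw [← mul_assoc, ← Complex.ofReal_mul, hW]
    simp only
    rw [div_mul_cancel₀ _ (hth0 s)]
  rw [hcongr]
  have hξne : ξ ≠ 0 := abs_pos.1 hξ0
  have hmW : MonotoneOn W (Icc a b) ∨ AntitoneOn W (Icc a b) := by
    rcases hm with hm | hm <;> rcases lt_or_gt_of_ne hξne with hs | hs
    · left; intro s hs1 t ht1 hst
      exact (frac_mono (hlb' s) (hlb' t) (hm hs1 ht1 hst)).2 hs
    · right; intro s hs1 t ht1 hst
      exact (frac_mono (hlb' s) (hlb' t) (hm hs1 ht1 hst)).1 hs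
    · right; intro s hs1 t ht1 hst
      exact (frac_mono (hlb' t) (hlb' s) (hm hs1 ht1 hst)).2 hs
    · left; intro s hs1 t ht1 hst
      exact (frac_mono (hlb' t) (hlb' s) (hm hs1 ht1 hst)).1 hs
  rcases hmW with hmW | hmW
  · exact vdc hab hP hc hmW hWM
  · exact vdc_anti hab hP hc hmW hWM

lemma H_tail (h : Scale l) (q : ℕ) {lam ξ : ℝ} (hlam : 0 < lam) (hξ : 2 * (lam / 2 ^ q) ≤ |ξ|) :
    ‖H l q lam ξ‖ ≤ 32 * (lam / 2 ^ q) / ξ ^ 2 := by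
  have h2 : (0:ℝ) < lam / 2 ^ q := by positivity
  have hξ0 : 0 < |ξ| := by linarith
  have hξne : ξ ≠ 0 := abs_pos.1 hξ0
  have hl := h.pos q
  have hbc := bl_continuous h q
  have hbec := bet_continuous h q
  set B : ℝ → ℂ := fun s => (bet l q s : ℂ) * Complex.exp (Complex.I * ((lam * bl l q s - ξ * s : ℝ) : ℂ)) with hB
  have hBc : Continuous B := by fun_prop
  have hξC : (ξ : ℂ) ≠ 0 := by exact_mod_cast hξne
  have e : H l q lam ξ = ((lam / ξ : ℝ) : ℂ) * ∫ s in (0:ℝ)..4 * l q, B s := by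
    set u : ℝ → ℂ := fun s => Complex.exp (Complex.I * ((lam * bl l q s : ℝ) : ℂ)) - 1 with hu
    set v : ℝ → ℂ := fun s => Complex.I / ξ * Complex.exp (Complex.I * ((-(ξ * s) : ℝ) : ℂ)) with hv
    have hud : ∀ s ∈ uIcc 0 (4 * l q), HasDerivAt u (Complex.exp (Complex.I * ((lam * bl l q s : ℝ) : ℂ)) *
        (Complex.I * ((lam * bet l q s : ℝ) : ℂ))) s := by
      intro s _
      exact ((((bl_deriv h q s).const_mul lam).ofReal_comp).const_mul Complex.I).cexp.sub_const 1
    have hvd : ∀ s ∈ uIcc 0 (4 * l q), HasDerivAt v (Complex.exp (Complex.I * ((-(ξ * s) : ℝ) : ℂ))) s := by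
      intro s _
      have h1 : HasDerivAt (fun s : ℝ => -(ξ * s)) (-(ξ * 1)) s := ((hasDerivAt_id' s).const_mul ξ).fun_neg
      have := ((h1.ofReal_comp.const_mul Complex.I).cexp).const_mul (Complex.I / ξ)
      refine this.congr_deriv ?_
      push_cast
      field_simp
      rw [Complex.I_sq]; ring
    have hp := intervalIntegral.integral_mul_deriv_eq_deriv_mul hud hvd
      (Continuous.intervalIntegrable (by fun_prop) _ _) (Continuous.intervalIntegrable (by fun_prop) _ _)
    have hu0 : u 0 = 0 := by simp [hu, bl_zero]
    have hu1 : u (4 * l q) = 0 := by simp [hu, bl_end h]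
    rw [hu0, hu1, zero_mul, zero_mul, sub_zero, zero_sub] at hp
    unfold H
    rw [hp, ← intervalIntegral.integral_const_mul, ← intervalIntegral.integral_neg]
    apply intervalIntegral.integral_congr
    intro s _
    simp only [hv, hB]
    have : Complex.exp (Complex.I * ((lam * bl l q s - ξ * s : ℝ) : ℂ)) =
        Complex.exp (Complex.I * ((lam * bl l q s : ℝ) : ℂ)) * Complex.exp (Complex.I * ((-(ξ * s) : ℝ) : ℂ)) := by
      rw [← Complex.exp_add]; congr 1; push_cast; ring
    rw [this]
    push_cast
    field_simp
    rw [Complex.I_sq]; ring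
  have hs4 := split4 hBc (l q)
  have q1 := tail_piece h q hlam hξ hl.le (Or.inl (by
    intro s hs t ht hst
    have e1 := bet1 h q hs.1 hs.2
    have e2 := bet1 h q ht.1 ht.2
    simp only [zero_add, one_mul] at e1 e2
    rw [e1, e2]; exact psi_mono h hst))
  have q2 := tail_piece h q (a := l q) (b := 2 * l q) hlam hξ (by linarith) (Or.inr (by
    intro s hs t ht hst
    have e1 := bet2 h q (u := 2 * l q - s) (by linarith [hs.2]) (by linarith [hs.1])
    have e2 := bet2 h q (u := 2 * l q - t) (by linarith [ht.2]) (by linarith [ht.1])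
    rw [show ∀ x : ℝ, 2 * l q + -1 * (2 * l q - x) = x by intro x; ring, one_mul] at e1 e2
    rw [e1, e2]; exact psi_mono h (by linarith)))
  have q3 := tail_piece h q (a := 2 * l q) (b := 3 * l q) hlam hξ (by linarith) (Or.inr (by
    intro s hs t ht hst
    have e1 := bet3 h q (u := s - 2 * l q) (by linarith [hs.1]) (by linarith [hs.2])
    have e2 := bet3 h q (u := t - 2 * l q) (by linarith [ht.1]) (by linarith [ht.2])
    rw [show ∀ x : ℝ, 2 * l q + 1 * (x - 2 * l q) = x by intro x; ring] at e1 e2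
    rw [e1, e2]; have := psi_mono h (show s - 2 * l q ≤ t - 2 * l q by linarith); linarith))
  have q4 := tail_piece h q (a := 3 * l q) (b := 4 * l q) hlam hξ (by linarith) (Or.inl (by
    intro s hs t ht hst
    have e1 := bet4 h q (u := 4 * l q - s) (by linarith [hs.2]) (by linarith [hs.1])
    have e2 := bet4 h q (u := 4 * l q - t) (by linarith [ht.2]) (by linarith [ht.1])
    rw [show ∀ x : ℝ, 4 * l q + -1 * (4 * l q - x) = x by intro x; ring] at e1 e2
    rw [e1, e2]; have := psi_mono h (show 4 * l q - t ≤ 4 * l q - s by linarith); linarith))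
  have htot : ‖∫ s in (0:ℝ)..4 * l q, B s‖ ≤ 32 / 2 ^ q / |ξ| := by
    have : 32 / 2 ^ q / |ξ| = 4 * (4 * (2 / 2 ^ q / |ξ|)) := by ring
    linarith
  rw [e, norm_mul, Complex.norm_real, Real.norm_eq_abs, abs_div, abs_of_pos hlam]
  calc lam / |ξ| * ‖∫ s in (0:ℝ)..4 * l q, B s‖ ≤ lam / |ξ| * (32 / 2 ^ q / |ξ|) := by gcongr
    _ = _ := by rw [← sq_abs ξ]; field_simp

end
end CB

open MeasureTheory Real Set
open scoped ENNReal

namespace CB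
section
variable {l : ℕ → ℝ}

lemma pow_add_le {p : ℝ} (hp1 : 1 ≤ p) (hp2 : p ≤ 2) (x y : ℝ≥0∞) :
    (x + y) ^ p ≤ 2 * (x ^ p + y ^ p) := by
  refine (ENNReal.rpow_add_le_mul_rpow_add_rpow x y hp1).trans ?_
  gcongr
  calc (2:ℝ≥0∞) ^ (p - 1) ≤ 2 ^ (1:ℝ) :=
        ENNReal.rpow_le_rpow_of_exponent_le (by norm_num) (by linarith)
    _ = 2 := ENNReal.rpow_one 2

lemma ofReal_pow_const {p : ℝ} (hp1 : 1 ≤ p) (hp2 : p ≤ 2) {c : ℝ} (hc : 1 ≤ c) (x : ℝ) :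
    ENNReal.ofReal (c * x) ^ p ≤ ENNReal.ofReal (c ^ 2) * ENNReal.ofReal x ^ p := by
  rw [ENNReal.ofReal_mul (by linarith), ENNReal.mul_rpow_of_nonneg _ _ (by linarith)]
  gcongr
  calc ENNReal.ofReal c ^ p ≤ ENNReal.ofReal c ^ (2:ℝ) :=
        ENNReal.rpow_le_rpow_of_exponent_le (by simpa using hc) hp2
    _ = _ := by rw [ENNReal.rpow_two, ENNReal.ofReal_pow (by linarith)]

lemma H_far (h : Scale l) (q : ℕ) {lam θ : ℝ} (hlam : 0 < lam) (hθ : 0 < θ)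
    (hq : lam * θ * (l q / 2 ^ q) ≤ 1) (ξ : ℝ) :
    ‖H l q lam ξ‖ ≤ (32 * (1 + 2 / θ) ^ 2 * (1 + θ) ^ 2) * ((lam / 2 ^ q) * w (l q) ξ ^ 2) := by
  have hl := h.pos q
  have hr : 0 < lam / 2 ^ q := by positivity
  have hrl : (lam / 2 ^ q) * l q ≤ 1 / θ := by
    rw [le_div_iff₀ hθ]
    calc (lam / 2 ^ q) * l q * θ = lam * θ * (l q / 2 ^ q) := by ring
      _ ≤ 1 := hq
  have hA : 1 ≤ (1 + 2 / θ) ^ 2 := one_le_pow₀ (by have : 0 < 2 / θ := by positivity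
                                                   linarith)
  have hB : 1 ≤ (1 + θ) ^ 2 := one_le_pow₀ (by linarith)
  rcases le_total (l q * |ξ|) (2 / θ) with hx | hx
  · refine (H_trivial h q hlam.le ξ).trans ?_
    have h1 : l q ≤ (1 + 2 / θ) * w (l q) ξ := by
      unfold w
      rw [← mul_div_assoc, le_div_iff₀ (by positivity), mul_comm]
      gcongr
    have h2 : l q ^ 2 ≤ (1 + 2 / θ) ^ 2 * w (l q) ξ ^ 2 := by
      rw [← mul_pow]; gcongr
    calc 16 * (lam / 2 ^ q) * l q ^ 2 ≤ 16 * (lam / 2 ^ q) * ((1 + 2 / θ) ^ 2 * w (l q) ξ ^ 2) := by gcongr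
      _ = (16 * (1 + 2 / θ) ^ 2 * 1) * ((lam / 2 ^ q) * w (l q) ξ ^ 2) := by ring
      _ ≤ _ := by gcongr; norm_num
  · have hξ0 : 0 < |ξ| := by
      by_contra hc
      have : |ξ| = 0 := le_antisymm (not_lt.1 hc) (abs_nonneg _)
      rw [this, mul_zero] at hx
      have : 0 < 2 / θ := by positivity
      linarith
    have hξ : 2 * (lam / 2 ^ q) ≤ |ξ| := by
      have : l q * (2 * (lam / 2 ^ q)) ≤ l q * |ξ| := by
        calc l q * (2 * (lam / 2 ^ q)) = 2 * ((lam / 2 ^ q) * l q) := by ring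
          _ ≤ 2 * (1 / θ) := by gcongr
          _ = 2 / θ := by ring
          _ ≤ _ := hx
      exact le_of_mul_le_mul_left this hl
    refine (H_tail h q hlam hξ).trans ?_
    have h1 : 1 / |ξ| ≤ (1 + θ) * w (l q) ξ := by
      unfold w
      rw [← mul_div_assoc, div_le_div_iff₀ hξ0 (by positivity)]
      have : 1 ≤ θ * (l q * |ξ|) := by
        have := mul_le_mul_of_nonneg_left hx hθ.le
        rw [mul_div_cancel₀ _ hθ.ne'] at this
        linarith
      linarith
    have h2 : 1 / ξ ^ 2 ≤ (1 + θ) ^ 2 * w (l q) ξ ^ 2 := by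
      rw [← mul_pow, ← sq_abs, ← one_div_pow]; gcongr
    calc 32 * (lam / 2 ^ q) / ξ ^ 2 = 32 * (lam / 2 ^ q) * (1 / ξ ^ 2) := by ring
      _ ≤ 32 * (lam / 2 ^ q) * ((1 + θ) ^ 2 * w (l q) ξ ^ 2) := by gcongr
      _ = (32 * 1 * (1 + θ) ^ 2) * ((lam / 2 ^ q) * w (l q) ξ ^ 2) := by ring
      _ ≤ _ := by gcongr

/-- sum of squares-type bound -/
lemma sum_w2 {p D : ℝ} (hp1 : 1 ≤ p) (hp2 : p ≤ 2) 
    (hD : ∀ g : ℝ, 0 < g → g ≤ 1 → ∀ ξ : ℝ,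
      ∑' k : ℤ, ENNReal.ofReal (w g (k - ξ)) ^ (2 * p) ≤ ENNReal.ofReal (D * g ^ (2 * p - 1)))
    {c r g : ℝ} (hc : 1 ≤ c) (hr : 0 < r) (hg : 0 < g) (hg1 : g ≤ 1) (ξ : ℝ) :
    ∑' k : ℤ, ENNReal.ofReal (c * (r * w g (k - ξ) ^ 2)) ^ p ≤
      ENNReal.ofReal (c ^ 2 * D * (r ^ p * g ^ (2 * p - 1))) := by
  calc _ ≤ ∑' k : ℤ, ENNReal.ofReal (c ^ 2) * (ENNReal.ofReal (r ^ p) * ENNReal.ofReal (w g (k - ξ)) ^ (2 * p)) := by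
        apply ENNReal.tsum_le_tsum
        intro k
        refine (ofReal_pow_const hp1 hp2 hc _).trans (le_of_eq ?_)
        rw [ENNReal.ofReal_mul hr.le, ENNReal.mul_rpow_of_nonneg _ _ (by linarith),
          ENNReal.ofReal_rpow_of_pos hr, ENNReal.ofReal_pow (w_nonneg hg.le _), ENNReal.rpow_mul,
          ENNReal.rpow_two]
    _ = ENNReal.ofReal (c ^ 2) * (ENNReal.ofReal (r ^ p) * ∑' k : ℤ, ENNReal.ofReal (w g (k - ξ)) ^ (2 * p)) := by
        rw [ENNReal.tsum_mul_left, ENNReal.tsum_mul_left]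
    _ ≤ ENNReal.ofReal (c ^ 2) * (ENNReal.ofReal (r ^ p) * ENNReal.ofReal (D * g ^ (2 * p - 1))) := by
        gcongr; exact hD g hg hg1 ξ
    _ = _ := by
        rw [← ENNReal.ofReal_mul (by positivity), ← ENNReal.ofReal_mul (by positivity)]
        congr 1; ring

lemma block_far {p D : ℝ} (hp1 : 1 ≤ p) (hp2 : p ≤ 2) (hD0 : 0 < D)
    (hD : ∀ g : ℝ, 0 < g → g ≤ 1 → ∀ ξ : ℝ,
      ∑' k : ℤ, ENNReal.ofReal (w g (k - ξ)) ^ (2 * p) ≤ ENNReal.ofReal (D * g ^ (2 * p - 1)))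
    {θ : ℝ} (hθ : 0 < θ) (h : Scale l) {lam : ℝ} (hlam : 0 < lam) {N q : ℕ} (hNq : N ≤ q)
    (hN : lam * θ * (l N / 2 ^ N) ≤ 1) (ξ : ℝ) :
    ∑' k : ℤ, ENNReal.ofReal ‖H l q lam (k - ξ)‖ ^ p ≤
      ENNReal.ofReal ((32 * (1 + 2 / θ) ^ 2 * (1 + θ) ^ 2) ^ 2 * D * (1 / θ) ^ (2 * p - 1) *
       ((lam / 2 ^ q) * (2 ^ N / lam) ^ p)) := by
  obtain ⟨d, rfl⟩ := Nat.exists_eq_add_of_le hNq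
  have hl := h.pos (N + d)
  set q := N + d with hq
  set c := 32 * (1 + 2 / θ) ^ 2 * (1 + θ) ^ 2
  have hA : 1 ≤ (1 + 2 / θ) ^ 2 := one_le_pow₀ (by have : 0 < 2 / θ := by positivity
                                                   linarith)
  have hB : 1 ≤ (1 + θ) ^ 2 := one_le_pow₀ (by linarith)
  have hc : 1 ≤ c := by
    calc (1:ℝ) = 1 * 1 * 1 := by norm_num
      _ ≤ c := by simp only [c]; gcongr; norm_num
  set x := (lam / 2 ^ q) * l q with hx
  have hx0 : 0 < x := by positivity
  set e : ℝ := (1 / 2) ^ d with he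
  have he0 : 0 < e := by positivity
  have he1 : e ≤ 1 := pow_le_one₀ (by norm_num) (by norm_num)
  have hxe : x ≤ 1 / θ * e ^ 2 := by
    have h1 := h.geom N d
    calc x ≤ (lam / 2 ^ q) * (l N / 2 ^ d) := by rw [hx]; gcongr
      _ = 1 / θ * e ^ 2 * (lam * θ * (l N / 2 ^ N)) := by
        rw [he, hq, pow_add, one_div_pow]; field_simp
      _ ≤ 1 / θ * e ^ 2 * 1 := by gcongr
      _ = _ := mul_one _
  have hqle : lam * θ * (l q / 2 ^ q) ≤ 1 := by
    calc lam * θ * (l q / 2 ^ q) = x * θ := by rw [hx]; ring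
      _ ≤ 1 / θ * e ^ 2 * θ := by gcongr
      _ = e ^ 2 := by field_simp
      _ ≤ 1 := pow_le_one₀ he0.le he1
  have hr : 0 < lam / 2 ^ q := by positivity
  calc _ ≤ ∑' k : ℤ, ENNReal.ofReal (c * ((lam / 2 ^ q) * w (l q) (k - ξ) ^ 2)) ^ p := by
        apply ENNReal.tsum_le_tsum
        intro k
        apply ENNReal.rpow_le_rpow _ (by linarith)
        exact ENNReal.ofReal_le_ofReal (H_far h q hlam hθ hqle _)
    _ ≤ _ := sum_w2 hp1 hp2 hD hc hr hl (h.le_one' q) ξ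
    _ ≤ _ := by
      apply ENNReal.ofReal_le_ofReal
      rw [mul_assoc (c ^ 2 * D)]
      refine mul_le_mul_of_nonneg_left ?_ (by positivity)
      set r := lam / 2 ^ q with hrdef
      have e1 : l q = x / r := by rw [hx]; field_simp
      have e2 : 2 ^ N / lam = e / r := by
        rw [hrdef, he, hq, pow_add, one_div_pow]; field_simp
      rw [e1, e2, Real.div_rpow hx0.le hr.le, Real.div_rpow he0.le hr.le]
      have e3 : r ^ (2 * p - 1) = r ^ p * r ^ p / r := by
        rw [← Real.rpow_add hr, Real.rpow_sub hr, Real.rpow_one]; ring_nf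
      rw [e3]
      have e4 : x ^ (2 * p - 1) ≤ (1 / θ) ^ (2 * p - 1) * e ^ p := by
        calc x ^ (2 * p - 1) ≤ (1 / θ * e ^ 2) ^ (2 * p - 1) :=
              Real.rpow_le_rpow hx0.le hxe (by linarith)
          _ = (1 / θ) ^ (2 * p - 1) * e ^ (2 * (2 * p - 1)) := by
              rw [Real.mul_rpow (by positivity) (by positivity), ← Real.rpow_natCast e 2,
                ← Real.rpow_mul he0.le]; norm_num
          _ ≤ _ := by
              refine mul_le_mul_of_nonneg_left ?_ (by positivity)
              exact Real.rpow_le_rpow_of_exponent_ge he0 he1 (by linarith)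
      have hrp : 0 < r ^ p := Real.rpow_pos_of_pos hr p
      calc r ^ p * (x ^ (2 * p - 1) / (r ^ p * r ^ p / r)) = x ^ (2 * p - 1) * (r / r ^ p) := by
            field_simp
        _ ≤ ((1 / θ) ^ (2 * p - 1) * e ^ p) * (r / r ^ p) := by gcongr
        _ = _ := by ring

/-- gap sums -/
noncomputable def X (l : ℕ → ℝ) (q N : ℕ) (lam p ξ : ℝ) : ℝ≥0∞ :=
  ∑ j ∈ Finset.range (2 ^ (N - q)), if j = 0 then 0 else
    if |ξ - lam * (j / 2 ^ N)| ≤ lam / 2 ^ N then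
      ENNReal.ofReal (w (gap l N j) (ξ - lam * (j / 2 ^ N))) ^ p else 0

lemma le_X {q N : ℕ} {lam p ξ : ℝ} (hp : 0 < p) (k : ℤ) (hk : |ξ - lam * (k / 2 ^ N)| ≤ lam / 2 ^ N) :
    ENNReal.ofReal (if k ∈ Finset.Ioo (0:ℤ) (2 ^ (N - q)) then w (gap l N k) (ξ - lam * (k / 2 ^ N)) else 0) ^ p
      ≤ X l q N lam p ξ := by
  split_ifs with h1
  · rw [Finset.mem_Ioo] at h1
    obtain ⟨j, rfl⟩ := Int.eq_ofNat_of_zero_le h1.1.le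
    have hj : j ∈ Finset.range (2 ^ (N - q)) := by
      rw [Finset.mem_range]; exact_mod_cast h1.2
    have hj0 : j ≠ 0 := by have := h1.1; omega
    simp only [Int.cast_natCast] at hk ⊢
    have := Finset.single_le_sum (f := fun j : ℕ => if j = 0 then (0:ℝ≥0∞) else
      if |ξ - lam * (j / 2 ^ N)| ≤ lam / 2 ^ N then
      ENNReal.ofReal (w (gap l N j) (ξ - lam * (j / 2 ^ N))) ^ p else 0) (fun _ _ => bot_le) hj
    simp only [hj0, hk, if_true, if_false] at this
    exact this
  · simp [hp]

lemma K_pow {p : ℝ} (hp1 : 1 ≤ p) (hp2 : p ≤ 2) {θ : ℝ} (hθ : 0 < θ) (h : Scale l) {lam : ℝ} (hlam : 0 < lam)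
    {N q : ℕ} (hqN : q ≤ N) (hN : lam * θ * (l N / 2 ^ N) ≤ 1) (ξ : ℝ) :
    ENNReal.ofReal ‖K l q lam ξ‖ ^ p ≤ ENNReal.ofReal (4 * (8 + 3 / θ) ^ 2 + 200) *
      (ENNReal.ofReal (2 ^ N / lam) ^ p + X l q N lam p ξ) := by
  obtain ⟨k, h1, h2, h3⟩ := K_central h hqN hlam ξ
  set B1 := (if k ∈ Finset.Ioo (0:ℤ) (2 ^ (N - q)) then w (gap l N k) (ξ - lam * (k / 2 ^ N)) else 0) with hB1
  set B2 := (if k + 1 ∈ Finset.Ioo (0:ℤ) (2 ^ (N - q)) then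
          w (gap l N (k + 1)) (ξ - lam * ((k + 1 : ℤ) / 2 ^ N)) else 0) with hB2
  have x1 := le_X (l := l) (q := q) (by linarith : 0 < p) k h1
  have x2 := le_X (l := l) (q := q) (by linarith : 0 < p) (k + 1) h2
  rw [← hB1] at x1
  rw [← hB2] at x2
  have h4 : 3 * l N ≤ 3 / θ * (2 ^ N / lam) := by
    have : l N ≤ 1 / θ * (2 ^ N / lam) := by
      calc l N = 1 / θ * (2 ^ N / lam) * (lam * θ * (l N / 2 ^ N)) := by field_simp
        _ ≤ 1 / θ * (2 ^ N / lam) * 1 := by gcongr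
        _ = _ := mul_one _
    calc 3 * l N ≤ 3 * (1 / θ * (2 ^ N / lam)) := by gcongr
      _ = _ := by ring
  have h5 : ‖K l q lam ξ‖ ≤ (8 + 3 / θ) * (2 ^ N / lam) + 5 * B1 + 5 * B2 := by linarith
  set Xx := X l q N lam p ξ
  set A := ENNReal.ofReal (2 ^ N / lam) ^ p
  have h3θ : 0 < 3 / θ := by positivity
  calc _ ≤ (ENNReal.ofReal ((8 + 3 / θ) * (2 ^ N / lam)) + ENNReal.ofReal (5 * B1) + ENNReal.ofReal (5 * B2)) ^ p := by
        apply ENNReal.rpow_le_rpow _ (by linarith)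
        refine (ENNReal.ofReal_le_ofReal h5).trans ?_
        refine ENNReal.ofReal_add_le.trans ?_
        gcongr
        exact ENNReal.ofReal_add_le
    _ ≤ 2 * (2 * (ENNReal.ofReal ((8 + 3 / θ) ^ 2) * A + ENNReal.ofReal (5 ^ 2) * Xx) + ENNReal.ofReal (5 ^ 2) * Xx) := by
        refine (pow_add_le hp1 hp2 _ _).trans ?_
        gcongr
        · refine (pow_add_le hp1 hp2 _ _).trans ?_
          gcongr
          · exact ofReal_pow_const hp1 hp2 (by linarith) _
          · exact (ofReal_pow_const hp1 hp2 (by norm_num) _).trans (by gcongr)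
        · exact (ofReal_pow_const hp1 hp2 (by norm_num) _).trans (by gcongr)
    _ ≤ _ := by
        have e1 : ENNReal.ofReal (4 * (8 + 3 / θ) ^ 2 + 200) = 4 * ENNReal.ofReal ((8 + 3 / θ) ^ 2) + 200 := by
          rw [ENNReal.ofReal_add (by positivity) (by norm_num), ENNReal.ofReal_mul (by norm_num)]
          norm_num
        have e2 : ENNReal.ofReal (5 ^ 2) = 25 := by norm_num
        rw [e1, e2]
        set Y := ENNReal.ofReal ((8 + 3 / θ) ^ 2)
        calc 2 * (2 * (Y * A + 25 * Xx) + 25 * Xx) = 4 * Y * A + 150 * Xx := by ring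
          _ ≤ (4 * Y + 200) * A + (4 * Y + 200) * Xx := by
            gcongr
            · exact le_self_add
            · exact le_add_left (by norm_num)
          _ = _ := by ring

lemma X_sum {p : ℝ} (hp1 : 1 ≤ p) (h : Scale l) {lam : ℝ} 
    {N q : ℕ} (hqN : q ≤ N) (Λ : ℕ → ℝ≥0∞)
    (hΛ : ∀ m < N, ∀ ξ : ℝ, ∑' k : ℤ, (if |(k:ℝ) - ξ| ≤ lam / 2 ^ N then
      ENNReal.ofReal (w (l m) (k - ξ)) ^ p else 0) ≤ Λ m) (ξ : ℝ) :
    ∑' k : ℤ, X l q N lam p (k - ξ) ≤ ENNReal.ofReal (1 / 2 ^ q) * ∑ m ∈ Finset.range N, 2 ^ m * Λ m ∧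
    ∑' k : ℤ, X l q N lam p (-(k - ξ)) ≤ ENNReal.ofReal (1 / 2 ^ q) * ∑ m ∈ Finset.range N, 2 ^ m * Λ m := by
  set R := lam / 2 ^ N
  set f : ℝ → ℝ≥0∞ := fun g => ⨆ ξ : ℝ, ∑' k : ℤ, (if |(k:ℝ) - ξ| ≤ R then
      ENNReal.ofReal (w g (k - ξ)) ^ p else 0) with hf
  have hle : ∀ (g ξ : ℝ), ∑' k : ℤ, (if |(k:ℝ) - ξ| ≤ R then
      ENNReal.ofReal (w g (k - ξ)) ^ p else 0) ≤ f g := fun g ξ => le_iSup (fun ξ : ℝ => ∑' k : ℤ, (if |(k:ℝ) - ξ| ≤ R then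
      ENNReal.ofReal (w g (k - ξ)) ^ p else 0)) ξ
  have hfm : ∀ m < N, ∀ g, 0 ≤ g → g ≤ l m → f g ≤ Λ m := by
    intro m hm g hg0 hg
    apply iSup_le
    intro ξ
    refine le_trans (ENNReal.tsum_le_tsum fun k => ?_) (hΛ m hm ξ)
    split_ifs
    · apply ENNReal.rpow_le_rpow _ (by linarith)
      exact ENNReal.ofReal_le_ofReal (w_mono hg0 hg _)
    · exact le_rfl
  have hfin : ∑ j ∈ Finset.range (2 ^ (N - q)), (if j = 0 then 0 else f (gap l N (j : ℤ))) ≤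
      ENNReal.ofReal (1 / 2 ^ q) * ∑ m ∈ Finset.range N, 2 ^ m * Λ m := by
    have := gap_sum (l := l) f q (N - q)
    rw [Nat.add_sub_cancel' hqN] at this
    rw [this]
    have e1 : ENNReal.ofReal (1 / 2 ^ q) * ENNReal.ofReal (2 ^ q) = 1 := by
      rw [← ENNReal.ofReal_mul (by positivity), one_div, inv_mul_cancel₀ (by positivity), ENNReal.ofReal_one]
    have e2 : ENNReal.ofReal (2 ^ q) = 2 ^ q := by
      rw [ENNReal.ofReal_pow (by norm_num)]; norm_num
    calc _ ≤ ∑ i ∈ Finset.range (N - q), 2 ^ i * Λ (q + i) := by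
          apply Finset.sum_le_sum
          intro i hi
          rw [Finset.mem_range] at hi
          gcongr
          have := h.half (q + i)
          have := h.pos (q + i + 1)
          exact hfm _ (by omega) _ (by linarith) (by linarith)
      _ = ENNReal.ofReal (1 / 2 ^ q) * ∑ i ∈ Finset.range (N - q), 2 ^ (q + i) * Λ (q + i) := by
          simp_rw [pow_add, mul_assoc]
          rw [← Finset.mul_sum, ← mul_assoc, ← e2, e1, one_mul]
      _ ≤ _ := by
          gcongr
          have := Finset.sum_Ico_eq_sum_range (fun m => 2 ^ m * Λ m) q N
          rw [← this]
          apply Finset.sum_le_sum_of_subset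
          intro m hm
          rw [Finset.mem_Ico] at hm
          exact Finset.mem_range.2 hm.2
  constructor
  · refine le_trans ?_ hfin
    unfold X
    rw [Summable.tsum_finsetSum (fun _ _ => ENNReal.summable)]
    apply Finset.sum_le_sum
    intro j _
    by_cases hj : j = 0
    · simp [hj]
    · simp only [hj, if_false]
      have := hle (gap l N j) (ξ + lam * (j / 2 ^ N))
      simp only [← sub_sub] at this
      exact this
  · refine le_trans ?_ hfin
    unfold X
    rw [Summable.tsum_finsetSum (fun _ _ => ENNReal.summable)]
    apply Finset.sum_le_sum
    intro j _
    by_cases hj : j = 0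
    · simp [hj]
    · simp only [hj, if_false]
      have := hle (gap l N j) (ξ - lam * (j / 2 ^ N))
      refine le_trans (le_of_eq ?_) this
      apply tsum_congr
      intro k
      have e1 : -((k:ℝ) - ξ) - lam * (j / 2 ^ N) = -(k - (ξ - lam * (j / 2 ^ N))) := by ring
      rw [e1, abs_neg]
      unfold w
      rw [abs_neg]

end
end CB

open MeasureTheory Real Set
open scoped ENNReal

namespace CB
section
variable {l : ℕ → ℝ}

lemma w_le_inv {g ξ : ℝ} (hg : 0 < g) (hξ : 0 < |ξ|) : w g ξ ≤ 1 / |ξ| := by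
  unfold w
  rw [div_le_div_iff₀ (by positivity) hξ]
  linarith

lemma H_pow {p : ℝ} (hp1 : 1 ≤ p) (hp2 : p ≤ 2) {θ : ℝ} (hθ : 0 < θ) (h : Scale l) {lam : ℝ} (hlam : 0 < lam)
    {N q : ℕ} (hqN : q ≤ N) (hN : lam * θ * (l N / 2 ^ N) ≤ 1) (ξ : ℝ) {c : ℝ≥0∞}
    (hc : c = 2000 * ENNReal.ofReal (4 * (8 + 3 / θ) ^ 2 + 200)) :
    ENNReal.ofReal ‖H l q lam ξ‖ ^ p ≤ c * ((if |ξ| ≤ 2 * (lam / 2 ^ q) then 1 else 0) *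
        ENNReal.ofReal (2 ^ N / lam) ^ p) + c * X l q N lam p ξ + c * X l q N lam p (-ξ) +
      c * (if |ξ| ≤ lam / 2 ^ N then ENNReal.ofReal (w (l q) ξ) ^ p else 0) +
      ENNReal.ofReal (72 * (lam / 2 ^ q * w (1 / (lam / 2 ^ q)) ξ ^ 2)) ^ p := by
  set cK := ENNReal.ofReal (4 * (8 + 3 / θ) ^ 2 + 200) with hcK
  have hcK1 : 1 ≤ cK := by
    rw [hcK, ENNReal.one_le_ofReal]
    have : 0 ≤ 4 * (8 + 3 / θ) ^ 2 := by positivity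
    linarith
  set r := lam / 2 ^ q with hr
  have hr0 : 0 < r := by positivity
  have hp0 : 0 ≤ p := by linarith
  set A := ENNReal.ofReal (2 ^ N / lam) ^ p with hA
  by_cases hξ : |ξ| ≤ 2 * r
  · refine le_trans ?_ (le_self_add)
    simp only [hξ, if_true, one_mul]
    have k1 := K_pow hp1 hp2 hθ h hlam hqN hN ξ
    have k2 := K_pow hp1 hp2 hθ h hlam hqN hN (-ξ)
    rw [← hcK, ← hA] at k1 k2
    have hw : ENNReal.ofReal (w (l q) ξ) ^ p ≤ A +
        (if |ξ| ≤ lam / 2 ^ N then ENNReal.ofReal (w (l q) ξ) ^ p else 0) := by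
      split_ifs with h1
      · exact le_add_self
      · push Not at h1
        rw [add_zero]
        apply ENNReal.rpow_le_rpow _ hp0
        apply ENNReal.ofReal_le_ofReal
        have h2 : 0 < lam / 2 ^ N := by positivity
        refine (w_le_inv (h.pos q) (h2.trans h1)).trans ?_
        calc 1 / |ξ| ≤ 1 / (lam / 2 ^ N) := by gcongr
          _ = _ := one_div_div _ _
    set W := (if |ξ| ≤ lam / 2 ^ N then ENNReal.ofReal (w (l q) ξ) ^ p else 0)
    calc _ ≤ (ENNReal.ofReal (2 * ‖K l q lam ξ‖) + ENNReal.ofReal (2 * ‖K l q lam (-ξ)‖) +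
          ENNReal.ofReal (20 * w (l q) ξ)) ^ p := by
          apply ENNReal.rpow_le_rpow _ hp0
          refine (ENNReal.ofReal_le_ofReal (H_central h q lam ξ)).trans ?_
          refine ENNReal.ofReal_add_le.trans ?_
          gcongr
          exact ENNReal.ofReal_add_le
      _ ≤ 2 * (2 * (ENNReal.ofReal (2 ^ 2) * (cK * (A + X l q N lam p ξ)) +
            ENNReal.ofReal (2 ^ 2) * (cK * (A + X l q N lam p (-ξ)))) +
            ENNReal.ofReal (20 ^ 2) * (A + W)) := by
          refine (pow_add_le hp1 hp2 _ _).trans ?_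
          gcongr
          · refine (pow_add_le hp1 hp2 _ _).trans ?_
            gcongr
            · exact (ofReal_pow_const hp1 hp2 (by norm_num) _).trans (by gcongr)
            · exact (ofReal_pow_const hp1 hp2 (by norm_num) _).trans (by gcongr)
          · exact (ofReal_pow_const hp1 hp2 (by norm_num) _).trans (by gcongr)
      _ ≤ 2 * (2 * (4 * (cK * (A + X l q N lam p ξ)) +
            4 * (cK * (A + X l q N lam p (-ξ)))) +
            400 * (cK * (A + W))) := by
          have e1 : ENNReal.ofReal (2 ^ 2) = 4 := by norm_num
          have e2 : ENNReal.ofReal (20 ^ 2) = 400 := by norm_num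
          rw [e1, e2]
          gcongr
          exact le_mul_of_one_le_left bot_le hcK1
      _ = 832 * cK * A + 16 * cK * X l q N lam p ξ + 16 * cK * X l q N lam p (-ξ) + 800 * cK * W := by ring
      _ ≤ _ := by
          rw [hc]
          gcongr <;> norm_num
  · push Not at hξ
    refine le_trans ?_ le_add_self
    apply ENNReal.rpow_le_rpow _ hp0
    apply ENNReal.ofReal_le_ofReal
    refine (H_tail h q hlam hξ.le).trans ?_
    have hξ0 : 0 < |ξ| := by linarith
    have h1 : 1 / |ξ| ≤ 3 / 2 * w (1 / r) ξ := by
      unfold w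
      rw [show 1 / r / (1 + 1 / r * |ξ|) = 1 / (r + |ξ|) by field_simp, mul_one_div,
        div_le_div_iff₀ hξ0 (by positivity)]
      linarith
    have h2 : 1 / ξ ^ 2 ≤ (3 / 2 * w (1 / r) ξ) ^ 2 := by
      rw [← sq_abs, ← one_div_pow]; gcongr
    calc 32 * r / ξ ^ 2 = 32 * r * (1 / ξ ^ 2) := by ring
      _ ≤ 32 * r * (3 / 2 * w (1 / r) ξ) ^ 2 := by gcongr
      _ = _ := by ring

lemma block_near {p D : ℝ} (hp1 : 1 ≤ p) (hp2 : p ≤ 2) (hD0 : 0 < D)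
    (hD : ∀ g : ℝ, 0 < g → g ≤ 1 → ∀ ξ : ℝ,
      ∑' k : ℤ, ENNReal.ofReal (w g (k - ξ)) ^ (2 * p) ≤ ENNReal.ofReal (D * g ^ (2 * p - 1)))
    {θ : ℝ} (hθ : 0 < θ) (h : Scale l) {lam : ℝ} (hlam : 0 < lam) {N q : ℕ} (hqN : q < N)
    (hN : lam * θ * (l N / 2 ^ N) ≤ 1) (hN2 : 1 ≤ lam / 2 ^ q) (Λ : ℕ → ℝ≥0∞)
    (hΛ : ∀ m < N, ∀ ξ : ℝ, ∑' k : ℤ, (if |(k:ℝ) - ξ| ≤ lam / 2 ^ N then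
      ENNReal.ofReal (w (l m) (k - ξ)) ^ p else 0) ≤ Λ m) (ξ : ℝ) {c : ℝ≥0∞}
    (hc : c = 2000 * ENNReal.ofReal (4 * (8 + 3 / θ) ^ 2 + 200)) :
    ∑' k : ℤ, ENNReal.ofReal ‖H l q lam (k - ξ)‖ ^ p ≤
      (6 * c + ENNReal.ofReal (72 ^ 2 * D)) * (ENNReal.ofReal ((lam / 2 ^ q) * (2 ^ N / lam) ^ p) +
       ENNReal.ofReal (1 / 2 ^ q) * ∑ m ∈ Finset.range N, 2 ^ m * Λ m) := by
  set S := ENNReal.ofReal (1 / 2 ^ q) * ∑ m ∈ Finset.range N, 2 ^ m * Λ m with hS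
  set r := lam / 2 ^ q with hr
  have hr0 : 0 < r := by positivity
  have hp0 : 0 < p := by linarith
  set a := 2 ^ N / lam with ha
  have ha0 : 0 < a := by positivity
  obtain ⟨x1, x2⟩ := X_sum hp1 h hqN.le Λ hΛ ξ
  have y1 : ∑' k : ℤ, (if |(k:ℝ) - ξ| ≤ 2 * r then 1 else 0) * ENNReal.ofReal a ^ p ≤
      6 * ENNReal.ofReal (r * a ^ p) := by
    rw [ENNReal.tsum_mul_right, ENNReal.ofReal_mul hr0.le, ENNReal.ofReal_rpow_of_pos ha0, ← mul_assoc]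
    gcongr
    refine (count_sum (2 * r) ξ (by positivity)).trans ?_
    rw [show (6:ℝ≥0∞) = ENNReal.ofReal 6 by norm_num, ← ENNReal.ofReal_mul (by norm_num)]
    apply ENNReal.ofReal_le_ofReal; linarith
  have y2 : ∑' k : ℤ, (if |(k:ℝ) - ξ| ≤ lam / 2 ^ N then ENNReal.ofReal (w (l q) (k - ξ)) ^ p else 0) ≤ S := by
    refine (hΛ q hqN ξ).trans ?_
    rw [hS]
    have e1 : ENNReal.ofReal (1 / 2 ^ q) * ENNReal.ofReal (2 ^ q) = 1 := by
      rw [← ENNReal.ofReal_mul (by positivity), one_div, inv_mul_cancel₀ (by positivity), ENNReal.ofReal_one]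
    have e2 : ENNReal.ofReal (2 ^ q) = 2 ^ q := by
      rw [ENNReal.ofReal_pow (by norm_num)]; norm_num
    calc Λ q = ENNReal.ofReal (1 / 2 ^ q) * (2 ^ q * Λ q) := by rw [← mul_assoc, ← e2, e1, one_mul]
      _ ≤ _ := by
        gcongr
        exact Finset.single_le_sum (f := fun m => 2 ^ m * Λ m) (fun _ _ => bot_le) (Finset.mem_range.2 hqN)
  have y3 : ∑' k : ℤ, ENNReal.ofReal (72 * (r * w (1 / r) (k - ξ) ^ 2)) ^ p ≤
      ENNReal.ofReal (72 ^ 2 * D) * ENNReal.ofReal (r * a ^ p) := by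
    refine (sum_w2 hp1 hp2 hD (by norm_num) hr0 (by positivity) (by
      rw [div_le_one hr0]; exact hN2) ξ).trans ?_
    rw [← ENNReal.ofReal_mul (by positivity)]
    apply ENNReal.ofReal_le_ofReal
    refine mul_le_mul_of_nonneg_left ?_ (by positivity)
    have hra : 1 / r ≤ a := by
      rw [hr, one_div_div, ha]
      gcongr
      · norm_num
    have hrp : 0 < r ^ p := Real.rpow_pos_of_pos hr0 p
    have e3 : (1 / r) ^ (2 * p - 1) = (1 / r) ^ p * (1 / r) ^ p / (1 / r) := by
      rw [← Real.rpow_add (by positivity), Real.rpow_sub (by positivity), Real.rpow_one]; ring_nf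
    have e4 : (1 / r) ^ p = 1 / r ^ p := by rw [Real.div_rpow (by norm_num) hr0.le, Real.one_rpow]
    calc r ^ p * (1 / r) ^ (2 * p - 1) = r * (1 / r) ^ p := by
          rw [e3, e4]; field_simp
      _ ≤ r * a ^ p := by gcongr
  calc _ ≤ ∑' k : ℤ, _ := ENNReal.tsum_le_tsum fun k => H_pow hp1 hp2 hθ h hlam hqN.le hN _ hc
    _ = c * (∑' k : ℤ, (if |(k:ℝ) - ξ| ≤ 2 * r then 1 else 0) * ENNReal.ofReal a ^ p) +
        c * (∑' k : ℤ, X l q N lam p (k - ξ)) + c * (∑' k : ℤ, X l q N lam p (-(k - ξ))) +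
        c * (∑' k : ℤ, (if |(k:ℝ) - ξ| ≤ lam / 2 ^ N then ENNReal.ofReal (w (l q) (k - ξ)) ^ p else 0)) +
        ∑' k : ℤ, ENNReal.ofReal (72 * (r * w (1 / r) (k - ξ) ^ 2)) ^ p := by
        rw [ENNReal.tsum_add, ENNReal.tsum_add, ENNReal.tsum_add, ENNReal.tsum_add,
          ENNReal.tsum_mul_left, ENNReal.tsum_mul_left, ENNReal.tsum_mul_left, ENNReal.tsum_mul_left]
    _ ≤ c * (6 * ENNReal.ofReal (r * a ^ p)) + c * S + c * S + c * S +
        ENNReal.ofReal (72 ^ 2 * D) * ENNReal.ofReal (r * a ^ p) := by gcongr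
    _ = (6 * c + ENNReal.ofReal (72 ^ 2 * D)) * ENNReal.ofReal (r * a ^ p) + 3 * c * S := by ring
    _ ≤ (6 * c + ENNReal.ofReal (72 ^ 2 * D)) * ENNReal.ofReal (r * a ^ p) +
        (6 * c + ENNReal.ofReal (72 ^ 2 * D)) * S := by
        gcongr
        refine le_trans ?_ le_self_add
        gcongr
        norm_num
    _ = _ := by ring

/-- the main block estimate -/
theorem block_sum {p θ : ℝ} (hp1 : 1 ≤ p) (hp2 : p ≤ 2) (hθ : 0 < θ) :
    ∃ C : ℝ, 0 < C ∧ ∀ (l : ℕ → ℝ), Scale l → ∀ (lam : ℝ) (N : ℕ), 0 < lam →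
    lam * θ * (l N / 2 ^ N) ≤ 1 → (∀ q < N, 1 ≤ lam / 2 ^ q) → ∀ Λ : ℕ → ℝ≥0∞,
    (∀ m < N, ∀ ξ : ℝ, ∑' k : ℤ, (if |(k:ℝ) - ξ| ≤ lam / 2 ^ N then
      ENNReal.ofReal (w (l m) (k - ξ)) ^ p else 0) ≤ Λ m) → ∀ (q : ℕ) (ξ : ℝ),
    ∑' k : ℤ, ENNReal.ofReal ‖H l q lam (k - ξ)‖ ^ p ≤
      ENNReal.ofReal C * ENNReal.ofReal (1 / 2 ^ q) * (ENNReal.ofReal (lam * (2 ^ N / lam) ^ p) +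
       ∑ m ∈ Finset.range N, 2 ^ m * Λ m) := by
  obtain ⟨D, hD0, hD⟩ := w_pow_sum (s := 2 * p) (by linarith)
  set C1 := 6 * (2000 * (4 * (8 + 3 / θ) ^ 2 + 200)) + 72 ^ 2 * D with hC1
  set C2 := (32 * (1 + 2 / θ) ^ 2 * (1 + θ) ^ 2) ^ 2 * D * (1 / θ) ^ (2 * p - 1) with hC2
  have hC1p : 0 < C1 := by positivity
  have hC2p : 0 < C2 := by positivity
  refine ⟨C1 + C2, by positivity, ?_⟩
  intro l h lam N hlam hN hN2 Λ hΛ q ξ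
  have e1 : ENNReal.ofReal ((lam / 2 ^ q) * (2 ^ N / lam) ^ p) =
      ENNReal.ofReal (1 / 2 ^ q) * ENNReal.ofReal (lam * (2 ^ N / lam) ^ p) := by
    rw [← ENNReal.ofReal_mul (by positivity)]; congr 1; ring
  rcases lt_or_ge q N with hq | hq
  · refine (block_near hp1 hp2 hD0 hD hθ h hlam hq hN (hN2 q hq) Λ hΛ ξ rfl).trans ?_
    rw [e1, ← mul_add, mul_assoc]
    gcongr
    calc _ = ENNReal.ofReal C1 := by
          rw [hC1, ENNReal.ofReal_add (p := 6 * (2000 * (4 * (8 + 3 / θ) ^ 2 + 200)))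
            (by positivity) (by positivity), ENNReal.ofReal_mul (p := 6) (by norm_num),
            ENNReal.ofReal_mul (p := 2000) (by norm_num)]
          norm_num
      _ ≤ _ := ENNReal.ofReal_le_ofReal (by linarith)
  · refine (block_far hp1 hp2 hD0 hD hθ h hlam hq hN ξ).trans ?_
    rw [← hC2, ENNReal.ofReal_mul hC2p.le, e1, mul_assoc]
    gcongr
    · linarith
    · exact le_self_add

end
end CB

open MeasureTheory Real Set
open scoped ENNReal
namespace CB
section

structure Md (ω χi : ℝ → ℝ) : Prop where
  cont : ContinuousOn ω (Ici 0)
  mono : MonotoneOn ω (Ici 0)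
  zero : ω 0 = 0
  pos : ∀ δ : ℝ, 0 < δ → 0 < ω δ
  smono : StrictMonoOn (fun δ => δ * ω δ) (Ici 0)
  left : ∀ δ : ℝ, 0 ≤ δ → χi (δ * ω δ) = δ
  right : ∀ y : ℝ, 0 ≤ y → 0 ≤ χi y ∧ χi y * ω (χi y) = y

variable {ω χi : ℝ → ℝ}

lemma Md.nonneg (h : Md ω χi) {d : ℝ} (hd : 0 ≤ d) : 0 ≤ ω d := by
  rcases hd.eq_or_lt with rfl | hd
  · rw [h.zero]
  · exact (h.pos d hd).le

lemma Md.le (h : Md ω χi) {a b : ℝ} (ha : 0 ≤ a) (hab : a ≤ b) : ω a ≤ ω b :=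
  h.mono ha (ha.trans hab) hab

lemma Md.lt_of (h : Md ω χi) {a b : ℝ} (hb : 0 ≤ b) (hab : ω a < ω b) : a < b := by
  by_contra hc
  exact absurd (h.le hb (not_lt.1 hc)) (not_le.2 hab)

lemma Md.inv_pos (h : Md ω χi) {y : ℝ} (hy : 0 < y) : 0 < χi y := by
  obtain ⟨h1, h2⟩ := h.right y hy.le
  rcases h1.eq_or_lt with h0 | h0
  · rw [← h0, zero_mul] at h2; linarith
  · exact h0

lemma Md.inv_mono (h : Md ω χi) {y z : ℝ} (hy : 0 ≤ y) (hyz : y ≤ z) : χi y ≤ χi z := by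
  obtain ⟨h1, h2⟩ := h.right y hy
  obtain ⟨h3, h4⟩ := h.right z (hy.trans hyz)
  by_contra hc
  have := h.smono h3 h1 (not_le.1 hc)
  simp only at this
  linarith

lemma Md.inv_le (h : Md ω χi) {y d : ℝ} (hy : 0 ≤ y) (hd : 0 ≤ d) (hyd : y ≤ d * ω d) :
    χi y ≤ d := by
  have := h.inv_mono hy hyd
  rwa [h.left d hd] at this

lemma exists_scale (h : Md ω χi)
    (hd : ∃ δ₀ : ℝ, 0 < δ₀ ∧ ∀ δ : ℝ, 0 < δ → δ < δ₀ → ω (2 * δ) < 2 * ω δ) :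
    ∃ (θ : ℝ) (l : ℕ → ℝ), 0 < θ ∧ Scale l ∧ (∀ m, ω (l m) = θ / 2 ^ m) ∧ l 0 ≤ 1 / 4 ∧
      l 0 * θ ≤ 1 / 2 := by
  obtain ⟨d0, hd0, hd⟩ := hd
  have hχ := h.inv_pos (y := 1 / 2) (by norm_num)
  set L := min (1 / 4) (min (d0 / 2) (χi (1 / 2))) with hL
  have hL0 : 0 < L := by
    rw [hL]; exact lt_min (by norm_num) (lt_min (by linarith) hχ)
  have hL1 : L ≤ 1 / 4 := min_le_left _ _
  have hL2 : L ≤ d0 / 2 := (min_le_right _ _).trans (min_le_left _ _)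
  have hL3 : L ≤ χi (1 / 2) := (min_le_right _ _).trans (min_le_right _ _)
  have hθ := h.pos L hL0
  have key : ∀ m : ℕ, ∃ x ∈ Icc 0 L, ω x = ω L / 2 ^ m := by
    intro m
    have hc : ContinuousOn ω (Icc 0 L) := h.cont.mono (fun x hx => hx.1)
    have := intermediate_value_Icc hL0.le hc
    have hm : ω L / 2 ^ m ∈ Icc (ω 0) (ω L) := by
      rw [h.zero]
      exact ⟨by positivity, div_le_self hθ.le (one_le_pow₀ (by norm_num))⟩
    exact this hm
  choose l hl1 hl2 using key
  have hpos : ∀ m, 0 < l m := by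
    intro m
    rcases (hl1 m).1.eq_or_lt with h0 | h0
    · have := hl2 m
      rw [← h0, h.zero] at this
      have : 0 < ω L / 2 ^ m := by positivity
      linarith
    · exact h0
  refine ⟨ω L, l, hθ, ⟨hpos, ?_, ?_⟩, hl2, (hl1 0).2.trans hL1, ?_⟩
  · intro m
    by_contra hc
    have h1 := h.le (hpos m).le (not_lt.1 hc)
    have h2 := hd (l (m + 1)) (hpos _) (by have := (hl1 (m + 1)).2; linarith)
    rw [hl2 (m + 1)] at h2
    rw [hl2 m] at h1
    have : ω L / 2 ^ m = 2 * (ω L / 2 ^ (m + 1)) := by rw [pow_succ]; field_simp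
    linarith
  · linarith [(hl1 0).2]
  · have h1 : L * ω L ≤ 1 / 2 := by
      have := h.smono.monotoneOn hL0.le hχ.le hL3
      rw [(h.right (1 / 2) (by norm_num)).2] at this
      exact this
    calc l 0 * ω L ≤ L * ω L := by gcongr; exact (hl1 0).2
      _ ≤ _ := h1

lemma exists_N {l : ℕ → ℝ} (h : Scale l) {θ lam : ℝ} (hθ : 0 < θ) (hl : l 0 * θ ≤ 1 / 2) (hlam : 0 < lam) :
    ∃ N : ℕ, lam * θ * (l N / 2 ^ N) ≤ 1 ∧ (∀ m < N, 1 < lam * θ * (l m / 2 ^ m)) ∧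
      ∀ q < N, 1 ≤ lam / 2 ^ q := by
  classical
  have hex : ∃ N : ℕ, lam * θ * (l N / 2 ^ N) ≤ 1 := by
    obtain ⟨n, hn⟩ := h.exists_lt (e := 1 / (lam * θ)) (by positivity)
    refine ⟨n, ?_⟩
    have h1 : l n / 2 ^ n ≤ l n := div_le_self (h.pos n).le (one_le_pow₀ (by norm_num))
    calc lam * θ * (l n / 2 ^ n) ≤ lam * θ * (1 / (lam * θ)) := by
          exact mul_le_mul_of_nonneg_left (h1.trans (hn n le_rfl).le) (by positivity)
      _ = 1 := by field_simp
  refine ⟨Nat.find hex, Nat.find_spec hex, ?_, ?_⟩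
  · intro m hm
    exact not_le.1 (Nat.find_min hex hm)
  · intro q hq
    have h1 := not_le.1 (Nat.find_min hex hq)
    have h2 : l q * θ ≤ 1 := by
      have : l q ≤ l 0 := h.anti (Nat.zero_le q)
      calc l q * θ ≤ l 0 * θ := by gcongr
        _ ≤ 1 := by linarith
    calc (1:ℝ) ≤ (l q * θ) * (lam / 2 ^ q) := by
          rw [show (l q * θ) * (lam / 2 ^ q) = lam * θ * (l q / 2 ^ q) by ring]; exact h1.le
      _ ≤ 1 * (lam / 2 ^ q) := by gcongr
      _ = _ := one_mul _

lemma two_pow_om (h : Md ω χi) {θ : ℝ}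
    {d D : ℝ} (hd : 0 ≤ d) (hD : d ≤ D) {n : ℕ} (hn : ∀ m < n, ω d ≤ θ / 2 ^ m) :
    2 ^ n * ω d ≤ max (2 * θ) (ω D) := by
  cases n with
  | zero => rw [pow_zero, one_mul]; exact (h.le hd hD).trans (le_max_right _ _)
  | succ n =>
    refine le_trans ?_ (le_max_left _ _)
    have := hn n (Nat.lt_succ_self n)
    calc (2:ℝ) ^ (n + 1) * ω d ≤ 2 ^ (n + 1) * (θ / 2 ^ n) := by gcongr
      _ = 2 * θ := by rw [pow_succ]; field_simp

/-- comparison for p > 1 -/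
lemma rhs_ii (h : Md ω χi) {l : ℕ → ℝ} (hs : Scale l) {θ : ℝ} (hθ : 0 < θ)
    (hl : ∀ m, ω (l m) = θ / 2 ^ m) (hl0 : l 0 * θ ≤ 1 / 2) {p D : ℝ} (hp : 1 < p) (hD : 0 < D) :
    ∃ C : ℝ, 0 < C ∧ ∀ (lam : ℝ) (N : ℕ), 2 ≤ lam → (∀ m < N, 1 < lam * θ * (l m / 2 ^ m)) →
      1 + lam * (2 ^ N / lam) ^ p + ∑ m ∈ Finset.range N, 2 ^ m * (D * l m ^ (p - 1)) ≤
        C * ∫ τ in (1:ℝ)..lam, (χi (1 / τ)) ^ p := by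
  set D1 := χi (1 / 2)
  have hD1 : 0 < D1 := h.inv_pos (by norm_num)
  set C3 := max (2 * θ) (ω D1) with hC3
  have hC3p : 0 < C3 := lt_of_lt_of_le (by linarith) (le_max_left _ _)
  refine ⟨1 / D1 ^ p + 2 * C3 ^ p + D * (2 * θ), by positivity, ?_⟩
  intro lam N hlam hN
  set F : ℝ → ℝ := fun τ => (χi (1 / τ)) ^ p with hF
  have hp0 : 0 ≤ p := by linarith
  have hFa : ∀ x y : ℝ, 0 < x → x ≤ y → F y ≤ F x := by
    intro x y hx hxy
    apply Real.rpow_le_rpow (h.right _ (by have := hx.trans_le hxy; positivity)).1 _ hp0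
    apply h.inv_mono
    · have := hx.trans_le hxy; positivity
    · exact one_div_le_one_div_of_le hx hxy
  have hF0 : ∀ x : ℝ, 0 < x → 0 ≤ F x := fun x hx =>
    Real.rpow_nonneg (h.right _ (by positivity)).1 _
  have hFi : ∀ x y : ℝ, 0 < x → x ≤ y → IntervalIntegrable F volume x y := by
    intro x y hx hxy
    apply AntitoneOn.intervalIntegrable
    intro a ha b hb hab
    rw [uIcc_of_le hxy] at ha
    exact hFa a b (hx.trans_le ha.1) hab
  have hlow : ∀ x y : ℝ, 0 < x → x ≤ y → (y - x) * F y ≤ ∫ τ in x..y, F τ := by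
    intro x y hx hxy
    have h1 : ∫ τ in x..y, F y = (y - x) * F y := by
      rw [intervalIntegral.integral_const, smul_eq_mul]
    rw [← h1]
    apply intervalIntegral.integral_mono_on hxy (by simp) (hFi x y hx hxy)
    intro t ht
    exact hFa t y (hx.trans_le ht.1) ht.2
  have hadd : ∀ x y : ℝ, 1 ≤ x → x ≤ y → (∫ τ in (1:ℝ)..x, F τ) + (y - x) * F y ≤ ∫ τ in (1:ℝ)..y, F τ := by
    intro x y hx hxy
    rw [← intervalIntegral.integral_add_adjacent_intervals (hFi 1 x one_pos hx)
      (hFi x y (by linarith) hxy)]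
    linarith [hlow x y (by linarith) hxy]
  have hmono : ∀ x y : ℝ, 1 ≤ x → x ≤ y → (∫ τ in (1:ℝ)..x, F τ) ≤ ∫ τ in (1:ℝ)..y, F τ := by
    intro x y hx hxy
    have := hadd x y hx hxy
    have h2 := mul_nonneg (sub_nonneg.2 hxy) (hF0 y (by linarith))
    linarith
  set I := ∫ τ in (1:ℝ)..lam, F τ with hI
  have hA : 1 ≤ 1 / D1 ^ p * I := by
    have h1 := hlow 1 2 one_pos (by norm_num)
    have h2 := hmono 2 lam (by norm_num) hlam
    have h3 : F 2 = D1 ^ p := rfl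
    have h4 : 0 < D1 ^ p := by positivity
    rw [h3] at h1
    rw [one_div, inv_mul_eq_div, le_div_iff₀ h4]
    linarith
  have hl0' : 0 < lam := by linarith
  have hB : lam * (2 ^ N / lam) ^ p ≤ 2 * C3 ^ p * I := by
    set d := χi (1 / lam) with hd
    have hd0 : 0 < d := h.inv_pos (by positivity)
    have hdω : d * ω d = 1 / lam := (h.right (1 / lam) (by positivity)).2
    have hdD : d ≤ D1 := h.inv_mono (by positivity) (one_div_le_one_div_of_le (by norm_num) hlam)
    have h1 : 2 ^ N * ω d ≤ C3 := by
      apply two_pow_om h hd0.le hdD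
      intro m hm
      rw [← hl m]
      apply h.le hd0.le
      apply h.inv_le (by positivity) (hs.pos m).le
      rw [hl m, div_le_iff₀ hl0']
      have := (hN m hm).le
      calc 1 ≤ lam * θ * (l m / 2 ^ m) := this
        _ = _ := by ring
    have h2 : 2 ^ N / lam ≤ C3 * d := by
      rw [div_eq_mul_one_div, ← hdω]
      calc 2 ^ N * (d * ω d) = (2 ^ N * ω d) * d := by ring
        _ ≤ _ := by gcongr
    have h3 : (lam / 2) * d ^ p ≤ I := by
      have := hlow 1 lam one_pos (by linarith)
      have h4 : F lam = d ^ p := rfl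
      have h5 : 0 ≤ d ^ p := by positivity
      rw [h4] at this
      nlinarith
    calc lam * (2 ^ N / lam) ^ p ≤ lam * (C3 * d) ^ p := by gcongr
      _ = 2 * C3 ^ p * ((lam / 2) * d ^ p) := by rw [Real.mul_rpow hC3p.le hd0.le]; ring
      _ ≤ _ := by gcongr
  have hC : ∑ m ∈ Finset.range N, 2 ^ m * (D * l m ^ (p - 1)) ≤ D * (2 * θ) * I := by
    set τ : ℕ → ℝ := fun m => 2 ^ m / (θ * l m) with hτ
    have hFτ : ∀ m, F (τ m) = l m ^ p := by
      intro m
      simp only [hF, hτ]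
      congr 1
      rw [one_div_div]
      have := h.left (l m) (hs.pos m).le
      rw [hl m] at this
      rw [← this]
      congr 1
      rw [this]; ring
    have hτ2 : ∀ m, 2 * τ m ≤ τ (m + 1) := by
      intro m
      have h1 := hs.pos m
      have h2 := hs.pos (m + 1)
      have h3 : l (m + 1) ≤ l m := hs.anti (Nat.le_succ m)
      simp only [hτ]
      rw [pow_succ, ← mul_div_assoc, mul_comm (2:ℝ)]
      gcongr
    have hτ0 : 2 ≤ τ 0 := by
      simp only [hτ]
      rw [le_div_iff₀ (mul_pos hθ (hs.pos 0)), pow_zero]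
      linarith
    have hτ1 : ∀ m, 2 ≤ τ m := by
      intro m
      induction m with
      | zero => exact hτ0
      | succ m ih => linarith [hτ2 m]
    have hterm : ∀ m, 2 ^ m * (D * l m ^ (p - 1)) = D * (2 * θ) * (τ m / 2 * F (τ m)) := by
      intro m
      have h1 := hs.pos m
      rw [hFτ, Real.rpow_sub h1, Real.rpow_one]
      simp only [hτ]
      field_simp
    have hind : ∀ n, ∑ m ∈ Finset.range (n + 1), τ m / 2 * F (τ m) ≤ ∫ τ in (1:ℝ)..(τ n), F τ := by
      intro n
      induction n with
      | zero =>
        rw [zero_add, Finset.sum_range_one]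
        refine le_trans ?_ (hlow 1 (τ 0) one_pos (by linarith))
        have := hF0 (τ 0) (by linarith)
        gcongr
        linarith
      | succ n ih =>
        rw [Finset.sum_range_succ]
        have h1 := hτ1 n
        have h2 := hτ2 n
        refine le_trans ?_ (hadd (τ n) (τ (n + 1)) (by linarith) (by linarith))
        have := hF0 (τ (n + 1)) (by linarith)
        gcongr
        linarith
    have hfin : ∑ m ∈ Finset.range N, τ m / 2 * F (τ m) ≤ I := by
      cases N with
      | zero => 
        rw [Finset.range_zero, Finset.sum_empty]
        have := hlow 1 lam one_pos (by linarith)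
        have h2 := mul_nonneg (sub_nonneg.2 (show (1:ℝ) ≤ lam by linarith)) (hF0 lam hl0')
        linarith
      | succ n =>
        refine (hind n).trans (hmono _ _ (by linarith [hτ1 n]) ?_)
        have h1 := (hN n (Nat.lt_succ_self n)).le
        simp only [hτ]
        rw [div_le_iff₀ (mul_pos hθ (hs.pos n))]
        have h2 : lam * θ * (l n / 2 ^ n) = lam * (θ * l n) / 2 ^ n := by ring
        rw [h2, le_div_iff₀ (by positivity)] at h1
        linarith
    rw [Finset.sum_congr rfl (fun m _ => hterm m), ← Finset.mul_sum]
    gcongr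
  calc _ ≤ 1 / D1 ^ p * I + 2 * C3 ^ p * I + D * (2 * θ) * I := by gcongr
    _ = _ := by ring

set_option maxHeartbeats 1000000 in
/-- comparison for p = 1 -/
lemma rhs_i (h : Md ω χi) {l : ℕ → ℝ} (hs : Scale l) {θ : ℝ} (hθ : 0 < θ)
    (hl : ∀ m, ω (l m) = θ / 2 ^ m) :
    ∃ C : ℝ, 0 < C ∧ ∀ (lam : ℝ) (N : ℕ), 2 ≤ lam → (∀ m < N, 1 < lam * θ * (l m / 2 ^ m)) →
      (∀ q < N, 1 ≤ lam / 2 ^ q) →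
      1 + lam * (2 ^ N / lam) ^ (1:ℝ) +
        ∑ m ∈ Finset.range N, 2 ^ m * (4 * Real.log (1 + l m * (lam / 2 ^ N + 1))) ≤
        C * ((lam / Real.log lam) * χi ((Real.log lam) ^ 2 / lam)) := by
  classical
  set D1 := χi 4
  have hD1 : 0 < D1 := h.inv_pos (by norm_num)
  set C3 := max (2 * θ) (ω D1) with hC3
  have hC3a : 2 * θ ≤ C3 := le_max_left _ _
  have hC3b : ω D1 ≤ C3 := le_max_right _ _
  have hC3p : 0 < C3 := by linarith
  refine ⟨2 * C3 + 4 * C3 + (8 * C3 + 16 * √(3 * C3)), by positivity, ?_⟩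
  intro lam N hlam hN hN2
  have hl0 : 0 < lam := by linarith
  set A := Real.log lam with hA
  have hA1 : 1 / 2 ≤ A := by
    have := Real.log_two_gt_d9
    have h2 := Real.log_le_log (by norm_num) hlam
    linarith
  have hA0 : 0 < A := by linarith
  have hA4 : A ^ 2 / lam ≤ 4 := by
    rw [div_le_iff₀ hl0]
    have h1 : A ≤ 2 * √lam := by
      have h2 : A = 2 * Real.log (√lam) := by rw [Real.log_sqrt hl0.le]; ring
      have h3 := Real.log_le_self (Real.sqrt_nonneg lam)
      linarith
    calc A ^ 2 ≤ (2 * √lam) ^ 2 := by gcongr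
      _ = 4 * lam := by rw [mul_pow, Real.sq_sqrt hl0.le]; norm_num
  set d := χi (A ^ 2 / lam) with hd
  have hd0 : 0 < d := h.inv_pos (by positivity)
  have hdω : d * ω d = A ^ 2 / lam := (h.right _ (by positivity)).2
  have hdD : d ≤ D1 := h.inv_mono (by positivity) hA4
  set g := ω d with hg
  have hg0 : 0 < g := h.pos d hd0
  have hE : (lam / A) * d = A / g := by
    rw [eq_div_iff hg0.ne', mul_assoc, hdω]; field_simp
  rw [hE]
  have hex : ∃ m : ℕ, θ / 2 ^ m < g := by
    obtain ⟨n, hn⟩ := exists_pow_lt_of_lt_one (show 0 < g / θ by positivity) (show (1 / 2 : ℝ) < 1 by norm_num)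
    refine ⟨n, ?_⟩
    rw [one_div_pow, lt_div_iff₀ hθ] at hn
    calc θ / 2 ^ n = 1 / 2 ^ n * θ := by ring
      _ < g := hn
  set n := Nat.find hex with hn
  have hn1 : θ / 2 ^ n < g := Nat.find_spec hex
  have hn2 : ∀ m < n, g ≤ θ / 2 ^ m := fun m hm => not_lt.1 (Nat.find_min hex hm)
  have hng : 2 ^ n * g ≤ C3 := two_pow_om h hd0.le hdD hn2
  have hln : l n ≤ d := (h.lt_of hd0.le (by rw [hl n]; exact hn1)).le
  have hgC : g ≤ C3 := (h.le hd0.le hdD).trans hC3b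
  have hlm : ∀ m, n ≤ m → l m ≤ d * 2 ^ n / 2 ^ m := by
    intro m hm
    obtain ⟨i, rfl⟩ := Nat.exists_eq_add_of_le hm
    calc l (n + i) ≤ l n / 2 ^ i := hs.geom n i
      _ ≤ d / 2 ^ i := by gcongr
      _ = _ := by rw [pow_add]; field_simp
  -- first term
  have hT1 : 1 ≤ 2 * C3 * (A / g) := by
    rw [← mul_div_assoc, le_div_iff₀ hg0]
    nlinarith
  -- second term
  have hT2 : lam * (2 ^ N / lam) ^ (1:ℝ) ≤ 4 * C3 * (A / g) := by
    rw [Real.rpow_one, mul_div_cancel₀ _ hl0.ne', ← mul_div_assoc, le_div_iff₀ hg0]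
    rcases le_or_gt N n with hNn | hNn
    · calc 2 ^ N * g ≤ 2 ^ n * g := by gcongr; norm_num
        _ ≤ C3 := hng
        _ ≤ _ := by nlinarith
    · obtain ⟨m, rfl⟩ := Nat.exists_eq_succ_of_ne_zero (by omega : N ≠ 0)
      have hm : n ≤ m := by omega
      have h1 := (hN m (Nat.lt_succ_self m)).le
      have h2 := hlm m hm
      have h3 : 1 ≤ lam * θ * (d * 2 ^ n / 2 ^ m / 2 ^ m) :=
        h1.trans (mul_le_mul_of_nonneg_left (by gcongr) (by positivity))
      have h4 : (2 ^ m) ^ 2 ≤ lam * θ * d * 2 ^ n := by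
        have e : lam * θ * (d * 2 ^ n / 2 ^ m / 2 ^ m) = lam * θ * d * 2 ^ n / (2 ^ m) ^ 2 := by
          field_simp
        rw [e, le_div_iff₀ (by positivity)] at h3
        linarith
      have h5 : (2 ^ m * g) ^ 2 ≤ (C3 * A) ^ 2 := by
        calc (2 ^ m * g) ^ 2 = (2 ^ m) ^ 2 * g ^ 2 := by ring
          _ ≤ lam * θ * d * 2 ^ n * g ^ 2 := by gcongr
          _ = θ * (2 ^ n * g) * (lam * (d * g)) := by ring
          _ = θ * (2 ^ n * g) * A ^ 2 := by rw [hdω, mul_div_cancel₀ _ hl0.ne']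
          _ ≤ C3 * C3 * A ^ 2 := by
            gcongr
            linarith
          _ = _ := by ring
      have h6 := le_of_sq_le_sq h5 (by positivity)
      calc (2:ℝ) ^ (m + 1) * g = 2 * (2 ^ m * g) := by ring
        _ ≤ 2 * (C3 * A) := by gcongr
        _ ≤ _ := by nlinarith [mul_pos hC3p hA0]
  -- the sum
  have hT3 : ∑ m ∈ Finset.range N, 2 ^ m * (4 * Real.log (1 + l m * (lam / 2 ^ N + 1))) ≤
      (8 * C3 + 16 * √(3 * C3)) * (A / g) := by
    set B := 3 * d * lam * 2 ^ n / 2 ^ N with hB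
    have hB0 : 0 ≤ B := by positivity
    have hterm : ∀ m ∈ Finset.range N, 2 ^ m * (4 * Real.log (1 + l m * (lam / 2 ^ N + 1))) ≤
        (if m < n then 8 * A * 2 ^ m else 0) + 4 * √B * √2 ^ m := by
      intro m hm
      rw [Finset.mem_range] at hm
      have hlmp := hs.pos m
      split_ifs with hmn
      · have h1 : Real.log (1 + l m * (lam / 2 ^ N + 1)) ≤ 2 * A := by
          have h2 : 2 * A = Real.log (lam ^ 2) := by rw [Real.log_pow, ← hA]; norm_num
          rw [h2]
          apply Real.log_le_log (by positivity)
          have h3 : lam / 2 ^ N ≤ lam := div_le_self hl0.le (one_le_pow₀ (by norm_num))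
          have h4 := hs.le_one' m
          calc 1 + l m * (lam / 2 ^ N + 1) ≤ 1 + 1 * (lam + 1) := by gcongr
            _ ≤ lam ^ 2 := by nlinarith
        have h5 : 0 ≤ 4 * √B * √2 ^ m := by positivity
        calc 2 ^ m * (4 * Real.log (1 + l m * (lam / 2 ^ N + 1))) ≤ 2 ^ m * (4 * (2 * A)) := by gcongr
          _ = 8 * A * 2 ^ m := by ring
          _ ≤ _ := by linarith
      · have hmn' : n ≤ m := not_lt.1 hmn
        set x := l m * (lam / 2 ^ N + 1) with hx
        have hx0 : 0 < x := by positivity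
        have h1 : Real.log (1 + x) ≤ √x := by
          have h2 : Real.log (1 + x) ≤ Real.log (Real.exp √x) := by
            apply Real.log_le_log (by positivity)
            have h4 := Real.quadratic_le_exp_of_nonneg (Real.sqrt_nonneg x)
            have h3 := Real.add_one_le_exp (√x / 2)
            have h5 : Real.exp √x = Real.exp (√x / 2) ^ 2 := by
              rw [← Real.exp_nat_mul]; congr 1; push_cast; ring
            have h6 : √x ^ 2 = x := Real.sq_sqrt hx0.le
            -- cubic bound
            have h7 := Real.sum_le_exp_of_nonneg (Real.sqrt_nonneg x) 4
            simp only [Finset.sum_range_succ, Finset.sum_range_zero, Nat.factorial] at h7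
            norm_num at h7
            have h8 := Real.sqrt_nonneg x
            nlinarith [sq_nonneg (√x - 3 / 2), mul_nonneg h8 (sq_nonneg (√x - 3 / 2))]
          rwa [Real.log_exp] at h2
        have h2 : x ≤ B / 2 ^ m := by
          have h3 : (1:ℝ) ≤ 2 * (lam / 2 ^ N) := by
            obtain ⟨M, rfl⟩ := Nat.exists_eq_succ_of_ne_zero (by omega : N ≠ 0)
            have h4 := hN2 M (Nat.lt_succ_self M)
            calc (1:ℝ) ≤ lam / 2 ^ M := h4
              _ = _ := by rw [Nat.succ_eq_add_one, pow_succ]; field_simp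
          calc x ≤ (d * 2 ^ n / 2 ^ m) * (lam / 2 ^ N + 2 * (lam / 2 ^ N)) := by
                rw [hx]; gcongr; exact hlm m hmn'
            _ = _ := by rw [hB]; ring
        have h3 : 2 ^ m * √(B / 2 ^ m) = √B * √2 ^ m := by
          have e : √((2:ℝ) ^ m) = √2 ^ m := by
            rw [Real.sqrt_eq_iff_mul_self_eq (by positivity) (by positivity), ← mul_pow,
              Real.mul_self_sqrt (by norm_num)]
          rw [Real.sqrt_div hB0, e]
          have e2 : (2:ℝ) ^ m = √2 ^ m * √2 ^ m := by
            rw [← mul_pow, Real.mul_self_sqrt (by norm_num)]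
          have e3 : 0 < √2 ^ m := by positivity
          rw [e2]
          field_simp
        rw [zero_add]
        calc 2 ^ m * (4 * Real.log (1 + x)) ≤ 2 ^ m * (4 * √(B / 2 ^ m)) := by
              have := h1.trans (Real.sqrt_le_sqrt h2)
              gcongr
          _ = 4 * (2 ^ m * √(B / 2 ^ m)) := by ring
          _ = _ := by rw [h3]; ring
    have hS1 : ∑ m ∈ Finset.range N, (if m < n then 8 * A * 2 ^ m else 0) ≤ 8 * A * 2 ^ n := by
      calc ∑ m ∈ Finset.range N, (if m < n then 8 * A * 2 ^ m else 0)
          = ∑ m ∈ (Finset.range N).filter (· < n), 8 * A * 2 ^ m := (Finset.sum_filter _ _).symm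
        _ ≤ ∑ m ∈ Finset.range n, 8 * A * 2 ^ m := by
          apply Finset.sum_le_sum_of_subset_of_nonneg
          · intro m hm
            simp only [Finset.mem_filter, Finset.mem_range] at hm ⊢
            exact hm.2
          · intro m _ _; positivity
        _ ≤ 8 * A * 2 ^ n := by
          rw [← Finset.mul_sum]
          gcongr
          clear_value n
          clear * -
          induction n with
          | zero => simp
          | succ n ih => rw [Finset.sum_range_succ, pow_succ]; linarith
    have hS2 : ∑ m ∈ Finset.range N, √2 ^ m ≤ 4 * √2 ^ N := by
      have h54 : (5:ℝ) / 4 ≤ √2 := Real.le_sqrt_of_sq_le (by norm_num)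
      clear * - h54
      induction N with
      | zero => simp
      | succ n ih =>
        rw [Finset.sum_range_succ, pow_succ]
        have : 0 < √2 ^ n := by positivity
        nlinarith
    have hS3 : √B * √2 ^ N ≤ √(3 * C3) * (A / g) := by
      have e : √2 ^ N = √((2:ℝ) ^ N) := by
        symm
        rw [Real.sqrt_eq_iff_mul_self_eq (by positivity) (by positivity), ← mul_pow,
              Real.mul_self_sqrt (by norm_num)]
      rw [e, ← Real.sqrt_mul hB0]
      have e2 : B * 2 ^ N = 3 * (2 ^ n * g) * (A / g) ^ 2 := by
        have : lam * (d * g) = A ^ 2 := by rw [hdω, mul_div_cancel₀ _ hl0.ne']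
        rw [div_pow, ← this, hB]
        field_simp
      rw [e2, Real.sqrt_mul (by positivity), Real.sqrt_sq (by positivity)]
      gcongr
    have hS4 : A * 2 ^ n ≤ C3 * (A / g) := by
      rw [← mul_div_assoc, le_div_iff₀ hg0]
      nlinarith
    calc _ ≤ ∑ m ∈ Finset.range N, ((if m < n then 8 * A * 2 ^ m else 0) + 4 * √B * √2 ^ m) :=
          Finset.sum_le_sum hterm
      _ = (∑ m ∈ Finset.range N, (if m < n then 8 * A * 2 ^ m else 0)) +
            4 * √B * ∑ m ∈ Finset.range N, √2 ^ m := by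
          rw [Finset.sum_add_distrib, Finset.mul_sum]
      _ ≤ 8 * A * 2 ^ n + 4 * √B * (4 * √2 ^ N) := by gcongr
      _ = 8 * (A * 2 ^ n) + 16 * (√B * √2 ^ N) := by ring
      _ ≤ 8 * (C3 * (A / g)) + 16 * (√(3 * C3) * (A / g)) := by gcongr
      _ = _ := by ring
  calc _ ≤ 2 * C3 * (A / g) + 4 * C3 * (A / g) + (8 * C3 + 16 * √(3 * C3)) * (A / g) := by gcongr
    _ = _ := by ring

end
end CB

open MeasureTheory Real Set
open scoped ENNReal
namespace CB
section
variable {ω χi : ℝ → ℝ} {l : ℕ → ℝ}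

lemma pp_mod (h : Md ω χi) (hs : Scale l) {θ : ℝ} (hθ : 0 < θ)
    (hl : ∀ m, ω (l m) = θ / 2 ^ m) {s t : ℝ} (hst : s ≤ t) (ht : t ≤ l 0) :
    |max 0 (psi l t) - max 0 (psi l s)| ≤ 4 / θ * ω (t - s) := by
  classical
  have hm : psi l s ≤ psi l t := psi_mono hs hst
  rw [abs_of_nonneg (sub_nonneg.2 (max_le_max le_rfl hm))]
  rcases hst.eq_or_lt with rfl | hlt
  · rw [sub_self]
    have := h.nonneg (show (0:ℝ) ≤ s - s by simp)
    positivity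
  have hx : 0 < t - s := by linarith
  by_cases hx0 : l 0 ≤ t - s
  · have h1 : psi l t ≤ 1 := by
      have := psi_mono hs ht
      rw [psi_top hs 0] at this
      simpa using this
    have h2 := h.le (hs.pos 0).le hx0
    rw [hl 0, pow_zero, div_one] at h2
    have h3 : 4 ≤ 4 / θ * ω (t - s) := by
      rw [div_mul_eq_mul_div, le_div_iff₀ hθ]; linarith
    have h4 : max 0 (psi l t) ≤ 1 := max_le zero_le_one h1
    have h5 : 0 ≤ max 0 (psi l s) := le_max_left _ _
    linarith
  · have hex : ∃ n, l n ≤ t - s := by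
      obtain ⟨n, hn⟩ := hs.exists_lt hx
      exact ⟨n, (hn n le_rfl).le⟩
    obtain ⟨n, hn1, hn2⟩ : ∃ n, l (n + 1) ≤ t - s ∧ t - s < l n := by
      have h0 : Nat.find hex ≠ 0 := by
        intro h0
        have := Nat.find_spec hex
        rw [h0] at this
        exact hx0 this
      obtain ⟨n, hn⟩ := Nat.exists_eq_succ_of_ne_zero h0
      refine ⟨n, ?_, ?_⟩
      · have := Nat.find_spec hex
        rwa [hn] at this
      · exact not_le.1 (Nat.find_min hex (by omega))
    have h1 := psi_near hs (s := s) (t := t) (n := n) (by linarith)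
    have h2 := h.le (hs.pos (n + 1)).le hn1
    rw [hl (n + 1)] at h2
    have h3 : (2:ℝ) / 2 ^ n ≤ 4 / θ * ω (t - s) := by
      calc (2:ℝ) / 2 ^ n = 4 / θ * (θ / 2 ^ (n + 1)) := by rw [pow_succ]; field_simp; norm_num
        _ ≤ _ := by gcongr
    have h4 : max 0 (psi l t) ≤ max 0 (psi l s) + 2 / 2 ^ n := by
      apply max_le
      · have : 0 ≤ max 0 (psi l s) := le_max_left _ _
        positivity
      · have : psi l s ≤ max 0 (psi l s) := le_max_right _ _
        linarith
    linarith

lemma pp_mod' (h : Md ω χi) (hs : Scale l) {θ : ℝ} (hθ : 0 < θ)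
    (hl : ∀ m, ω (l m) = θ / 2 ^ m) {s t : ℝ} (hs0 : s ≤ l 0) (ht : t ≤ l 0) {e : ℝ} (he : |s - t| ≤ e) :
    |max 0 (psi l s) - max 0 (psi l t)| ≤ 4 / θ * ω e := by
  have key : ∀ s t : ℝ, s ≤ l 0 → t ≤ l 0 → |s - t| ≤ e → s ≤ t → 
      |max 0 (psi l s) - max 0 (psi l t)| ≤ 4 / θ * ω e := by
    intro s t _ ht he hst
    rw [abs_sub_comm]
    refine (pp_mod h hs hθ hl hst ht).trans ?_
    rw [abs_sub_comm, abs_of_nonneg (by linarith)] at he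
    have := h.le (by linarith) he
    gcongr
  rcases le_total s t with hst | hst
  · exact key s t hs0 ht he hst
  · rw [abs_sub_comm]
    exact key t s ht hs0 (by rwa [abs_sub_comm]) hst

lemma tent_mod (h : Md ω χi) (hs : Scale l) {θ : ℝ} (hθ : 0 < θ)
    (hl : ∀ m, ω (l m) = θ / 2 ^ m) (q : ℕ) (s t : ℝ) :
    |tent l q s - tent l q t| ≤ 4 / θ * ω |s - t| := by
  unfold tent
  have hq : l q ≤ l 0 := hs.anti (Nat.zero_le q)
  apply pp_mod' h hs hθ hl
  · have := abs_nonneg (s - l q); linarith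
  · have := abs_nonneg (t - l q); linarith
  · have := abs_abs_sub_abs_le_abs_sub (t - l q) (s - l q)
    rw [show l q - |s - l q| - (l q - |t - l q|) = |t - l q| - |s - l q| by ring]
    refine this.trans ?_
    rw [abs_sub_comm s t]
    apply le_of_eq; congr 1; ring

lemma bet_mod (h : Md ω χi) (hs : Scale l) {θ : ℝ} (hθ : 0 < θ)
    (hl : ∀ m, ω (l m) = θ / 2 ^ m) (q : ℕ) (s t : ℝ) :
    |bet l q s - bet l q t| ≤ 8 / θ * ω |s - t| := by
  unfold bet
  have h1 := tent_mod h hs hθ hl q s t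
  have h2 := tent_mod h hs hθ hl q (s - 2 * l q) (t - 2 * l q)
  rw [show s - 2 * l q - (t - 2 * l q) = s - t by ring] at h2
  have e : (8 / θ * ω |s - t|) = 4 / θ * ω |s - t| + 4 / θ * ω |s - t| := by ring
  rw [e, show tent l q s - tent l q (s - 2 * l q) - (tent l q t - tent l q (t - 2 * l q)) =
    (tent l q s - tent l q t) - (tent l q (s - 2 * l q) - tent l q (t - 2 * l q)) by ring]
  exact (abs_sub _ _).trans (add_le_add h1 h2)

lemma LC.max0 {g : ℝ → ℝ} (hg : LC g) : LC (fun t => max 0 (g t)) := by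
  intro u v huv
  obtain ⟨a, b, c, h1, h2, h3, h4⟩ := hg u v huv
  exact ⟨a, b, max 0 c, h1, h2, h3, fun t ht => by simp only [h4 t ht]⟩

lemma LC.neg {g : ℝ → ℝ} (hg : LC g) : LC (fun t => - g t) := by
  intro u v huv
  obtain ⟨a, b, c, h1, h2, h3, h4⟩ := hg u v huv
  exact ⟨a, b, -c, h1, h2, h3, fun t ht => by simp only [h4 t ht]⟩

lemma LC.shift {g : ℝ → ℝ} (hg : LC g) (x : ℝ) : LC (fun t => g (t - x)) := by
  intro u v huv
  obtain ⟨a, b, c, h1, h2, h3, h4⟩ := hg (u - x) (v - x) (by linarith)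
  exact ⟨a + x, b + x, c, by linarith, by linarith, by linarith,
    fun t ht => h4 (t - x) ⟨by linarith [ht.1], by linarith [ht.2]⟩⟩

lemma LC.refl {g : ℝ → ℝ} (hg : LC g) (x : ℝ) : LC (fun t => g (x - t)) := by
  intro u v huv
  obtain ⟨a, b, c, h1, h2, h3, h4⟩ := hg (x - v) (x - u) (by linarith)
  exact ⟨x - b, x - a, c, by linarith, by linarith, by linarith,
    fun t ht => h4 (x - t) ⟨by linarith [ht.2], by linarith [ht.1]⟩⟩

lemma LC.split {g g1 g2 : ℝ → ℝ} (hg1 : LC g1) (hg2 : LC g2) (x : ℝ) (h1 : ∀ t, t ≤ x → g t = g1 t)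
    (h2 : ∀ t, x ≤ t → g t = g2 t) : LC g := by
  intro u v huv
  by_cases hu : u < x
  · obtain ⟨a, b, c, k1, k2, k3, k4⟩ := hg1 u (min v x) (lt_min huv hu)
    refine ⟨a, b, c, k1, k2, k3.trans (min_le_left _ _), fun t ht => ?_⟩
    rw [h1 t (ht.2.le.trans (k3.trans (min_le_right _ _))), k4 t ht]
  · obtain ⟨a, b, c, k1, k2, k3, k4⟩ := hg2 u v huv
    refine ⟨a, b, c, k1, k2, k3, fun t ht => ?_⟩
    rw [h2 t ((not_lt.1 hu).trans (k1.trans ht.1.le)), k4 t ht]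

lemma tent_LC (hs : Scale l) (q : ℕ) : LC (tent l q) := by
  apply LC.split (psi_LC hs).max0 ((psi_LC hs).max0.refl (2 * l q)) (l q)
  · intro t ht
    unfold tent
    rw [abs_of_nonpos (by linarith)]; congr 2; ring
  · intro t ht
    unfold tent
    rw [abs_of_nonneg (by linarith)]; congr 2; ring

lemma bet_LC (hs : Scale l) (q : ℕ) : LC (bet l q) :=
  (tent_LC hs q).add ((tent_LC hs q).shift (2 * l q)).neg

/-- partial sums of shifted blocks -/
noncomputable def G (l : ℕ → ℝ) (t : ℕ → ℝ) (q : ℕ → ℕ) (J : ℕ) (s : ℝ) : ℝ :=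
  ∑ i ∈ Finset.range J, bet l (q i) (s - t i)

structure Step (l : ℕ → ℝ) (ω : ℝ → ℝ) (u v e : ℝ) (g : ℝ → ℝ) (Q : ℕ) (t : ℝ) (q : ℕ) (ρ : ℝ) : Prop where
  rpos : 0 < ρ
  hu : u ≤ t - ρ
  hv : t + 2 * ρ ≤ v
  const : ∃ c, ∀ s ∈ Ioo (t - ρ) (t + 2 * ρ), g s = c
  small : 4 * l q < ρ
  om : 2 / 2 ^ q ≤ e * ω ρ
  hq : Q + 3 ≤ q

lemma exists_step (hs : Scale l) (h : Md ω χi) {u v e : ℝ} (huv : u < v) (he : 0 < e) {g : ℝ → ℝ} (hg : LC g)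
    (Q : ℕ) : ∃ t q ρ, Step l ω u v e g Q t q ρ := by
  obtain ⟨a, b, c, h1, h2, h3, h4⟩ := hg u v huv
  set ρ := (b - a) / 3 with hρ
  have hρ0 : 0 < ρ := by rw [hρ]; linarith
  obtain ⟨n, hn⟩ := hs.exists_lt (e := ρ / 4) (by linarith)
  have hω := h.pos ρ hρ0
  obtain ⟨m, hm⟩ := exists_pow_lt_of_lt_one (show 0 < e * ω ρ / 2 by positivity) (by norm_num : (1 / 2 : ℝ) < 1)
  set q := max (max n m) (Q + 3) with hq
  have hqn : n ≤ q := (le_max_left _ _).trans (le_max_left _ _)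
  have hqm : m ≤ q := (le_max_right _ _).trans (le_max_left _ _)
  refine ⟨a + ρ, q, ρ, hρ0, by linarith, by linarith, ⟨c, ?_⟩, ?_, ?_, le_max_right _ _⟩
  · intro s hs
    exact h4 s ⟨by linarith [hs.1], by linarith [hs.2]⟩
  · linarith [hn q hqn]
  · rw [one_div_pow] at hm
    have : (1:ℝ) / 2 ^ q ≤ 1 / 2 ^ m := by
      apply one_div_le_one_div_of_le (by positivity)
      exact pow_le_pow_right₀ (by norm_num) hqm
    have e2 : (2:ℝ) / 2 ^ q = 2 * (1 / 2 ^ q) := by ring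
    rw [e2]; linarith

lemma exists_blocks (hs : Scale l) (h : Md ω χi) {U V : ℕ → ℝ} (hUV : ∀ j, U j < V j) :
    ∃ (t : ℕ → ℝ) (q Q : ℕ → ℕ) (ρ : ℕ → ℝ), (∀ j, Q (j + 1) = q j) ∧
      ∀ j, Step l ω (U j) (V j) (1 / 2 ^ j) (G l t q j) (Q j) (t j) (q j) (ρ j) := by
  have key : ∀ (j : ℕ) (S : {g : ℝ → ℝ // LC g} × ℕ), ∃ t q ρ,
      Step l ω (U j) (V j) (1 / 2 ^ j) S.1.1 S.2 t q ρ := fun j S =>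
    exists_step hs h (hUV j) (by positivity) S.1.2 S.2
  choose t q ρ hk using key
  let S : ℕ → {g : ℝ → ℝ // LC g} × ℕ := fun n => Nat.rec
    (⟨⟨fun _ => 0, fun u v huv => ⟨u, v, 0, le_rfl, huv, le_rfl, fun _ _ => rfl⟩⟩, 0⟩)
    (fun j S => ⟨⟨fun s => S.1.1 s + bet l (q j S) (s - t j S),
      S.1.2.add ((bet_LC hs _).shift _)⟩, q j S⟩) n
  have hS : ∀ j, S (j + 1) = ⟨⟨fun s => (S j).1.1 s + bet l (q j (S j)) (s - t j (S j)),
      (S j).1.2.add ((bet_LC hs _).shift _)⟩, q j (S j)⟩ := fun j => rfl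
  refine ⟨fun j => t j (S j), fun j => q j (S j), fun j => (S j).2, fun j => ρ j (S j), fun j => rfl, ?_⟩
  have hG : ∀ j, (S j).1.1 = G l (fun j => t j (S j)) (fun j => q j (S j)) j := by
    intro j
    induction j with
    | zero => funext s; simp [G, S]
    | succ j ih =>
      funext s
      rw [hS]
      simp only
      rw [ih]
      simp only [G]
      rw [Finset.sum_range_succ]
  intro j
  rw [← hG j]
  exact hk j (S j)

structure Blocks (l : ℕ → ℝ) (ω : ℝ → ℝ) (U V : ℕ → ℝ) (t : ℕ → ℝ) (q Q : ℕ → ℕ) (ρ : ℕ → ℝ) : Prop where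
  hQ : ∀ j, Q (j + 1) = q j
  st : ∀ j, Step l ω (U j) (V j) (1 / 2 ^ j) (G l t q j) (Q j) (t j) (q j) (ρ j)

variable {U V t ρ : ℕ → ℝ} {q Q : ℕ → ℕ}

lemma Blocks.q_step (B : Blocks l ω U V t q Q ρ) (j : ℕ) : q j + 3 ≤ q (j + 1) := by
  have := (B.st (j + 1)).hq
  rwa [B.hQ] at this

lemma Blocks.q_add (B : Blocks l ω U V t q Q ρ) (j i : ℕ) : q j + 3 * i ≤ q (j + i) := by
  induction i with
  | zero => simp
  | succ i ih => have := B.q_step (j + i); rw [← add_assoc]; omega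

lemma Blocks.q_ge (B : Blocks l ω U V t q Q ρ) (j : ℕ) : 3 * j ≤ q j := by
  have := B.q_add 0 j
  rw [zero_add] at this; omega

lemma Blocks.G_mod (B : Blocks l ω U V t q Q ρ) (h : Md ω χi) (hs : Scale l) {θ : ℝ} (hθ : 0 < θ)
    (hl : ∀ m, ω (l m) = θ / 2 ^ m) (J : ℕ) (x y : ℝ) :
    |G l t q J x - G l t q J y| ≤ (8 / θ + ∑ j ∈ Finset.range J, 1 / 2 ^ j) * ω |x - y| := by
  induction J generalizing x y with
  | zero => 
    have := h.nonneg (abs_nonneg (x - y))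
    simp only [G, Finset.range_zero, Finset.sum_empty, sub_self, abs_zero]
    positivity
  | succ J ih =>
    have hω := h.nonneg (abs_nonneg (x - y))
    have hSt := B.st J
    have hr := hSt.rpos
    have hsm := hSt.small
    have hlq := hs.pos (q J)
    have hsum : 0 ≤ ∑ j ∈ Finset.range J, (1:ℝ) / 2 ^ j := Finset.sum_nonneg (fun _ _ => by positivity)
    have e : ∀ s, G l t q (J + 1) s = G l t q J s + bet l (q J) (s - t J) := fun s => by
      simp only [G]; rw [Finset.sum_range_succ]
    rw [e, e, Finset.sum_range_succ]
    set b := fun s => bet l (q J) (s - t J) with hb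
    have hbd : |b x - b y| ≤ 2 / 2 ^ q J := by
      have h1 := bet_bd hs (q J) (x - t J)
      have h2 := bet_bd hs (q J) (y - t J)
      refine (abs_sub _ _).trans ?_
      have : (2:ℝ) / 2 ^ q J = 1 / 2 ^ q J + 1 / 2 ^ q J := by ring
      rw [this]; exact add_le_add h1 h2
    change |G l t q J x + b x - (G l t q J y + b y)| ≤ _
    rw [show G l t q J x + b x - (G l t q J y + b y) = (G l t q J x - G l t q J y) + (b x - b y) by ring]
    by_cases hfar : ρ J ≤ |x - y|
    · refine (abs_add_le _ _).trans ?_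
      have h1 := h.le hr.le hfar
      have h2 : |b x - b y| ≤ 1 / 2 ^ J * ω |x - y| := by
        refine hbd.trans (hSt.om.trans ?_)
        gcongr
      have := ih x y
      linarith
    · have hfar := abs_lt.1 (not_le.1 hfar)
      have hzero : ∀ s, ¬ (s ∈ Icc (t J) (t J + 4 * l (q J))) → b s = 0 := by
        intro s hs'
        apply bet_out hs
        by_contra hc
        push Not at hc
        exact hs' ⟨by linarith [hc.1], by linarith [hc.2]⟩
      by_cases hx : x ∈ Icc (t J) (t J + 4 * l (q J)) ∨ y ∈ Icc (t J) (t J + 4 * l (q J))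
      · have hz : x ∈ Ioo (t J - ρ J) (t J + 2 * ρ J) ∧ y ∈ Ioo (t J - ρ J) (t J + 2 * ρ J) := by
          rcases hx with hx | hx
          · exact ⟨⟨by linarith [hx.1], by linarith [hx.2]⟩, ⟨by linarith [hx.1], by linarith [hx.2]⟩⟩
          · exact ⟨⟨by linarith [hx.1], by linarith [hx.2]⟩, ⟨by linarith [hx.1], by linarith [hx.2]⟩⟩
        obtain ⟨c, hc⟩ := hSt.const
        rw [hc x hz.1, hc y hz.2, sub_self, zero_add]
        have h1 := bet_mod h hs hθ hl (q J) (x - t J) (y - t J)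
        rw [show x - t J - (y - t J) = x - y by ring] at h1
        refine h1.trans ?_
        have h2 : (0:ℝ) ≤ 1 / 2 ^ J := by positivity
        gcongr
        linarith
      · push Not at hx
        rw [hzero x hx.1, hzero y hx.2, sub_self, add_zero]
        refine (ih x y).trans ?_
        have h2 : (0:ℝ) ≤ 1 / 2 ^ J := by positivity
        gcongr
        linarith

end
end CB

open MeasureTheory Real Set
open scoped ENNReal
namespace CB
section
variable {ω χi : ℝ → ℝ} {l : ℕ → ℝ} {U V t ρ : ℕ → ℝ} {q Q : ℕ → ℕ}

noncomputable def Gi (l : ℕ → ℝ) (t : ℕ → ℝ) (q : ℕ → ℕ) (s : ℝ) : ℝ := ∑' i, bet l (q i) (s - t i)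

noncomputable def Ph (l : ℕ → ℝ) (t : ℕ → ℝ) (q : ℕ → ℕ) (J : ℕ) (s : ℝ) : ℝ :=
  ∑ i ∈ Finset.range J, bl l (q i) (s - t i)

noncomputable def Phi (l : ℕ → ℝ) (t : ℕ → ℝ) (q : ℕ → ℕ) (s : ℝ) : ℝ := ∑' i, bl l (q i) (s - t i)

lemma geo8 : Summable (fun j : ℕ => ((1:ℝ) / 8) ^ j) :=
  summable_geometric_of_lt_one (by norm_num) (by norm_num)

lemma Blocks.q_bd (B : Blocks l ω U V t q Q ρ) (j : ℕ) : (1:ℝ) / 2 ^ q j ≤ (1 / 8) ^ j := by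
  rw [one_div_pow]
  apply one_div_le_one_div_of_le (by positivity)
  calc (8:ℝ) ^ j = 2 ^ (3 * j) := by rw [pow_mul]; norm_num
    _ ≤ _ := pow_le_pow_right₀ (by norm_num) (B.q_ge j)

lemma Blocks.bet_le (B : Blocks l ω U V t q Q ρ) (hs : Scale l) (j : ℕ) (s : ℝ) :
    ‖bet l (q j) s‖ ≤ (1 / 8) ^ j := (bet_bd hs (q j) s).trans (B.q_bd j)

lemma Blocks.bl_le (B : Blocks l ω U V t q Q ρ) (hs : Scale l) (j : ℕ) (s : ℝ) :
    ‖bl l (q j) s‖ ≤ 4 * (1 / 8) ^ j := by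
  refine (bl_bd hs (q j) s).trans ?_
  have h1 := hs.le_one' (q j)
  have h2 := B.q_bd j
  have h3 := (hs.pos (q j))
  calc 4 * l (q j) / 2 ^ q j = 4 * (l (q j) * (1 / 2 ^ q j)) := by ring
    _ ≤ 4 * (1 * (1 / 8) ^ j) := by gcongr
    _ = _ := by ring

lemma Blocks.bet_sum (B : Blocks l ω U V t q Q ρ) (hs : Scale l) (s : ℝ) :
    Summable (fun i => bet l (q i) (s - t i)) :=
  Summable.of_norm_bounded geo8 (fun j => B.bet_le hs j _)

lemma Blocks.bl_sum (B : Blocks l ω U V t q Q ρ) (hs : Scale l) (s : ℝ) :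
    Summable (fun i => bl l (q i) (s - t i)) :=
  Summable.of_norm_bounded (geo8.mul_left 4) (fun j => B.bl_le hs j _)

lemma Blocks.G_tend (B : Blocks l ω U V t q Q ρ) (hs : Scale l) (s : ℝ) :
    Filter.Tendsto (fun J => G l t q J s) Filter.atTop (nhds (Gi l t q s)) :=
  (B.bet_sum hs s).hasSum.tendsto_sum_nat

lemma Blocks.Ph_tend (B : Blocks l ω U V t q Q ρ) (hs : Scale l) (s : ℝ) :
    Filter.Tendsto (fun J => Ph l t q J s) Filter.atTop (nhds (Phi l t q s)) :=
  (B.bl_sum hs s).hasSum.tendsto_sum_nat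

lemma Blocks.Gi_mod (B : Blocks l ω U V t q Q ρ) (h : Md ω χi) (hs : Scale l) {θ : ℝ} (hθ : 0 < θ)
    (hl : ∀ m, ω (l m) = θ / 2 ^ m) (x y : ℝ) :
    |Gi l t q x - Gi l t q y| ≤ (8 / θ + 2) * ω |x - y| := by
  refine le_of_tendsto (((B.G_tend hs x).sub (B.G_tend hs y)).abs) (Filter.Eventually.of_forall fun J => ?_)
  refine (B.G_mod h hs hθ hl J x y).trans ?_
  have hω := h.nonneg (abs_nonneg (x - y))
  gcongr
  have : ∑ j ∈ Finset.range J, (1:ℝ) / 2 ^ j = ∑ j ∈ Finset.range J, ((1:ℝ) / 2) ^ j := by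
    apply Finset.sum_congr rfl; intro j _; rw [one_div_pow]
  rw [this]
  exact sum_geometric_two_le J

lemma Blocks.Gi_cont (B : Blocks l ω U V t q Q ρ) (hs : Scale l) : Continuous (Gi l t q) := by
  unfold Gi
  refine continuous_tsum (fun i => ?_) geo8 (fun j s => B.bet_le hs j _)
  exact (bet_continuous hs (q i)).comp (continuous_id.sub continuous_const)

lemma Blocks.Phi_deriv (B : Blocks l ω U V t q Q ρ) (hs : Scale l) (s : ℝ) :
    HasDerivAt (Phi l t q) (Gi l t q s) s := by
  unfold Phi Gi
  refine hasDerivAt_tsum (g := fun i s => bl l (q i) (s - t i)) (g' := fun i s => bet l (q i) (s - t i))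
    geo8 (fun i y => ?_) (fun i y => B.bet_le hs i _) (B.bl_sum hs 0) s
  exact (bl_deriv hs (q i) (y - t i)).comp_sub_const y (t i)

lemma Ph_deriv (hs : Scale l) (J : ℕ) (s : ℝ) : HasDerivAt (Ph l t q J) (G l t q J s) s := by
  unfold Ph G
  apply HasDerivAt.fun_sum
  intro i _
  exact (bl_deriv hs (q i) (s - t i)).comp_sub_const s (t i)

lemma Blocks.out (B : Blocks l ω U V t q Q ρ) (hs : Scale l) (hU : ∀ j, 0 ≤ U j) (hV : ∀ j, V j ≤ 2 * π)
    {s : ℝ} (h : s ≤ 0 ∨ 2 * π ≤ s) (j : ℕ) : s - t j ≤ 0 ∨ 4 * l (q j) ≤ s - t j := by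
  have h1 := (B.st j).hu
  have h2 := (B.st j).hv
  have h3 := (B.st j).rpos
  have h4 := (B.st j).small
  have h5 := hU j
  have h6 := hV j
  rcases h with h | h
  · left; linarith
  · right; linarith

lemma Blocks.Gi_out (B : Blocks l ω U V t q Q ρ) (hs : Scale l) (hU : ∀ j, 0 ≤ U j) (hV : ∀ j, V j ≤ 2 * π)
    {s : ℝ} (h : s ≤ 0 ∨ 2 * π ≤ s) : Gi l t q s = 0 := by
  unfold Gi
  rw [tsum_congr (fun j => bet_out hs (q j) (B.out hs hU hV h j)), tsum_zero]

lemma Blocks.Phi_out (B : Blocks l ω U V t q Q ρ) (hs : Scale l) (hU : ∀ j, 0 ≤ U j) (hV : ∀ j, V j ≤ 2 * π)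
    {s : ℝ} (h : s ≤ 0 ∨ 2 * π ≤ s) : Phi l t q s = 0 := by
  unfold Phi
  rw [tsum_congr (fun j => bl_out hs (q j) (B.out hs hU hV h j)), tsum_zero]

lemma Blocks.jump (B : Blocks l ω U V t q Q ρ) (hs : Scale l) (j : ℕ) :
    Gi l t q (t j + l (q j)) ≠ Gi l t q (t j) := by
  have hlq := hs.pos (q j)
  have h3 := (B.st j).rpos
  have h4 := (B.st j).small
  obtain ⟨c, hc⟩ := (B.st j).const
  have hdec : ∀ s, Gi l t q s = G l t q j s + bet l (q j) (s - t j) +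
      ∑' i, bet l (q (i + (j + 1))) (s - t (i + (j + 1))) := by
    intro s
    unfold Gi
    rw [← (B.bet_sum hs s).sum_add_tsum_nat_add (j + 1), Finset.sum_range_succ]
    rfl
  have htail : ∀ s, ‖∑' i, bet l (q (i + (j + 1))) (s - t (i + (j + 1)))‖ ≤ 1 / 4 * (1 / 2 ^ q j) := by
    intro s
    have hgs : HasSum (fun i : ℕ => 1 / 8 * (1 / 2 ^ q j) * (1 / 2 : ℝ) ^ i) (1 / 8 * (1 / 2 ^ q j) * 2) :=
      hasSum_geometric_two.mul_left _
    have := tsum_of_norm_bounded hgs (f := fun i => bet l (q (i + (j + 1))) (s - t (i + (j + 1)))) ?_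
    · refine this.trans (le_of_eq ?_); ring
    · intro i
      refine (bet_bd hs _ _).trans ?_
      have h1 : q j + 3 + i ≤ q (i + (j + 1)) := by
        have := B.q_add j (i + 1)
        rw [show i + (j + 1) = j + (i + 1) by ring]; omega
      calc (1:ℝ) / 2 ^ q (i + (j + 1)) ≤ 1 / 2 ^ (q j + 3 + i) := by
            apply one_div_le_one_div_of_le (by positivity)
            exact pow_le_pow_right₀ (by norm_num) h1
        _ = _ := by rw [pow_add, pow_add, one_div_pow]; field_simp; norm_num
  intro heq
  rw [hdec, hdec, hc _ ⟨by linarith, by linarith⟩, hc _ ⟨by linarith, by linarith⟩, sub_self,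
    add_sub_cancel_left, bet_out hs (q j) (Or.inl le_rfl)] at heq
  have h5 : bet l (q j) (l (q j)) = 1 / 2 ^ q j := by
    have := bet1 hs (q j) hlq.le le_rfl
    rwa [zero_add, one_mul, one_mul, psi_top hs] at this
  rw [h5] at heq
  have h6 := abs_le.1 (htail (t j + l (q j)))
  have h7 := abs_le.1 (htail (t j))
  have h8 : (0:ℝ) < 1 / 2 ^ q j := by positivity
  linarith [h6.1, h6.2, h7.1, h7.2]

/-! periodization -/

noncomputable def per (F : ℝ → ℝ) (s : ℝ) : ℝ := F (s - 2 * π * ⌊s / (2 * π)⌋)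

lemma per_periodic (F : ℝ → ℝ) (s : ℝ) : per F (s + 2 * π) = per F s := by
  unfold per
  have hp := Real.two_pi_pos
  have : (s + 2 * π) / (2 * π) = s / (2 * π) + 1 := by field_simp
  rw [this, Int.floor_add_one]
  congr 1; push_cast; ring

lemma per_cell (F : ℝ → ℝ) {s : ℝ} {n : ℤ} (h1 : 2 * π * n ≤ s) (h2 : s < 2 * π * (n + 1)) :
    per F s = F (s - 2 * π * n) := by
  unfold per
  have hp := Real.two_pi_pos
  have : ⌊s / (2 * π)⌋ = n := by
    rw [Int.floor_eq_iff]
    constructor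
    · rw [le_div_iff₀ hp]; linarith
    · rw [div_lt_iff₀ hp]; linarith
  rw [this]

lemma cell (s : ℝ) : ∃ n : ℤ, 2 * π * n ≤ s ∧ s < 2 * π * (n + 1) := by
  have hp := Real.two_pi_pos
  refine ⟨⌊s / (2 * π)⌋, ?_, ?_⟩
  · have := Int.floor_le (s / (2 * π))
    rw [le_div_iff₀ hp] at this; linarith
  · have := Int.lt_floor_add_one (s / (2 * π))
    rw [div_lt_iff₀ hp] at this; linarith

lemma per_eq {F : ℝ → ℝ} (hF : ∀ s, s ≤ 0 ∨ 2 * π ≤ s → F s = 0) {s : ℝ} {n : ℤ}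
    (h1 : 2 * π * (n - 1) < s) (h2 : s < 2 * π * (n + 1)) :
    per F s = F (s - 2 * π * n) + F (s - 2 * π * (n - 1)) := by
  rcases le_or_gt (2 * π * n) s with h | h
  · rw [per_cell F h h2, hF (s - 2 * π * (n - 1)) (Or.inr (by linarith)), add_zero]
  · rw [per_cell F (n := n - 1) (by push_cast; linarith) (by push_cast; linarith),
      hF (s - 2 * π * n) (Or.inl (by linarith)), zero_add]
    push_cast; rfl

lemma per_ev {F : ℝ → ℝ} (hF : ∀ s, s ≤ 0 ∨ 2 * π ≤ s → F s = 0) {s : ℝ} {n : ℤ}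
    (h1 : 2 * π * (n - 1) < s) (h2 : s < 2 * π * (n + 1)) :
    per F =ᶠ[nhds s] fun s => F (s - 2 * π * n) + F (s - 2 * π * (n - 1)) := by
  filter_upwards [Ioo_mem_nhds h1 h2] with x hx
  exact per_eq hF hx.1 hx.2

lemma per_cont {F : ℝ → ℝ} (hF : ∀ s, s ≤ 0 ∨ 2 * π ≤ s → F s = 0) (hc : Continuous F) :
    Continuous (per F) := by
  rw [continuous_iff_continuousAt]
  intro s
  have hp := Real.two_pi_pos
  obtain ⟨n, h1, h2⟩ := cell s
  refine ContinuousAt.congr ?_ (per_ev hF (n := n) (by linarith) h2).symm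
  fun_prop

lemma per_deriv {F F' : ℝ → ℝ} (hF : ∀ s, s ≤ 0 ∨ 2 * π ≤ s → F s = 0)
    (hF' : ∀ s, s ≤ 0 ∨ 2 * π ≤ s → F' s = 0) (hd : ∀ s, HasDerivAt F (F' s) s) (s : ℝ) :
    HasDerivAt (per F) (per F' s) s := by
  have hp := Real.two_pi_pos
  obtain ⟨n, h1, h2⟩ := cell s
  refine HasDerivAt.congr_of_eventuallyEq ?_ (per_ev hF (n := n) (by linarith) h2)
  rw [per_eq hF' (n := n) (by linarith) h2]
  exact ((hd _).comp_sub_const s _).add ((hd _).comp_sub_const s _)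

lemma per_mod (h : Md ω χi) {F : ℝ → ℝ} (hF : ∀ s, s ≤ 0 ∨ 2 * π ≤ s → F s = 0) {C : ℝ} (hC : 0 ≤ C)
    (hm : ∀ x y, |F x - F y| ≤ C * ω |x - y|) (x y : ℝ) :
    |per F x - per F y| ≤ 2 * C * ω |x - y| := by
  have hp := Real.two_pi_pos
  have key : ∀ x y, x ≤ y → |per F x - per F y| ≤ 2 * C * ω |x - y| := by
    intro x y hxy
    obtain ⟨n, h1, h2⟩ := cell x
    obtain ⟨m, k1, k2⟩ := cell y
    rw [per_cell F h1 h2, per_cell F k1 k2]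
    have hω := h.nonneg (abs_nonneg (x - y))
    rcases lt_or_ge y (2 * π * (n + 1)) with hy | hy
    · have hnm : n = m := by
        have a1 : (n:ℝ) < m + 1 := by
          by_contra hc
          have := mul_le_mul_of_nonneg_left (not_lt.1 hc) hp.le
          linarith
        have a2 : (m:ℝ) < n + 1 := by
          by_contra hc
          have := mul_le_mul_of_nonneg_left (not_lt.1 hc) hp.le
          linarith
        have b1 : n < m + 1 := by exact_mod_cast a1
        have b2 : m < n + 1 := by exact_mod_cast a2
        omega
      rw [← hnm]
      refine (hm _ _).trans ?_
      rw [show x - 2 * π * n - (y - 2 * π * n) = x - y by ring]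
      nlinarith [mul_nonneg hC hω]
    · have hnm : (n:ℝ) + 1 ≤ m := by
        have a1 : (n:ℝ) + 1 < m + 1 := by
          by_contra hc
          have := mul_le_mul_of_nonneg_left (not_lt.1 hc) hp.le
          linarith
        have b1 : n + 1 < m + 1 := by exact_mod_cast a1
        have b2 : n + 1 ≤ m := by omega
        exact_mod_cast b2
      have hnm' := mul_le_mul_of_nonneg_left hnm hp.le
      have e : |x - y| = y - x := by rw [abs_sub_comm, abs_of_nonneg (by linarith)]
      have f1 : |F (x - 2 * π * n)| ≤ C * ω |x - y| := by
        have := hm (x - 2 * π * n) (2 * π)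
        rw [hF (2 * π) (Or.inr le_rfl), sub_zero] at this
        refine this.trans ?_
        gcongr
        apply h.le (abs_nonneg _)
        rw [e, abs_of_nonpos (by linarith)]; linarith
      have f2 : |F (y - 2 * π * m)| ≤ C * ω |x - y| := by
        have := hm (y - 2 * π * m) 0
        rw [hF 0 (Or.inl le_rfl), sub_zero, sub_zero] at this
        refine this.trans ?_
        gcongr
        apply h.le (abs_nonneg _)
        rw [e, abs_of_nonneg (by linarith)]; linarith
      refine (abs_sub _ _).trans ?_
      linarith
  rcases le_total x y with hxy | hxy
  · exact key x y hxy
  · rw [abs_sub_comm, abs_sub_comm x y]; exact key y x hxy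

end
end CB

open MeasureTheory Real Set
open scoped ENNReal
namespace CB
section
variable {ω χi : ℝ → ℝ} {l : ℕ → ℝ} {U V t ρ : ℕ → ℝ} {q Q : ℕ → ℕ}

/-- exponential of a phase -/
noncomputable def ex (lam : ℝ) (F : ℝ → ℝ) (s : ℝ) : ℂ := Complex.exp (Complex.I * ((lam * F s : ℝ) : ℂ))

lemma ex_norm (lam : ℝ) (F : ℝ → ℝ) (s : ℝ) : ‖ex lam F s‖ = 1 := by
  unfold ex
  rw [mul_comm, Complex.norm_exp_ofReal_mul_I]

lemma ex_cont (lam : ℝ) {F : ℝ → ℝ} (hF : Continuous F) : Continuous (ex lam F) := by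
  unfold ex; fun_prop

lemma Ph_cont (hs : Scale l) (J : ℕ) : Continuous (Ph l t q J) :=
  continuous_iff_continuousAt.2 fun x => (Ph_deriv hs J x).continuousAt

lemma Blocks.affine (B : Blocks l ω U V t q Q ρ) (hs : Scale l) (J : ℕ) :
    ∃ c : ℝ, ∀ s ∈ Icc 0 (4 * l (q J)), Ph l t q J (s + t J) = Ph l t q J (t J) + c * s := by
  obtain ⟨c, hc⟩ := (B.st J).const
  have h3 := (B.st J).rpos
  have h4 := (B.st J).small
  refine ⟨c, fun s hsm => ?_⟩
  have hd : ∀ x, HasDerivAt (fun x => Ph l t q J x - c * x) (G l t q J x - c) x := by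
    intro x
    have := (Ph_deriv (t := t) (q := q) hs J x).fun_sub ((hasDerivAt_id x).const_mul c)
    simpa using this
  have := constant_of_has_deriv_right_zero (f := fun x => Ph l t q J x - c * x)
    (a := t J) (b := t J + 4 * l (q J))
    (fun x _ => (hd x).continuousAt.continuousWithinAt) (fun x hx => by
      have h5 := hd x
      rw [hc x ⟨by linarith [hx.1], by linarith [hx.2]⟩, sub_self] at h5
      exact h5.hasDerivWithinAt) (s + t J) ⟨by linarith [hsm.1], by linarith [hsm.2]⟩
  linarith

lemma Blocks.diff (B : Blocks l ω U V t q Q ρ) (hs : Scale l) (hU : ∀ j, 0 ≤ U j) (hV : ∀ j, V j ≤ 2 * π)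
    (lam : ℝ) (J : ℕ) : ∃ ξ : ℝ, ∀ k : ℤ,
    ‖fourierCoef (ex lam (Ph l t q (J + 1))) k - fourierCoef (ex lam (Ph l t q J)) k‖ ≤
      ‖H l (q J) lam (k - ξ)‖ := by
  obtain ⟨c, hc⟩ := B.affine hs J
  refine ⟨lam * c, fun k => ?_⟩
  have hlq := hs.pos (q J)
  have h1 := (B.st J).hu
  have h2 := (B.st J).hv
  have h3 := (B.st J).rpos
  have h4 := (B.st J).small
  have h5 := hU J
  have h6 := hV J
  set D : ℝ → ℂ := fun x => (ex lam (Ph l t q (J + 1)) x - ex lam (Ph l t q J) x) *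
    Complex.exp (-Complex.I * (k : ℂ) * (x : ℂ)) with hD
  have c1 := ex_cont lam (Ph_cont (t := t) (q := q) hs (J + 1))
  have c2 := ex_cont lam (Ph_cont (t := t) (q := q) hs J)
  have hDc : Continuous D := by
    rw [hD]; fun_prop
  have e : ∀ x, Ph l t q (J + 1) x = Ph l t q J x + bl l (q J) (x - t J) := fun x => by
    simp only [Ph]; rw [Finset.sum_range_succ]
  have hi : ∀ a b, IntervalIntegrable D volume a b := fun a b => hDc.intervalIntegrable a b
  have hD0 : ∀ x, x - t J ≤ 0 ∨ 4 * l (q J) ≤ x - t J → D x = 0 := by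
    intro x hx
    simp only [hD, ex]
    rw [e x, bl_out hs _ hx, add_zero, sub_self, zero_mul]
  have s1 : fourierCoef (ex lam (Ph l t q (J + 1))) k - fourierCoef (ex lam (Ph l t q J)) k =
      (1 / (2 * (π : ℂ))) * ∫ x in (0:ℝ)..(2 * π), D x := by
    unfold fourierCoef
    rw [← mul_sub, ← intervalIntegral.integral_sub]
    · congr 1
      apply intervalIntegral.integral_congr
      intro x _
      simp only [hD]; ring
    · exact Continuous.intervalIntegrable (by fun_prop) _ _
    · exact Continuous.intervalIntegrable (by fun_prop) _ _
  have s2 : ∫ x in (0:ℝ)..(2 * π), D x = ∫ x in (t J)..(4 * l (q J) + t J), D x := by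
    rw [← intervalIntegral.integral_add_adjacent_intervals (hi 0 (t J)) (hi (t J) (2 * π)),
      ← intervalIntegral.integral_add_adjacent_intervals (hi (t J) (4 * l (q J) + t J)) (hi _ (2 * π))]
    have z1 : ∫ x in (0:ℝ)..(t J), D x = 0 := by
      refine (intervalIntegral.integral_congr (g := fun _ => 0) ?_).trans (by simp)
      intro x hx
      rw [uIcc_of_le (by linarith)] at hx
      exact hD0 x (Or.inl (by linarith [hx.2]))
    have z2 : ∫ x in (4 * l (q J) + t J)..(2 * π), D x = 0 := by
      refine (intervalIntegral.integral_congr (g := fun _ => 0) ?_).trans (by simp)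
      intro x hx
      rw [uIcc_of_le (by linarith)] at hx
      exact hD0 x (Or.inr (by linarith [hx.1]))
    rw [z1, z2, zero_add, add_zero]
  have s3 : ∫ x in (t J)..(4 * l (q J) + t J), D x =
      Complex.exp (Complex.I * ((lam * Ph l t q J (t J) - k * t J : ℝ) : ℂ)) * H l (q J) lam (k - lam * c) := by
    have := intervalIntegral.integral_comp_add_right (a := 0) (b := 4 * l (q J)) D (t J)
    rw [zero_add] at this
    rw [← this, H, ← intervalIntegral.integral_const_mul]
    apply intervalIntegral.integral_congr
    intro s hsm
    rw [uIcc_of_le (by linarith)] at hsm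
    simp only [hD, ex]
    rw [e, hc s hsm, add_sub_cancel_right]
    have E1 : Complex.exp (Complex.I * ((lam * (Ph l t q J (t J) + c * s + bl l (q J) s) : ℝ) : ℂ)) *
        Complex.exp (-Complex.I * (k : ℂ) * ((s + t J : ℝ) : ℂ)) =
        Complex.exp (Complex.I * ((lam * Ph l t q J (t J) - k * t J : ℝ) : ℂ)) *
        (Complex.exp (Complex.I * ((lam * bl l (q J) s : ℝ) : ℂ)) *
        Complex.exp (Complex.I * ((-((k - lam * c) * s) : ℝ) : ℂ))) := by
      rw [← Complex.exp_add, ← Complex.exp_add, ← Complex.exp_add]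
      congr 1; push_cast; ring
    have E2 : Complex.exp (Complex.I * ((lam * (Ph l t q J (t J) + c * s) : ℝ) : ℂ)) *
        Complex.exp (-Complex.I * (k : ℂ) * ((s + t J : ℝ) : ℂ)) =
        Complex.exp (Complex.I * ((lam * Ph l t q J (t J) - k * t J : ℝ) : ℂ)) *
        Complex.exp (Complex.I * ((-((k - lam * c) * s) : ℝ) : ℂ)) := by
      rw [← Complex.exp_add, ← Complex.exp_add]
      congr 1; push_cast; ring
    linear_combination E1 - E2
  rw [s1, s2, s3, norm_mul, norm_mul, mul_comm Complex.I, Complex.norm_exp_ofReal_mul_I, one_mul]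
  have hpi : ‖(1 / (2 * (π : ℂ)))‖ ≤ 1 := by
    rw [norm_div, norm_mul, norm_one, Complex.norm_two, Complex.norm_real, Real.norm_eq_abs,
      abs_of_pos Real.pi_pos, div_le_one (by positivity)]
    linarith [Real.pi_gt_three]
  calc _ ≤ 1 * ‖H l (q J) lam (k - lam * c)‖ := by gcongr
    _ = _ := one_mul _

lemma coef_one (lam : ℝ) (k : ℤ) : fourierCoef (ex lam (Ph l t q 0)) k = if k = 0 then 1 else 0 := by
  have hp := Real.two_pi_pos
  have e : ∀ s, ex lam (Ph l t q 0) s = 1 := by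
    intro s; simp [ex, Ph]
  unfold fourierCoef
  simp only [e, one_mul]
  split_ifs with hk
  · subst hk
    simp only [Int.cast_zero, mul_zero, zero_mul, Complex.exp_zero]
    rw [intervalIntegral.integral_const]
    have : (π : ℂ) ≠ 0 := by exact_mod_cast Real.pi_pos.ne'
    simp
    field_simp
  · have hk' : -Complex.I * (k : ℂ) ≠ 0 := by simp [hk]
    rw [integral_exp_mul_complex hk']
    have h2 : Complex.exp (-Complex.I * (k : ℂ) * ((2 * π : ℝ) : ℂ)) = 1 := by
      rw [Complex.exp_eq_one_iff]
      refine ⟨-k, ?_⟩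
      push_cast; ring
    rw [h2]
    simp

lemma pow_sum_le {p : ℝ} (hp1 : 1 ≤ p) (hp2 : p ≤ 2) (J : ℕ) (d : ℕ → ℝ≥0∞) :
    (∑ j ∈ Finset.range J, d j) ^ p ≤ ∑ j ∈ Finset.range J, 2 ^ (j + 1) * d j ^ p := by
  induction J generalizing d with
  | zero => simp [ENNReal.zero_rpow_of_pos (by linarith : 0 < p)]
  | succ J ih =>
    rw [Finset.sum_range_succ', Finset.sum_range_succ']
    refine (pow_add_le hp1 hp2 _ _).trans ?_
    rw [mul_add]
    gcongr
    · refine (mul_le_mul_right (ih _) 2).trans ?_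
      rw [Finset.mul_sum]
      apply le_of_eq
      apply Finset.sum_congr rfl
      intro j _
      rw [pow_succ (2:ℝ≥0∞) (j + 1)]; ring
    · simp

lemma Blocks.coef_sum (B : Blocks l ω U V t q Q ρ) (hs : Scale l) (hU : ∀ j, 0 ≤ U j) (hV : ∀ j, V j ≤ 2 * π)
    (lam : ℝ) {p : ℝ} (hp1 : 1 ≤ p) (hp2 : p ≤ 2) (M : ℝ≥0∞)
    (hM : ∀ j ξ, ∑' k : ℤ, ENNReal.ofReal ‖H l (q j) lam (k - ξ)‖ ^ p ≤ M * ENNReal.ofReal (1 / 2 ^ q j))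
    (J : ℕ) :
    ∑' k : ℤ, ENNReal.ofReal ‖fourierCoef (ex lam (Ph l t q J)) k‖ ^ p ≤ 2 + 8 * M := by
  have hp0 : 0 < p := by linarith
  choose ξ hξ using B.diff hs hU hV lam
  set d : ℤ → ℕ → ℝ≥0∞ := fun k j => Nat.casesOn j (ENNReal.ofReal (if k = 0 then 1 else 0))
    (fun j => ENNReal.ofReal ‖H l (q j) lam (k - ξ j)‖) with hd
  have h1 : ∀ k : ℤ, ENNReal.ofReal ‖fourierCoef (ex lam (Ph l t q J)) k‖ ≤
      ∑ j ∈ Finset.range (J + 1), d k j := by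
    intro k
    induction J with
    | zero =>
      rw [coef_one, zero_add, Finset.sum_range_one]
      simp only [hd]
      split_ifs <;> simp
    | succ J ih =>
      rw [Finset.sum_range_succ]
      have h2 := hξ J k
      have h3 : ‖fourierCoef (ex lam (Ph l t q (J + 1))) k‖ ≤
          ‖fourierCoef (ex lam (Ph l t q J)) k‖ + ‖H l (q J) lam (k - ξ J)‖ := by
        have := norm_sub_norm_le (fourierCoef (ex lam (Ph l t q (J + 1))) k)
          (fourierCoef (ex lam (Ph l t q J)) k)
        linarith
      refine (ENNReal.ofReal_le_ofReal h3).trans ?_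
      rw [ENNReal.ofReal_add (norm_nonneg _) (norm_nonneg _)]
      gcongr
  have h0 : ∑' k : ℤ, d k 0 ^ p = 1 := by
    rw [tsum_eq_single 0]
    · simp [hd]
    · intro k hk
      simp [hd, hk, hp0]
  have hterm : ∀ j : ℕ, 2 ^ (j + 1 + 1) * (M * ENNReal.ofReal (1 / 2 ^ q j)) ≤
      4 * M * ENNReal.ofReal ((1 / 2) ^ j) := by
    intro j
    have h2 : (2:ℝ≥0∞) ^ (j + 1 + 1) = 4 * ENNReal.ofReal (2 ^ j) := by
      rw [ENNReal.ofReal_pow (by norm_num), pow_succ, pow_succ]; norm_num; ring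
    rw [h2, show 4 * ENNReal.ofReal (2 ^ j) * (M * ENNReal.ofReal (1 / 2 ^ q j)) =
      4 * M * (ENNReal.ofReal (2 ^ j) * ENNReal.ofReal (1 / 2 ^ q j)) by ring,
      ← ENNReal.ofReal_mul (by positivity)]
    gcongr
    calc (2:ℝ) ^ j * (1 / 2 ^ q j) ≤ 2 ^ j * (1 / 8) ^ j := by gcongr; exact B.q_bd j
      _ = (1 / 4) ^ j := by rw [← mul_pow]; norm_num
      _ ≤ _ := by gcongr; norm_num
  calc _ ≤ ∑' k : ℤ, ∑ j ∈ Finset.range (J + 1), 2 ^ (j + 1) * d k j ^ p := by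
        apply ENNReal.tsum_le_tsum
        intro k
        exact (ENNReal.rpow_le_rpow (h1 k) hp0.le).trans (pow_sum_le hp1 hp2 _ _)
    _ = ∑ j ∈ Finset.range (J + 1), 2 ^ (j + 1) * ∑' k : ℤ, d k j ^ p := by
        rw [Summable.tsum_finsetSum (fun _ _ => ENNReal.summable)]
        apply Finset.sum_congr rfl
        intro j _
        rw [ENNReal.tsum_mul_left]
    _ = (∑ j ∈ Finset.range J, 2 ^ (j + 1 + 1) * ∑' k : ℤ, d k (j + 1) ^ p) + 2 := by
        rw [Finset.sum_range_succ', h0]; simp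
    _ ≤ (∑ j ∈ Finset.range J, 4 * M * ENNReal.ofReal ((1 / 2) ^ j)) + 2 := by
        refine add_le_add (Finset.sum_le_sum fun j _ => ?_) le_rfl
        refine le_trans ?_ (hterm j)
        gcongr
        exact hM j (ξ j)
    _ ≤ 4 * M * 2 + 2 := by
        rw [← Finset.mul_sum]
        gcongr
        rw [← ENNReal.ofReal_sum_of_nonneg (fun _ _ => by positivity)]
        calc _ ≤ ENNReal.ofReal 2 := ENNReal.ofReal_le_ofReal (sum_geometric_two_le J)
          _ = 2 := by norm_num
    _ = _ := by ring

lemma Blocks.coef_sum_lim (B : Blocks l ω U V t q Q ρ) (hs : Scale l) (hU : ∀ j, 0 ≤ U j)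
    (hV : ∀ j, V j ≤ 2 * π)
    (lam : ℝ) {p : ℝ} (hp1 : 1 ≤ p) (hp2 : p ≤ 2) (M : ℝ≥0∞)
    (hM : ∀ j ξ, ∑' k : ℤ, ENNReal.ofReal ‖H l (q j) lam (k - ξ)‖ ^ p ≤ M * ENNReal.ofReal (1 / 2 ^ q j)) :
    ∑' k : ℤ, ENNReal.ofReal ‖fourierCoef (ex lam (Phi l t q)) k‖ ^ p ≤ 2 + 8 * M := by
  have hp0 : 0 < p := by linarith
  have hconv : ∀ k : ℤ, Filter.Tendsto (fun J => fourierCoef (ex lam (Ph l t q J)) k) Filter.atTop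
      (nhds (fourierCoef (ex lam (Phi l t q)) k)) := by
    intro k
    unfold fourierCoef
    apply Filter.Tendsto.const_mul
    have hPc : Continuous (Phi l t q) :=
      continuous_iff_continuousAt.2 fun x => (B.Phi_deriv hs x).continuousAt
    have c1 := ex_cont lam hPc
    apply intervalIntegral.tendsto_integral_filter_of_dominated_convergence (fun _ => (1:ℝ))
    · refine Filter.Eventually.of_forall fun J => ?_
      have c2 := ex_cont lam (Ph_cont (t := t) (q := q) hs J)
      exact (Continuous.aestronglyMeasurable (by fun_prop))
    · refine Filter.Eventually.of_forall fun J => Filter.Eventually.of_forall fun x _ => ?_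
      rw [norm_mul, ex_norm, one_mul, show -Complex.I * (k:ℂ) * (x:ℂ) = ((-(k * x) : ℝ) : ℂ) * Complex.I by
        push_cast; ring, Complex.norm_exp_ofReal_mul_I]
    · exact Continuous.intervalIntegrable continuous_const _ _
    · refine Filter.Eventually.of_forall fun x _ => ?_
      apply Filter.Tendsto.mul_const
      unfold ex
      have hc : Continuous (fun y : ℝ => Complex.exp (Complex.I * ((lam * y : ℝ) : ℂ))) := by fun_prop
      exact (hc.tendsto _).comp (B.Ph_tend hs x)
  rw [ENNReal.tsum_eq_iSup_sum]
  apply iSup_le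
  intro s
  have htend : Filter.Tendsto (fun J => ∑ k ∈ s, ENNReal.ofReal ‖fourierCoef (ex lam (Ph l t q J)) k‖ ^ p)
      Filter.atTop (nhds (∑ k ∈ s, ENNReal.ofReal ‖fourierCoef (ex lam (Phi l t q)) k‖ ^ p)) := by
    apply tendsto_finsetSum
    intro k _
    exact (ENNReal.continuous_rpow_const.tendsto _).comp
      ((ENNReal.continuous_ofReal.tendsto _).comp (hconv k).norm)
  refine le_of_tendsto htend (Filter.Eventually.of_forall fun J => ?_)
  exact (ENNReal.sum_le_tsum s).trans (B.coef_sum hs hU hV lam hp1 hp2 M hM J)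

end
end CB

open MeasureTheory Real Set
open scoped ENNReal
namespace CB
section
variable {l : ℕ → ℝ} {ω χi : ℝ → ℝ} {U V t ρ : ℕ → ℝ} {q Q : ℕ → ℕ}

lemma Blocks.core (B : Blocks l ω U V t q Q ρ) (hs : Scale l) (hU : ∀ j, 0 ≤ U j) (hV : ∀ j, V j ≤ 2 * π)
    {p θ : ℝ} (hp1 : 1 ≤ p) (hp2 : p ≤ 2) (hθ : 0 < θ) :
    ∃ C : ℝ, 0 < C ∧ ∀ (lam : ℝ) (N : ℕ), 0 < lam → lam * θ * (l N / 2 ^ N) ≤ 1 →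
      (∀ q < N, 1 ≤ lam / 2 ^ q) → ∀ L : ℕ → ℝ, (∀ m, 0 ≤ L m) →
      (∀ m < N, ∀ ξ : ℝ, ∑' k : ℤ, (if |(k:ℝ) - ξ| ≤ lam / 2 ^ N then
        ENNReal.ofReal (w (l m) (k - ξ)) ^ p else 0) ≤ ENNReal.ofReal (L m)) →
      ∑' k : ℤ, ENNReal.ofReal ‖fourierCoef (ex lam (Phi l t q)) k‖ ^ p ≤
        ENNReal.ofReal (C * (1 + lam * (2 ^ N / lam) ^ p + ∑ m ∈ Finset.range N, 2 ^ m * L m)) := by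
  obtain ⟨C, hC, hb⟩ := block_sum hp1 hp2 hθ
  refine ⟨2 + 8 * C, by positivity, fun lam N hlam h1 h2 L hL h3 => ?_⟩
  have hb' := hb l hs lam N hlam h1 h2 (fun m => ENNReal.ofReal (L m)) h3
  set X := lam * (2 ^ N / lam) ^ p with hX
  set S := ∑ m ∈ Finset.range N, 2 ^ m * L m with hS
  have hX0 : 0 ≤ X := by positivity
  have hS0 : 0 ≤ S := Finset.sum_nonneg fun m _ => mul_nonneg (by positivity) (hL m)
  have hsum : (∑ m ∈ Finset.range N, 2 ^ m * ENNReal.ofReal (L m)) = ENNReal.ofReal S := by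
    rw [hS, ENNReal.ofReal_sum_of_nonneg (fun m _ => mul_nonneg (by positivity) (hL m))]
    apply Finset.sum_congr rfl
    intro m _
    rw [ENNReal.ofReal_mul (by positivity), ENNReal.ofReal_pow (by norm_num)]
    norm_num
  have := B.coef_sum_lim hs hU hV lam hp1 hp2 (ENNReal.ofReal (C * (X + S))) (fun j ξ => by
    refine (hb' (q j) ξ).trans (le_of_eq ?_)
    rw [hsum, ← ENNReal.ofReal_add hX0 hS0, ENNReal.ofReal_mul hC.le]
    ring)
  refine this.trans ?_
  rw [show (2:ℝ≥0∞) = ENNReal.ofReal 2 by norm_num, show (8:ℝ≥0∞) = ENNReal.ofReal 8 by norm_num,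
    ← ENNReal.ofReal_mul (by norm_num), ← ENNReal.ofReal_add (by norm_num) (by positivity)]
  apply ENNReal.ofReal_le_ofReal
  nlinarith [mul_nonneg hC.le hX0, mul_nonneg hC.le hS0]

lemma coef_neg (f : ℝ → ℂ) (k : ℤ) :
    fourierCoef (fun t => (starRingEnd ℂ) (f t)) k = (starRingEnd ℂ) (fourierCoef f (-k)) := by
  unfold fourierCoef
  have hp := Real.two_pi_pos
  rw [map_mul]
  congr 1
  · simp only [map_div₀, map_mul, map_one, Complex.conj_ofReal, map_ofNat]
  · rw [intervalIntegral.integral_of_le hp.le, intervalIntegral.integral_of_le hp.le, ← integral_conj,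
      ← intervalIntegral.integral_of_le hp.le, ← intervalIntegral.integral_of_le hp.le]
    apply intervalIntegral.integral_congr
    intro x _
    simp only [map_mul, ← Complex.exp_conj]
    congr 2
    simp

lemma apnorm_eq {F : ℝ → ℝ} (hF : ∀ s, s ≤ 0 ∨ 2 * π ≤ s → F s = 0) (p lam : ℝ) :
    ApNorm p (fun t => Complex.exp (Complex.I * (lam : ℂ) * (per F t : ℂ))) =
      (∑' k : ℤ, ENNReal.ofReal ‖fourierCoef (ex |lam| F) k‖ ^ p) ^ (1 / p) := by
  have hp := Real.two_pi_pos
  have e1 : ∀ k : ℤ, fourierCoef (fun t => Complex.exp (Complex.I * (lam : ℂ) * (per F t : ℂ))) k =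
      fourierCoef (ex lam F) k := by
    intro k
    unfold fourierCoef
    congr 1
    apply intervalIntegral.integral_congr
    intro x hx
    rw [uIcc_of_le hp.le] at hx
    have : per F x = F x := by
      rcases hx.2.lt_or_eq with h | h
      · rw [per_cell F (n := 0) (by simpa using hx.1) (by simpa using h)]; simp
      · rw [h, per_cell F (n := 1) (by simp) (by push_cast; linarith), hF (2 * π) (Or.inr le_rfl)]
        exact hF _ (Or.inl (by simp))
    simp only [this, ex]
    congr 2
    push_cast; ring
  unfold ApNorm
  congr 1
  simp_rw [e1]
  have e2 : ∀ z : ℂ, (‖z‖₊ : ℝ≥0∞) = ENNReal.ofReal ‖z‖ := fun z => by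
    rw [ofReal_norm]; rfl
  simp_rw [e2]
  rcases le_total 0 lam with h | h
  · rw [abs_of_nonneg h]
  · rw [abs_of_nonpos h]
    have e3 : ex lam F = fun t => (starRingEnd ℂ) (ex (-lam) F t) := by
      funext t
      simp only [ex, ← Complex.exp_conj, map_mul, Complex.conj_I, Complex.conj_ofReal]
      congr 1
      push_cast; ring
    rw [e3]
    simp_rw [coef_neg, RCLike.norm_conj]
    exact (Equiv.neg ℤ).tsum_eq (fun k => ENNReal.ofReal ‖fourierCoef (ex (-lam) F) k‖ ^ p)

lemma Blocks.est_i (B : Blocks l ω U V t q Q ρ) (h : Md ω χi) (hs : Scale l) (hU : ∀ j, 0 ≤ U j)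
    (hV : ∀ j, V j ≤ 2 * π) {θ : ℝ} (hθ : 0 < θ) (hl : ∀ m, ω (l m) = θ / 2 ^ m) (hl0 : l 0 * θ ≤ 1 / 2) :
    ∃ c : ℝ, 0 < c ∧ ∀ lam : ℝ, 2 ≤ |lam| →
        ApNorm 1 (fun t' => Complex.exp (Complex.I * (lam : ℂ) * (per (Phi l t q) t' : ℂ))) ≤
          ENNReal.ofReal (c * (|lam| / Real.log |lam|) *
            χi ((Real.log |lam|) ^ 2 / |lam|)) := by
  obtain ⟨C, hC, h1⟩ := B.core hs hU hV (p := 1) le_rfl (by norm_num) hθ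
  obtain ⟨D, hD, h2⟩ := rhs_i h hs hθ hl
  refine ⟨C * D, by positivity, fun lam hlam => ?_⟩
  have hp : 0 < |lam| := by linarith
  obtain ⟨N, n1, n2, n3⟩ := exists_N hs hθ hl0 hp
  have hlog : ∀ m, 0 ≤ 4 * Real.log (1 + l m * (|lam| / 2 ^ N + 1)) := fun m => by
    have := hs.pos m
    have h0 : 0 ≤ l m * (|lam| / 2 ^ N + 1) := by positivity
    exact mul_nonneg (by norm_num) (Real.log_nonneg (by linarith))
  rw [apnorm_eq (fun s hs' => B.Phi_out hs hU hV hs')]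
  rw [one_div_one, ENNReal.rpow_one]
  refine (h1 |lam| N hp n1 n3 (fun m => 4 * Real.log (1 + l m * (|lam| / 2 ^ N + 1))) hlog ?_).trans ?_
  · intro m _ ξ
    simp_rw [ENNReal.rpow_one]
    exact w_sum_one (hs.pos m) (hs.le_one' m) (by positivity) ξ
  · apply ENNReal.ofReal_le_ofReal
    have := mul_le_mul_of_nonneg_left (h2 |lam| N hlam n2 n3) hC.le
    refine this.trans (le_of_eq ?_)
    ring

lemma Blocks.est_ii (B : Blocks l ω U V t q Q ρ) (h : Md ω χi) (hs : Scale l) (hU : ∀ j, 0 ≤ U j)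
    (hV : ∀ j, V j ≤ 2 * π) {θ : ℝ} (hθ : 0 < θ) (hl : ∀ m, ω (l m) = θ / 2 ^ m) (hl0 : l 0 * θ ≤ 1 / 2)
    {p : ℝ} (hp1 : 1 < p) (hp2 : p < 2) :
    ∃ c : ℝ, 0 < c ∧ ∀ lam : ℝ, 2 ≤ |lam| →
        ApNorm p (fun t' => Complex.exp (Complex.I * (lam : ℂ) * (per (Phi l t q) t' : ℂ))) ≤
            ENNReal.ofReal (c * (∫ τ in (1:ℝ)..|lam|, (χi (1 / τ)) ^ p) ^ (1 / p)) := by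
  obtain ⟨C, hC, h1⟩ := B.core hs hU hV (p := p) hp1.le hp2.le hθ
  obtain ⟨D, hD, hw⟩ := w_pow_sum hp1
  obtain ⟨E, hE, h2⟩ := rhs_ii h hs hθ hl hl0 hp1 hD
  refine ⟨(C * E) ^ (1 / p), by positivity, fun lam hlam => ?_⟩
  have hp : 0 < |lam| := by linarith
  obtain ⟨N, n1, n2, n3⟩ := exists_N hs hθ hl0 hp
  have hint : 0 ≤ ∫ τ in (1:ℝ)..|lam|, (χi (1 / τ)) ^ p := by
    apply intervalIntegral.integral_nonneg (by linarith)
    intro u hu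
    exact Real.rpow_nonneg (h.right _ (by have := hu.1; positivity)).1 _
  rw [apnorm_eq (fun s hs' => B.Phi_out hs hU hV hs'), ← Real.mul_rpow (by positivity) hint,
    ← ENNReal.ofReal_rpow_of_nonneg (by positivity) (by positivity)]
  apply ENNReal.rpow_le_rpow _ (by positivity)
  refine (h1 |lam| N hp n1 n3 (fun m => D * l m ^ (p - 1)) (fun m => by
    have := hs.pos m
    positivity) ?_).trans ?_
  · intro m _ ξ
    refine le_trans (ENNReal.tsum_le_tsum fun k => ?_) (hw (l m) (hs.pos m) (hs.le_one' m) ξ)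
    split_ifs
    · exact le_rfl
    · exact zero_le
  · apply ENNReal.ofReal_le_ofReal
    have := mul_le_mul_of_nonneg_left (h2 |lam| N hlam n2) hC.le
    refine this.trans (le_of_eq ?_)
    ring

lemma Blocks.nonlin (B : Blocks l ω U V t q Q ρ) (hs : Scale l) (hU : ∀ j, 0 ≤ U j)
    (hV : ∀ j, V j ≤ 2 * π)
    (hd : ∀ a b : ℚ, (0:ℝ) < a → a < b → (b:ℝ) < 2 * π → ∃ j, U j = a ∧ V j = b)
    (u v : ℝ) (huv : u < v) : ¬ ∃ a b : ℝ, ∀ s ∈ Ioo u v, per (Phi l t q) s = a * s + b := by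
  rintro ⟨a, b, hab⟩
  have hp := Real.two_pi_pos
  have hder : ∀ s ∈ Ioo u v, per (Gi l t q) s = a := by
    intro s hsI
    have d1 := per_deriv (fun s hs' => B.Phi_out hs hU hV hs') (fun s hs' => B.Gi_out hs hU hV hs')
      (B.Phi_deriv hs) s
    have d2 : HasDerivAt (per (Phi l t q)) a s := by
      have d3 : HasDerivAt (fun s => a * s + b) a s := by
        simpa using ((hasDerivAt_id s).const_mul a).add_const b
      refine d3.congr_of_eventuallyEq ?_
      filter_upwards [Ioo_mem_nhds hsI.1 hsI.2] with x hx
      exact hab x hx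
    exact d1.unique d2
  obtain ⟨n, c1, c2⟩ := cell u
  have hlt : u - 2 * π * n < min (v - 2 * π * n) (2 * π) := by
    apply lt_min <;> linarith
  obtain ⟨x, hx1, hx2⟩ := exists_rat_btwn hlt
  obtain ⟨y, hy1, hy2⟩ := exists_rat_btwn hx2
  have hy3 := hy2.trans_le (min_le_left _ _)
  have hy4 := hy2.trans_le (min_le_right _ _)
  obtain ⟨j, j1, j2⟩ := hd x y (by linarith) (by exact_mod_cast hy1) hy4
  have s1 := (B.st j).hu
  have s2 := (B.st j).hv
  have s3 := (B.st j).rpos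
  have s4 := (B.st j).small
  have s5 := hs.pos (q j)
  rw [j1] at s1
  rw [j2] at s2
  have key : ∀ z : ℝ, (x:ℝ) < z → z < y → Gi l t q z = a := by
    intro z hz1 hz2
    have := hder (z + 2 * π * n) ⟨by linarith, by linarith⟩
    rw [per_cell (n := n) _ (by linarith) (by linarith)] at this
    simpa using this
  exact B.jump hs j ((key _ (by linarith) (by linarith)).trans (key _ (by linarith) (by linarith)).symm)

lemma exists_UV : ∃ U V : ℕ → ℝ, (∀ j, U j < V j) ∧ (∀ j, 0 ≤ U j) ∧ (∀ j, V j ≤ 2 * π) ∧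
    ∀ a b : ℚ, (0:ℝ) < a → a < b → (b:ℝ) < 2 * π → ∃ j, U j = a ∧ V j = b := by
  classical
  have hp := Real.two_pi_pos
  obtain ⟨f, hf⟩ := exists_surjective_nat (ℚ × ℚ)
  let P : ℕ → Prop := fun j => (0:ℝ) < (f j).1 ∧ (f j).1 < (f j).2 ∧ ((f j).2 : ℝ) < 2 * π
  refine ⟨fun j => if P j then ((f j).1 : ℝ) else 0, fun j => if P j then ((f j).2 : ℝ) else 2 * π,
    fun j => ?_, fun j => ?_, fun j => ?_, fun a b ha hab hb => ?_⟩
  · by_cases h : P j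
    · simp only [h, if_true]; exact_mod_cast h.2.1
    · simp only [h, if_false]; exact hp
  · by_cases h : P j
    · simp only [h, if_true]; exact h.1.le
    · simp only [h, if_false]; exact le_rfl
  · by_cases h : P j
    · simp only [h, if_true]; exact h.2.2.le
    · simp only [h, if_false]; exact le_rfl
  · obtain ⟨j, hj⟩ := hf (a, b)
    have h : P j := by simp only [P, hj]; exact ⟨ha, hab, hb⟩
    exact ⟨j, by simp only [h, if_true, hj], by simp only [h, if_true, hj]⟩

end
end CB

/-- Theorem 2: if ω(2δ) < 2ω(δ) for small δ, there exists a nowhere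
linear real φ ∈ C^{1,ω}(𝕋) with slowly growing norms ‖e^{iλφ}‖_{A_p}. -/
theorem statement3
    -- ω is a modulus of continuity: continuous non-decreasing on [0,∞), ω(0)=0, ω(δ)>0 for δ>0,
    -- with χ(δ) = δ·ω(δ) strictly increasing and unbounded, and χinv its inverse.
    (ω : ℝ → ℝ)
    (hω_cont : ContinuousOn ω (Ici 0)) (hω_mono : MonotoneOn ω (Ici 0))
    (hω_zero : ω 0 = 0) (hω_pos : ∀ δ : ℝ, 0 < δ → 0 < ω δ)
    (hχ_mono : StrictMonoOn (fun δ => δ * ω δ) (Ici 0))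
    (hχ_unbdd : ∀ y : ℝ, ∃ δ : ℝ, 0 ≤ δ ∧ y < δ * ω δ)
    (χinv : ℝ → ℝ)
    (hχinv_left : ∀ δ : ℝ, 0 ≤ δ → χinv (δ * ω δ) = δ)
    (hχinv_right : ∀ y : ℝ, 0 ≤ y → 0 ≤ χinv y ∧ χinv y * ω (χinv y) = y)
    (hω_doubling : ∃ δ₀ : ℝ, 0 < δ₀ ∧ ∀ δ : ℝ, 0 < δ → δ < δ₀ → ω (2 * δ) < 2 * ω δ) :
    ∃ φ : ℝ → ℝ,
      (∀ t : ℝ, φ (t + 2 * Real.pi) = φ t) ∧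
      ContDiff ℝ 1 φ ∧
      (∃ C : ℝ, 0 < C ∧ ∀ s t : ℝ, |deriv φ s - deriv φ t| ≤ C * ω |s - t|) ∧
      -- φ is nowhere linear
      (∀ u v : ℝ, u < v → ¬ ∃ a b : ℝ, ∀ t ∈ Ioo u v, φ t = a * t + b) ∧
      -- (i) the A₁ = A estimate
      (∃ c : ℝ, 0 < c ∧ ∀ lam : ℝ, 2 ≤ |lam| →
        ApNorm 1 (fun t => Complex.exp (Complex.I * (lam : ℂ) * (φ t : ℂ))) ≤
          ENNReal.ofReal (c * (|lam| / Real.log |lam|) *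
            χinv ((Real.log |lam|) ^ 2 / |lam|))) ∧
      -- (ii) the A_p estimates, 1 < p < 2
      (∀ p : ℝ, 1 < p → p < 2 →
        ∃ c : ℝ, 0 < c ∧ ∀ lam : ℝ, 2 ≤ |lam| →
          ApNorm p (fun t => Complex.exp (Complex.I * (lam : ℂ) * (φ t : ℂ))) ≤
            ENNReal.ofReal (c * (∫ τ in (1:ℝ)..|lam|, (χinv (1 / τ)) ^ p) ^ (1 / p))) := by
  classical
  have hM : CB.Md ω χinv := ⟨hω_cont, hω_mono, hω_zero, hω_pos, hχ_mono, hχinv_left, hχinv_right⟩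
  obtain ⟨θ, l, hθ, hs, hl, _, hl0⟩ := CB.exists_scale hM hω_doubling
  obtain ⟨U, V, hUV, hU, hV, hd⟩ := CB.exists_UV
  obtain ⟨t, q, Q, ρ, hQ, hst⟩ := CB.exists_blocks hs hM hUV
  have B : CB.Blocks l ω U V t q Q ρ := ⟨hQ, hst⟩
  have hder := CB.per_deriv (fun s hs' => B.Phi_out hs hU hV hs')
    (fun s hs' => B.Gi_out hs hU hV hs') (B.Phi_deriv hs)
  have hder' : deriv (CB.per (CB.Phi l t q)) = CB.per (CB.Gi l t q) := funext fun s => (hder s).deriv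
  refine ⟨CB.per (CB.Phi l t q), CB.per_periodic _, ?_, ?_, ?_, ?_, ?_⟩
  · rw [contDiff_one_iff_deriv, hder']
    exact ⟨fun s => (hder s).differentiableAt,
      CB.per_cont (fun s hs' => B.Gi_out hs hU hV hs') (B.Gi_cont hs)⟩
  · refine ⟨2 * (8 / θ + 2), by positivity, fun x y => ?_⟩
    rw [hder']
    exact CB.per_mod hM (fun s hs' => B.Gi_out hs hU hV hs') (by positivity) (B.Gi_mod hM hs hθ hl) x y
  · exact B.nonlin hs hU hV hd
  · exact B.est_i hM hs hU hV hθ hl hl0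
  · intro p hp1 hp2
    exact B.est_ii hM hs hU hV hθ hl hl0 hp1 hp2
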